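/- arXiv:1706.01618 — 2 statements merged into one kernel-verified Lean document; each statement's English description precedes it below -/
import Mathlib

section
/- Let p be an odd prime and d, r ≥ 1. If d > r, then there is no ℤ/p-equivariant continuous map from the configuration space F(ℝᵈ, p) to (ℝᵖ)ʳ ∖ Δʳ. -/
/-- The cyclic-shift action of the generator of `ℤ/p` on the configuration space
`F(E, p)` of `p` distinct (labelled) points of `E`. -/
def configShift {p : ℕ} {E : Type*} (x : {f : ZMod p → E // Function.Injective f}) :
    {f : ZMod p → E // Function.Injective f} :=
  ⟨fun k => x.1 (k + 1), x.2.comp (add_left_injective 1)⟩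

/-!
Suppose there were such a map. In `(ℝᵈ)ᵖ` minus its diagonal, a subspace of codimension
`d (p - 1)`, general position and barycentric subdivision provide arbitrarily fine equivariant
images, in degrees up to `d (p - 1)`, of the periodic free resolution of the trivial `ℤ/p`-module.
The equivariant map yields a monotone equivariant labelling of the small sets of points of
`(ℝᵈ)ᵖ`: where the `p` points stay apart, by the sets of indices at which a row of the value of the
map is noticeably above its minimum, and where points come close, by their partition into clusters.
The labels form a poset on which `ℤ/p` acts freely, with chains of at most
`r (p - 1) + (p - 2) < d (p - 1)` elements. Labelling the flags of faces therefore sends the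
resolution to a free complex of chains, where the image of its top generator is degenerate. As
`p = 0` in the coefficients, a descending induction on degrees makes the augmentation vanish, which
is absurd.
-/

open scoped List

/-- The differentials of the periodic free resolution of the trivial `ℤ/p`-module, for a generator
acting as `ω`: the operators `1 - ω` and `1 + ω + ⋯ + ω ^ (p - 1)` alternate. The value `1` in
degree zero stands for the augmentation, which sends the first generator of the resolution to the
generator of the trivial module. -/
def resolutionDifferential {R : Type*} [Ring R] (p : ℕ) (ω : R) : ℕ → R
  | 0 => 1
  | k + 1 => if Even k then 1 - ω else ∑ i ∈ Finset.range p, ω ^ i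

section PeriodicComplex

variable {K C C' : Type*} [Ring K] [AddCommGroup C] [Module K C] [AddCommGroup C'] [Module K C']
  {p : ℕ}

lemma resolutionDifferential_add_two_mul {R : Type*} [Ring R] {ω : R} (hω : ω ^ p = 1) (k : ℕ) :
    resolutionDifferential p ω (k + 2) * resolutionDifferential p ω (k + 1) = 0 := by
  by_cases h : Even k
  · simp [resolutionDifferential, h, Nat.even_add_one, geom_sum_mul_neg, hω]
  · simp [resolutionDifferential, h, Nat.even_add_one, mul_neg_geom_sum, hω]

lemma resolutionDifferential_add_three {R : Type*} [Ring R] (p : ℕ) (ω : R) (k : ℕ) :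
    resolutionDifferential p ω (k + 3) = resolutionDifferential p ω (k + 1) := by
  simp [resolutionDifferential, Nat.even_add]

lemma map_resolutionDifferential {ω : Module.End K C} {ω' : Module.End K C'} {f : C →ₗ[K] C'}
    (h : ∀ z, f (ω z) = ω' (f z)) (k : ℕ) (z : C) :
    f (resolutionDifferential p ω k z) = resolutionDifferential p ω' k (f z) := by
  have hpow (i : ℕ) (z : C) : f ((ω ^ i) z) = (ω' ^ i) (f z) := by
    induction i generalizing z with
    | zero => simp
    | succ i ih => simp only [pow_succ, Module.End.mul_apply, ih, h]
  unfold resolutionDifferential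
  split
  · simp
  · split_ifs <;> simp [h, hpow]

lemma resolutionDifferential_apply_mem {ω : Module.End K C} {S : Submodule K C}
    (hS : ∀ z ∈ S, ω z ∈ S) (k : ℕ) {z : C} (hz : z ∈ S) :
    resolutionDifferential p ω k z ∈ S := by
  have h := map_resolutionDifferential (p := p) (ω := ω.restrict hS) (ω' := ω) (f := S.subtype)
    (fun _ => rfl) k ⟨z, hz⟩
  rw [S.subtype_apply, S.subtype_apply] at h
  exact h ▸ Subtype.prop _

/-- If `S` is free over the group ring, `χ` can be the projection onto the `K`-span of a basis that
kills the other translates of this basis. -/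
lemma exists_geom_sum_eq_of_apply_eq_self {ω χ : Module.End K C} {S : Submodule K C}
    (hω : ω ^ p = 1) (hχ : ∀ z ∈ S, χ z ∈ S)
    (hfree : ∀ z ∈ S, ∑ i ∈ Finset.range p, (ω ^ (p - i)) (χ ((ω ^ i) z)) = z)
    {z : C} (hz : z ∈ S) (hfix : ω z = z) :
    ∃ w ∈ S, (∑ i ∈ Finset.range p, ω ^ i) w = z := by
  have hfix' (i : ℕ) : (ω ^ i) z = z := by
    rw [Module.End.pow_apply]
    exact Function.iterate_fixed hfix i
  have hnorm : ω * ∑ i ∈ Finset.range p, ω ^ i = ∑ i ∈ Finset.range p, ω ^ i := by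
    have := mul_neg_geom_sum ω p
    rw [hω, sub_self, sub_mul, one_mul, sub_eq_zero] at this
    exact this.symm
  refine ⟨χ z, hχ z hz, ?_⟩
  calc (∑ i ∈ Finset.range p, ω ^ i) (χ z)
      = (ω * ∑ i ∈ Finset.range p, ω ^ i) (χ z) := by rw [hnorm]
    _ = ∑ i ∈ Finset.range p, (ω ^ (p - i)) (χ ((ω ^ i) z)) := by
        simp only [hfix', Finset.mul_sum, ← pow_succ', LinearMap.sum_apply]
        rw [← Finset.sum_range_reflect]
        refine Finset.sum_congr rfl fun i hi => ?_
        have := Finset.mem_range.mp hi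
        congr 2
        omega
    _ = z := hfree z hz

lemma exists_sub_apply_eq_of_geom_sum_eq_zero {ω χ : Module.End K C} {S : Submodule K C}
    (hS : ∀ z ∈ S, ω z ∈ S) (hχ : ∀ z ∈ S, χ z ∈ S)
    (hfree : ∀ z ∈ S, ∑ i ∈ Finset.range p, (ω ^ (p - i)) (χ ((ω ^ i) z)) = z)
    {z : C} (hz : z ∈ S) (h0 : (∑ i ∈ Finset.range p, ω ^ i) z = 0) :
    ∃ w ∈ S, (1 - ω) w = z := by
  have hpow (i : ℕ) {z : C} (hz : z ∈ S) : (ω ^ i) z ∈ S := by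
    rw [Module.End.pow_apply]
    exact Set.MapsTo.iterate hS i hz
  have hnorm : ∑ i ∈ Finset.range p, χ ((ω ^ i) z) = 0 := by
    rw [← map_sum, ← LinearMap.sum_apply, h0, map_zero]
  have hterm (i : ℕ) : (1 - ω) ((∑ j ∈ Finset.range (p - i), ω ^ j) (χ ((ω ^ i) z))) =
      χ ((ω ^ i) z) - (ω ^ (p - i)) (χ ((ω ^ i) z)) := by
    rw [← Module.End.mul_apply, mul_neg_geom_sum]
    rfl
  refine ⟨-∑ i ∈ Finset.range p, (∑ j ∈ Finset.range (p - i), ω ^ j) (χ ((ω ^ i) z)),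
    S.neg_mem <| S.sum_mem fun i _ => ?_, ?_⟩
  · rw [LinearMap.sum_apply]
    exact S.sum_mem fun j _ => hpow j (hχ _ (hpow i hz))
  · rw [map_neg, map_sum, Finset.sum_congr rfl fun i _ => hterm i, Finset.sum_sub_distrib, hnorm,
      hfree z hz, zero_sub, neg_neg]

lemma exists_resolutionDifferential_eq {ω χ : Module.End K C} {S : Submodule K C}
    (hω : ω ^ p = 1) (hS : ∀ z ∈ S, ω z ∈ S) (hχ : ∀ z ∈ S, χ z ∈ S)
    (hfree : ∀ z ∈ S, ∑ i ∈ Finset.range p, (ω ^ (p - i)) (χ ((ω ^ i) z)) = z)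
    (k : ℕ) {z : C} (hz : z ∈ S) (h0 : resolutionDifferential p ω (k + 1) z = 0) :
    ∃ w ∈ S, resolutionDifferential p ω (k + 2) w = z := by
  by_cases hk : Even k
  · have hfix : ω z = z := by
      simpa [resolutionDifferential, hk, sub_eq_zero, eq_comm (b := z)] using h0
    simpa [resolutionDifferential, hk, Nat.even_add_one] using
      exists_geom_sum_eq_of_apply_eq_self hω hχ hfree hz hfix
  · have hsum : (∑ i ∈ Finset.range p, ω ^ i) z = 0 := by
      simpa [resolutionDifferential, hk] using h0
    simpa [resolutionDifferential, hk, Nat.even_add_one] using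
      exists_sub_apply_eq_of_geom_sum_eq_zero hS hχ hfree hz hsum

theorem augmentation_eq_zero {N : ℕ} {ω D : Module.End K C} {S : ℕ → Submodule K C}
    (hp : (p : K) = 0) (hS0 : ∀ z ∈ S 0, ω z = z) (hD : ∀ k, ∀ z ∈ S (k + 1), D z ∈ S k)
    (hDD : ∀ z, D (D z) = 0) (hDω : ∀ z, D (ω z) = ω (D z))
    (hexact : ∀ k, ∀ z ∈ S (k + 1), resolutionDifferential p ω (k + 1) z = 0 →
      ∃ w ∈ S (k + 1), resolutionDifferential p ω (k + 2) w = z)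
    {e : ℕ → C} (he : ∀ k ≤ N, e k ∈ S k)
    (heD : ∀ k < N, D (e (k + 1)) = resolutionDifferential p ω k (e k)) (heN : e N = 0) :
    e 0 = 0 := by
  have hcomm := map_resolutionDifferential (p := p) hDω
  rcases N with _ | M
  · exact heN
  have key (k : ℕ) (hk : k ≤ M) : ∃ w, ∃ v ∈ S (k + 1),
      e (k + 1) = D w + resolutionDifferential p ω (k + 2) v := by
    induction hk using Nat.decreasingInduction with
    | self => exact ⟨0, 0, zero_mem _, by simpa using heN⟩
    | of_succ k hk ih =>
      obtain ⟨w, v, hv, hwv⟩ := ih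
      have hcycle : resolutionDifferential p ω (k + 1) (e (k + 1) - D v) = 0 := by
        rw [map_sub, ← heD (k + 1) (by omega), hwv, map_add, hDD, zero_add,
          resolutionDifferential_add_three, hcomm, sub_self]
      obtain ⟨u, hu, hu'⟩ := hexact k _
        ((S (k + 1)).sub_mem (he (k + 1) (by omega)) (hD (k + 1) v hv)) hcycle
      exact ⟨v, u, hu, by rw [hu']; abel⟩
  obtain ⟨w, v, hv, hwv⟩ := key 0 (Nat.zero_le _)
  have hfix (i : ℕ) : (ω ^ i) (D v) = D v := by
    rw [Module.End.pow_apply]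
    exact Function.iterate_fixed (hS0 _ (hD 0 v hv)) i
  calc e 0 = D (e 1) := by simpa [resolutionDifferential] using (heD 0 (Nat.succ_pos _)).symm
    _ = ∑ i ∈ Finset.range p, (ω ^ i) (D v) := by
      rw [hwv, map_add, hDD, zero_add, hcomm]
      simp [resolutionDifferential]
    _ = (p : K) • D v := by simp [hfix, Nat.cast_smul_eq_nsmul]
    _ = 0 := by rw [hp, zero_smul]

end PeriodicComplex

/-- Augmented ordered chains with vertices in `X`: formal combinations of lists of points, a list
of length `k + 1` being a `k`-simplex and the empty list spanning the augmentation. -/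
abbrev ListChain (K : Type*) [Ring K] (X : Type*) := List X →₀ K

/-- A maximal flag of faces of a simplex, from the simplex itself down to one of its vertices. -/
structure IsFullFlag {X : Type*} (l : List X) (L : List (List X)) : Prop where
  length_eq : L.length = l.length
  mem : ∀ s ∈ L, s <+ l ∧ s ≠ []
  pairwise : L.Pairwise fun s t => t <+ s

lemma IsFullFlag.cons {X : Type*} {l s : List X} {L : List (List X)} (hs : s <+ l)
    (hl : l.length = s.length + 1) (hL : IsFullFlag s L) : IsFullFlag l (l :: L) where
  length_eq := by rw [List.length_cons, hL.length_eq, hl]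
  mem := List.forall_mem_cons.mpr
    ⟨⟨.refl l, List.ne_nil_of_length_eq_add_one hl⟩, fun t ht =>
      ⟨(hL.mem t ht).1.trans hs, (hL.mem t ht).2⟩⟩
  pairwise := hL.pairwise.cons fun t ht => (hL.mem t ht).1.trans hs

namespace ListChain

section Operations

variable (K : Type*) [Ring K] {X Y : Type*}

/-- The cone operator, which prepends the apex `x` to every simplex. -/
noncomputable def cone (x : X) : ListChain K X →ₗ[K] ListChain K X :=
  Finsupp.lmapDomain K K (List.cons x)

/-- The alternating sum of the codimension-one faces of a simplex. -/
noncomputable def faceSum : List X → ListChain K X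
  | [] => 0
  | x :: l => Finsupp.single l 1 - cone K x (faceSum l)

/-- The boundary operator of the augmented chain complex. -/
noncomputable def boundary : ListChain K X →ₗ[K] ListChain K X :=
  Finsupp.linearCombination K (faceSum K)

/-- The chain map induced by a map of vertices. -/
noncomputable def map (f : X → Y) : ListChain K X →ₗ[K] ListChain K Y :=
  Finsupp.lmapDomain K K (List.map f)

/-- In degree `n`, the chain map sending a simplex to the alternating sum of its maximal flags of
faces, each face `l` being replaced by the vertex `a l`. For `a` the barycentre, this is barycentric
subdivision. -/
noncomputable def flagMap (a : List X → Y) : ℕ → ListChain K X →ₗ[K] ListChain K Y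
  | 0 => Finsupp.linearCombination K fun _ => Finsupp.single [] 1
  | n + 1 => Finsupp.linearCombination K fun l => cone K (a l) (flagMap a n (faceSum K l))

/-- The projection onto the chains supported on `P`. -/
noncomputable def select (P : Set (List X)) : ListChain K X →ₗ[K] ListChain K X :=
  open scoped Classical in (Finsupp.supported K K P).subtype ∘ₗ Finsupp.restrictDom K K P

/-- The normalization operator, which discards the simplices with two equal consecutive vertices. -/
noncomputable def normalize : ListChain K X →ₗ[K] ListChain K X :=
  select K {l | l.IsChain (· ≠ ·)}

end Operations

variable {K : Type*} [Ring K] {X Y : Type*} {P : Set (List X)} {Q : Set (List Y)}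

lemma apply_eq_of_single {Z : Type*} [AddCommGroup Z] [Module K Z] (f g : ListChain K X →ₗ[K] Z)
    (h : ∀ l, f (.single l 1) = g (.single l 1)) (z : ListChain K X) : f z = g z :=
  LinearMap.congr_fun (Finsupp.lhom_ext' fun l => LinearMap.ext_ring (h l)) z

@[simp] lemma cone_single (x : X) (l : List X) (c : K) :
    cone K x (.single l c) = .single (x :: l) c := by
  simp [cone]

@[simp] lemma boundary_single (l : List X) : boundary K (.single l 1) = faceSum K l := by
  simp [boundary]

@[simp] lemma map_single (f : X → Y) (l : List X) (c : K) :
    map K f (.single l c) = .single (l.map f) c := by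
  simp [map]

@[simp] lemma flagMap_zero_single (a : List X → Y) (l : List X) :
    flagMap K a 0 (.single l 1) = .single [] 1 := by
  simp [flagMap]

@[simp] lemma flagMap_succ_single (a : List X → Y) (n : ℕ) (l : List X) :
    flagMap K a (n + 1) (.single l 1) = cone K (a l) (flagMap K a n (faceSum K l)) := by
  simp [flagMap]

lemma select_single_of_mem {l : List X} (hl : l ∈ P) (c : K) :
    select K P (.single l c) = .single l c := by
  classical simp [select, Finsupp.restrictDom_apply, Finsupp.filter_single_of_pos, hl]

lemma select_single_of_notMem {l : List X} (hl : l ∉ P) (c : K) :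
    select K P (.single l c) = 0 := by
  classical simp [select, Finsupp.restrictDom_apply, Finsupp.filter_single_of_neg, hl]

lemma map_pow_single (f : X → X) (n : ℕ) (l : List X) (c : K) :
    ((map K f : Module.End K (ListChain K X)) ^ n) (.single l c) = .single (l.map f^[n]) c := by
  induction n with
  | zero => simp
  | succ n ih =>
    rw [pow_succ', Module.End.mul_apply, ih, map_single, List.map_map, Function.iterate_succ']

lemma map_pow_eq_one {f : X → X} {p : ℕ} (hf : f^[p] = id) :
    (map K f : Module.End K (ListChain K X)) ^ p = 1 :=
  LinearMap.ext <| apply_eq_of_single _ _ fun l => by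
    rw [map_pow_single, hf, List.map_id, Module.End.one_apply]

section Boundary

lemma boundary_cone (x : X) (z : ListChain K X) :
    boundary K (cone K x z) = z - cone K x (boundary K z) :=
  apply_eq_of_single (boundary K ∘ₗ cone K x) (.id - cone K x ∘ₗ boundary K)
    (fun l => by simp [faceSum]) z

lemma boundary_faceSum (l : List X) : boundary K (faceSum K l) = 0 := by
  induction l with
  | nil => simp [faceSum]
  | cons x l ih => simp [faceSum, boundary_cone, ih]

lemma boundary_boundary (z : ListChain K X) : boundary K (boundary K z) = 0 :=
  apply_eq_of_single (boundary K ∘ₗ boundary K) 0 (fun l => by simp [boundary_faceSum]) z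

lemma map_cone (f : X → Y) (x : X) (z : ListChain K X) :
    map K f (cone K x z) = cone K (f x) (map K f z) :=
  apply_eq_of_single (map K f ∘ₗ cone K x) (cone K (f x) ∘ₗ map K f) (fun l => by simp) z

lemma map_faceSum (f : X → Y) (l : List X) : map K f (faceSum K l) = faceSum K (l.map f) := by
  induction l with
  | nil => simp [faceSum]
  | cons x l ih => simp [faceSum, map_cone, ih]

lemma map_boundary (f : X → Y) (z : ListChain K X) :
    map K f (boundary K z) = boundary K (map K f z) :=
  apply_eq_of_single (map K f ∘ₗ boundary K) (boundary K ∘ₗ map K f)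
    (fun l => by simp [map_faceSum]) z

lemma boundary_flagMap_zero (a : List X → Y) (z : ListChain K X) :
    boundary K (flagMap K a 0 z) = 0 :=
  apply_eq_of_single (boundary K ∘ₗ flagMap K a 0) 0 (fun l => by simp [faceSum]) z

lemma boundary_flagMap_succ (a : List X → Y) (n : ℕ) (z : ListChain K X) :
    boundary K (flagMap K a (n + 1) z) = flagMap K a n (boundary K z) := by
  induction n generalizing z with
  | zero =>
    exact apply_eq_of_single (boundary K ∘ₗ flagMap K a 1) (flagMap K a 0 ∘ₗ boundary K)
      (fun l => by simp [boundary_cone, boundary_flagMap_zero]) z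
  | succ n ih =>
    exact apply_eq_of_single (boundary K ∘ₗ flagMap K a (n + 2)) (flagMap K a (n + 1) ∘ₗ boundary K)
      (fun l => by simp [boundary_cone, ih, boundary_faceSum]) z

lemma map_flagMap {f : X → X} {g : Y → Y} {a : List X → Y} (h : ∀ l, a (l.map f) = g (a l))
    (n : ℕ) (z : ListChain K X) : map K g (flagMap K a n z) = flagMap K a n (map K f z) := by
  induction n generalizing z with
  | zero =>
    exact apply_eq_of_single (map K g ∘ₗ flagMap K a 0) (flagMap K a 0 ∘ₗ map K f)
      (fun l => by simp) z
  | succ n ih =>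
    exact apply_eq_of_single (map K g ∘ₗ flagMap K a (n + 1)) (flagMap K a (n + 1) ∘ₗ map K f)
      (fun l => by simp [map_cone, ih, map_faceSum, h]) z

end Boundary

section Normalization

lemma normalize_single_of_isChain {l : List X} (h : l.IsChain (· ≠ ·)) (c : K) :
    normalize K (.single l c) = .single l c :=
  select_single_of_mem h c

lemma normalize_single_of_not_isChain {l : List X} (h : ¬ l.IsChain (· ≠ ·)) (c : K) :
    normalize K (.single l c) = 0 :=
  select_single_of_notMem h c

lemma normalize_cone_normalize (x : X) (z : ListChain K X) :
    normalize K (cone K x (normalize K z)) = normalize K (cone K x z) := by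
  refine apply_eq_of_single (normalize K ∘ₗ cone K x ∘ₗ normalize K) (normalize K ∘ₗ cone K x)
    (fun l => ?_) z
  by_cases h : l.IsChain (· ≠ ·)
  · simp [normalize_single_of_isChain h]
  · have h' : ¬ (x :: l).IsChain (· ≠ ·) := fun hc => h hc.tail
    simp [normalize_single_of_not_isChain h, normalize_single_of_not_isChain h']

lemma normalize_cone_cone (x : X) (z : ListChain K X) :
    normalize K (cone K x (cone K x z)) = 0 :=
  apply_eq_of_single (normalize K ∘ₗ cone K x ∘ₗ cone K x) 0
    (fun l => by simp [normalize_single_of_not_isChain (l := x :: x :: l)]) z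

lemma normalize_faceSum_of_not_isChain {l : List X} (h : ¬ l.IsChain (· ≠ ·)) :
    normalize K (faceSum K l) = 0 := by
  induction l with
  | nil => simp at h
  | cons x l ih =>
    by_cases hl : l.IsChain (· ≠ ·)
    · obtain ⟨y, l, rfl⟩ := List.exists_cons_of_ne_nil (l := l) (by rintro rfl; simp at h)
      obtain rfl : x = y := by_contra fun hxy => h (List.isChain_cons_cons.mpr ⟨hxy, hl⟩)
      simp [faceSum, normalize_cone_cone]
    · rw [faceSum, map_sub, normalize_single_of_not_isChain hl, ← normalize_cone_normalize, ih hl]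
      simp

lemma normalize_boundary_normalize (z : ListChain K X) :
    normalize K (boundary K (normalize K z)) = normalize K (boundary K z) := by
  refine apply_eq_of_single (normalize K ∘ₗ boundary K ∘ₗ normalize K) (normalize K ∘ₗ boundary K)
    (fun l => ?_) z
  by_cases h : l.IsChain (· ≠ ·)
  · simp [normalize_single_of_isChain h]
  · simp [normalize_single_of_not_isChain h, normalize_faceSum_of_not_isChain h]

lemma map_normalize {f : X → Y} (hf : Function.Injective f) (z : ListChain K X) :
    map K f (normalize K z) = normalize K (map K f z) := by
  refine apply_eq_of_single (map K f ∘ₗ normalize K) (normalize K ∘ₗ map K f) (fun l => ?_) z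
  have hiff : (l.map f).IsChain (· ≠ ·) ↔ l.IsChain (· ≠ ·) := by
    simp [List.isChain_map, hf.ne_iff]
  by_cases h : l.IsChain (· ≠ ·)
  · simp [normalize_single_of_isChain h, normalize_single_of_isChain (hiff.mpr h)]
  · simp [normalize_single_of_not_isChain h, normalize_single_of_not_isChain (mt hiff.mp h)]

end Normalization

section Support

lemma apply_mem_of_single {M : Type*} [AddCommGroup M] [Module K M] {S : Submodule K M}
    {f : ListChain K X →ₗ[K] M} (h : ∀ l ∈ P, f (.single l 1) ∈ S) {z : ListChain K X}
    (hz : z ∈ Finsupp.supported K K P) : f z ∈ S := by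
  rw [Finsupp.supported_eq_span_single] at hz
  exact Submodule.span_le (p := S.comap f).mpr (Set.image_subset_iff.mpr h) hz

lemma cone_mem_supported {P Q : Set (List X)} {x : X} (h : ∀ l ∈ P, x :: l ∈ Q)
    {z : ListChain K X} (hz : z ∈ Finsupp.supported K K P) :
    cone K x z ∈ Finsupp.supported K K Q :=
  apply_mem_of_single (fun l hl => by
    simpa using Finsupp.single_mem_supported K (1 : K) (h l hl)) hz

lemma map_mem_supported {f : X → Y} (h : ∀ l ∈ P, l.map f ∈ Q) {z : ListChain K X}
    (hz : z ∈ Finsupp.supported K K P) : map K f z ∈ Finsupp.supported K K Q :=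
  apply_mem_of_single (fun l hl => by
    simpa using Finsupp.single_mem_supported K (1 : K) (h l hl)) hz

lemma select_mem_supported {P Q : Set (List X)} {z : ListChain K X}
    (hz : z ∈ Finsupp.supported K K P) : select K Q z ∈ Finsupp.supported K K (P ∩ Q) :=
  apply_mem_of_single (fun l hl => by
    by_cases h : l ∈ Q
    · simpa [select_single_of_mem h] using
        Finsupp.single_mem_supported K (1 : K) (Set.mem_inter hl h)
    · simp [select_single_of_notMem h]) hz

lemma faceSum_mem_supported (l : List X) :
    faceSum K l ∈ Finsupp.supported K K {t | t <+ l ∧ l.length = t.length + 1} := by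
  induction l with
  | nil => simp [faceSum]
  | cons x l ih =>
    refine sub_mem (Finsupp.single_mem_supported K 1 ⟨List.sublist_cons_self x l, rfl⟩)
      (cone_mem_supported (fun t ht => ?_) ih)
    exact ⟨ht.1.cons_cons x, by simp [ht.2]⟩

lemma boundary_mem_supported {P Q : Set (List X)}
    (h : ∀ l ∈ P, ∀ t, t <+ l → l.length = t.length + 1 → t ∈ Q)
    {z : ListChain K X} (hz : z ∈ Finsupp.supported K K P) :
    boundary K z ∈ Finsupp.supported K K Q :=
  apply_mem_of_single (fun l hl => by
    rw [boundary_single]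
    exact Finsupp.supported_mono (fun t ht => h l hl t ht.1 ht.2) (faceSum_mem_supported l)) hz

lemma flagMap_single_mem_supported (a : List X → Y) (l : List X) :
    flagMap K a l.length (.single l 1) ∈
      Finsupp.supported K K {t | ∃ L, IsFullFlag l L ∧ t = L.map a} := by
  generalize hn : l.length = n
  induction n generalizing l with
  | zero =>
    rw [flagMap_zero_single]
    exact Finsupp.single_mem_supported K 1
      ⟨[], ⟨hn.symm, by simp, .nil⟩, rfl⟩
  | succ n ih =>
    rw [flagMap_succ_single]
    refine cone_mem_supported (P := {t | ∃ s L, s <+ l ∧ l.length = s.length + 1 ∧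
      IsFullFlag s L ∧ t = L.map a}) ?_ (apply_mem_of_single ?_ (faceSum_mem_supported l))
    · rintro _ ⟨s, L, hs, hsl, hL, rfl⟩
      exact ⟨l :: L, hL.cons hs hsl, rfl⟩
    · rintro s ⟨hs, hsl⟩
      refine Finsupp.supported_mono ?_ (ih s (by omega))
      rintro _ ⟨L, hL, rfl⟩
      exact ⟨s, L, hs, hsl, hL, rfl⟩

end Support

section ResolutionImage

variable {K : Type*} [Ring K] {X Y : Type*} {p N : ℕ} {f : X → X} {P : Set (List X)}
  {e : ℕ → ListChain K X}

/-- The images `e k` of the generators of the periodic free resolution of the trivial `ℤ/p`-module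
under an equivariant chain map, up to degree `N`, into the augmented chains on the simplices in `P`,
where the generator of `ℤ/p` acts through `f`. The shift by one in degrees comes from the
augmentation: `e k` consists of lists of length `k`, and `e 0` is the empty simplex. -/
structure IsResolutionImage (p N : ℕ) (f : X → X) (P : Set (List X)) (e : ℕ → ListChain K X) :
    Prop where
  zero : e 0 = .single [] 1
  mem : ∀ k ≤ N, e k ∈ Finsupp.supported K K {l | l ∈ P ∧ l.length = k}
  boundary_succ : ∀ k < N,
    boundary K (e (k + 1)) = resolutionDifferential p (map K f : Module.End K _) k (e k)

namespace IsResolutionImage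

lemma flagMap {g : Y → Y} {Q : Set (List Y)} {a : List X → Y} (he : IsResolutionImage p N f P e)
    (ha : ∀ l, a (l.map f) = g (a l))
    (hPQ : ∀ l ∈ P, l.length ≤ N → ∀ L, IsFullFlag l L → L.map a ∈ Q) :
    IsResolutionImage p N g Q fun k => ListChain.flagMap K a k (e k) where
  zero := by rw [he.zero, flagMap_zero_single]
  mem k hk := by
    refine apply_mem_of_single (fun l hl => ?_) (he.mem k hk)
    obtain ⟨hlP, rfl⟩ := hl
    refine Finsupp.supported_mono ?_ (flagMap_single_mem_supported a l)
    rintro _ ⟨L, hL, rfl⟩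
    exact ⟨hPQ l hlP hk L hL, by rw [List.length_map, hL.length_eq]⟩
  boundary_succ k hk := by
    rw [boundary_flagMap_succ, he.boundary_succ k hk]
    exact map_resolutionDifferential (fun z => (map_flagMap ha k z).symm) k (e k)

lemma mono {Q : Set (List X)} (he : IsResolutionImage p N f P e) (hPQ : P ⊆ Q) :
    IsResolutionImage p N f Q e where
  zero := he.zero
  mem k hk := Finsupp.supported_mono (fun _ hl => And.intro (hPQ hl.1) hl.2) (he.mem k hk)
  boundary_succ := he.boundary_succ

lemma resolutionDifferential_mem (he : IsResolutionImage p N f P e)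
    (hPf : ∀ l ∈ P, l.map f ∈ P) : resolutionDifferential p (map K f : Module.End K _) N (e N) ∈
      Finsupp.supported K K {l | l ∈ P ∧ l.length = N} := by
  refine resolutionDifferential_apply_mem (fun z hz => ?_) N (he.mem N le_rfl)
  exact map_mem_supported (P := {l | l ∈ P ∧ l.length = N}) (fun l hl =>
    And.intro (hPf l hl.1) (by rw [List.length_map, hl.2])) hz

lemma boundary_resolutionDifferential (he : IsResolutionImage p N f P e) (hf : f^[p] = id) :
    boundary K (resolutionDifferential p (map K f : Module.End K _) N (e N)) = 0 := by
  rw [map_resolutionDifferential (ω' := map K f) fun z => (map_boundary f z).symm]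
  match N, he with
  | 0, he => simp [he.zero, faceSum]
  | 1, he =>
    rw [he.boundary_succ 0 one_pos, he.zero]
    simp [resolutionDifferential]
  | N + 2, he =>
    rw [he.boundary_succ (N + 1) (Nat.lt_succ_self _), ← Module.End.mul_apply,
      resolutionDifferential_add_two_mul (map_pow_eq_one hf), LinearMap.zero_apply]

lemma update_succ {c : ListChain K X} (he : IsResolutionImage p N f P e)
    (hc : c ∈ Finsupp.supported K K {l | l ∈ P ∧ l.length = N + 1})
    (hcN : boundary K c = resolutionDifferential p (map K f : Module.End K _) N (e N)) :
    IsResolutionImage p (N + 1) f P (Function.update e (N + 1) c) where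
  zero := by simp [he.zero]
  mem k hk := by
    rcases hk.eq_or_lt with rfl | hk
    · simpa using hc
    · rw [Function.update_of_ne hk.ne]
      exact he.mem k (by omega)
  boundary_succ k hk := by
    rw [Function.update_of_ne hk.ne]
    rcases (Nat.lt_succ_iff.mp hk).eq_or_lt with rfl | hk
    · simpa using hcN
    · rw [Function.update_of_ne (by omega), he.boundary_succ k hk]

end IsResolutionImage

theorem exists_isResolutionImage (hf : f^[p] = id) (hP : [] ∈ P) (hPf : ∀ l ∈ P, l.map f ∈ P)
    (hfill : ∀ k < N, ∀ z ∈ Finsupp.supported K K {l | l ∈ P ∧ l.length = k}, boundary K z = 0 →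
      ∃ c ∈ Finsupp.supported K K {l | l ∈ P ∧ l.length = k + 1}, boundary K c = z) :
    ∃ e : ℕ → ListChain K X, IsResolutionImage p N f P e := by
  induction N with
  | zero =>
    refine ⟨fun _ => .single [] 1, rfl, fun k hk => ?_, by simp⟩
    rw [Nat.le_zero.mp hk]
    exact Finsupp.single_mem_supported K 1 ⟨hP, rfl⟩
  | succ N ih =>
    obtain ⟨e, he⟩ := ih fun k hk => hfill k (hk.trans N.lt_succ_self)
    obtain ⟨c, hc, hcN⟩ := hfill N N.lt_succ_self _ (he.resolutionDifferential_mem hPf)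
      (he.boundary_resolutionDifferential hf)
    exact ⟨_, he.update_succ hc hcN⟩

end ResolutionImage

end ListChain

section Obstruction

lemma exists_forall_existsUnique_iterate_mem {Λ : Type*} {p : ℕ} (hp : p.Prime) {g : Λ → Λ}
    (hg : g^[p] = id) : ∃ F : Set Λ, ∀ b, g b ≠ b → ∃! i, i < p ∧ g^[i] b ∈ F := by
  have := Fact.mk hp
  cases isEmpty_or_nonempty Λ
  · exact ⟨∅, isEmptyElim⟩
  let rep : Cycle Λ → Λ := Function.invFun (Function.periodicOrbit g)
  refine ⟨{b | b = rep (Function.periodicOrbit g b)}, fun b hb => ?_⟩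
  have hper (b : Λ) : b ∈ Function.periodicPts g :=
    Function.mk_mem_periodicPts hp.pos (congrFun hg b)
  have hmin : Function.minimalPeriod g b = p :=
    Function.minimalPeriod_eq_prime (congrFun hg b) hb
  have hmod (n : ℕ) : g^[n % p] b = g^[n] b := by
    rw [← hmin, Function.iterate_mod_minimalPeriod_eq]
  have hrep : Function.periodicOrbit g (rep (Function.periodicOrbit g b)) =
      Function.periodicOrbit g b := Function.invFun_eq ⟨b, rfl⟩
  obtain ⟨n, hn⟩ : ∃ n, g^[n] b = rep (Function.periodicOrbit g b) := by
    have := Function.self_mem_periodicOrbit (hper (rep (Function.periodicOrbit g b)))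
    rwa [hrep, Function.mem_periodicOrbit_iff (hper b)] at this
  simp only [Set.mem_ofPred_eq, Function.periodicOrbit_apply_iterate_eq (hper b), ← hn]
  refine ⟨n % p, ⟨Nat.mod_lt n hp.pos, hmod n⟩, fun i hi => ?_⟩
  refine Function.iterate_injOn_Iio_minimalPeriod (f := g) (x := b) ?_ ?_
    (hi.2.trans (hmod n).symm) <;> rw [hmin, Set.mem_Iio]
  · exact hi.1
  · exact Nat.mod_lt n hp.pos

lemma length_le_of_strictMonoOn {Λ : Type*} [PartialOrder Λ] {good : Set Λ} {rank : Λ → ℕ} {M : ℕ}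
    (hrank : StrictMonoOn rank good) (hM : ∀ b ∈ good, rank b < M) {t : List Λ}
    (ht : ∀ b ∈ t, b ∈ good) (hsort : t.Pairwise (· ≥ ·)) (hne : t.IsChain (· ≠ ·)) :
    t.length ≤ M := by
  have hlt : t.Pairwise (· > ·) := List.isChain_iff_pairwise.mp <|
    List.isChain_iff_getElem.mpr fun i hi => lt_of_le_of_ne
      (List.isChain_iff_getElem.mp hsort.isChain i hi)
      (List.isChain_iff_getElem.mp hne i hi).symm
  have hnodup : (t.map rank).Nodup := List.pairwise_map.mpr <|
    hlt.imp_of_mem fun ha hb hab => (hrank (ht _ hb) (ht _ ha) hab).ne'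
  have hsub : t.map rank ⊆ List.range M := by
    simpa [List.subset_def] using fun b hb => hM b (ht b hb)
  simpa using (hnodup.subperm hsub).length_le

namespace ListChain

variable {K : Type*} [Ring K] {Λ : Type*} {p : ℕ} {g : Λ → Λ}

lemma sum_map_pow_select_map_pow {F good : Set Λ} (hg : g^[p] = id)
    (hF : ∀ b ∈ good, ∃! i, i < p ∧ g^[i] b ∈ F) {P : Set (List Λ)}
    (hP : ∀ t ∈ P, ∃ b ∈ t.head?, b ∈ good) {z : ListChain K Λ}
    (hz : z ∈ Finsupp.supported K K P) :
    ∑ i ∈ Finset.range p, ((map K g : Module.End K _) ^ (p - i))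
      (select K {t | ∃ b ∈ t.head?, b ∈ F} (((map K g : Module.End K _) ^ i) z)) = z := by
  let A : Module.End K (ListChain K Λ) := ∑ i ∈ Finset.range p,
    (map K g) ^ (p - i) * select K {t | ∃ b ∈ t.head?, b ∈ F} * (map K g) ^ i
  suffices A z = z by simpa [A, LinearMap.sum_apply] using this
  suffices z ∈ LinearMap.ker (A - 1) by simpa [sub_eq_zero] using this
  have hA (t : List Λ) (ht : t ∈ P) :
      LinearMap.id (R := K) (.single t 1) ∈ LinearMap.ker (A - 1) := by
    obtain ⟨b, hb, hbg⟩ := hP t ht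
    obtain ⟨i, ⟨hi, hiF⟩, huniq⟩ := hF b hbg
    have hhead (j : ℕ) : t.map g^[j] ∈ {t | ∃ b ∈ t.head?, b ∈ F} ↔ g^[j] b ∈ F := by
      simp_all
    rw [LinearMap.mem_ker, LinearMap.sub_apply, sub_eq_zero]
    simp only [A, LinearMap.sum_apply, Module.End.mul_apply, map_pow_single, LinearMap.id_apply]
    rw [Finset.sum_eq_single i]
    · rw [select_single_of_mem ((hhead i).mpr hiF), map_pow_single, List.map_map,
        ← Function.iterate_add, Nat.sub_add_cancel hi.le, hg, List.map_id, Module.End.one_apply]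
    · intro j hj hji
      rw [select_single_of_notMem, map_zero]
      exact fun h => hji (huniq j ⟨Finset.mem_range.mp hj, (hhead j).mp h⟩)
    · simp [hi]
  exact apply_mem_of_single hA hz

lemma map_eq_self_of_mem_supported_nil (g : Λ → Λ) {z : ListChain K Λ}
    (hz : z ∈ Finsupp.supported K K {[]}) : map K g z = z := by
  rw [Finsupp.supported_eq_span_single, Set.image_singleton, Submodule.mem_span_singleton] at hz
  obtain ⟨c, rfl⟩ := hz
  simp

variable [PartialOrder Λ] {good : Set Λ} {rank : Λ → ℕ} {M : ℕ}

lemma normalize_eq_zero_of_mem_supported (hrank : StrictMonoOn rank good)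
    (hM : ∀ b ∈ good, rank b < M) {z : ListChain K Λ} (hz : z ∈ Finsupp.supported K K
      {t | ((∀ b ∈ t, b ∈ good) ∧ t.Pairwise (· ≥ ·)) ∧ t.length = M + 1}) :
    normalize K z = 0 := by
  have hempty : {t : List Λ | ((∀ b ∈ t, b ∈ good) ∧ t.Pairwise (· ≥ ·)) ∧ t.length = M + 1} ∩
      {t | t.IsChain (· ≠ ·)} = ∅ := by
    refine Set.eq_empty_of_forall_notMem fun t ht => ?_
    obtain ⟨⟨⟨hgood, hsort⟩, hlen⟩, hne⟩ := ht
    have := length_le_of_strictMonoOn hrank hM hgood hsort hne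
    omega
  have h := select_mem_supported (Q := {t : List Λ | t.IsChain (· ≠ ·)}) hz
  rw [hempty, Finsupp.supported_empty] at h
  exact (Submodule.mem_bot K).mp h

/-- The normalized chains on the good labels form a free complex of length `M`, too short to receive
the periodic resolution. -/
theorem not_isResolutionImage [Nontrivial K] (hp : p.Prime) (hpK : (p : K) = 0) (hg : g^[p] = id)
    (hgood : ∀ b ∈ good, g b ∈ good ∧ g b ≠ b) (hrank : StrictMonoOn rank good)
    (hM : ∀ b ∈ good, rank b < M) (e : ℕ → ListChain K Λ) :
    ¬ IsResolutionImage p (M + 1) g {t | (∀ b ∈ t, b ∈ good) ∧ t.Pairwise (· ≥ ·)} e := by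
  intro he
  obtain ⟨F, hF⟩ := exists_forall_existsUnique_iterate_mem hp hg
  have hinj : Function.Injective g := Function.LeftInverse.injective (g := g^[p - 1]) fun b => by
    rw [← Function.iterate_succ_apply, Nat.succ_eq_add_one, Nat.sub_one_add_one hp.ne_zero, hg,
      id_eq]
  let S (k : ℕ) : Submodule K (ListChain K Λ) :=
    Finsupp.supported K K {t | (∀ b ∈ t, b ∈ good) ∧ t.length = k}
  let ω : Module.End K (ListChain K Λ) := map K g
  have hS (k : ℕ) : ∀ z ∈ S k, ω z ∈ S k := fun z hz => map_mem_supported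
    (fun t ht => And.intro (by simpa using fun b hb => (hgood b (ht.1 b hb)).1)
      (by simpa using ht.2)) hz
  have hselect (Q : Set (List Λ)) (k : ℕ) : ∀ z ∈ S k, select K Q z ∈ S k := fun z hz =>
    Finsupp.supported_mono Set.inter_subset_left (select_mem_supported hz)
  have hD (k : ℕ) : ∀ z ∈ S (k + 1), normalize K (boundary K z) ∈ S k := fun z hz =>
    hselect _ k _ (boundary_mem_supported (fun t ht s hst hs =>
      And.intro (fun b hb => ht.1 b (hst.subset hb)) (by have := ht.2; omega)) hz)
  have hmem (k : ℕ) (hk : k ≤ M + 1) : e k ∈ S k :=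
    Finsupp.supported_mono (fun t ht => And.intro ht.1.1 ht.2) (he.mem k hk)
  have hzero : normalize K (e 0) = 0 := by
    refine augmentation_eq_zero (p := p) (N := M + 1) (ω := ω) (S := S)
      (D := normalize K ∘ₗ boundary K) (e := fun k => normalize K (e k)) hpK
      (fun z hz => map_eq_self_of_mem_supported_nil g (Finsupp.supported_mono (by simp) hz)) hD
      (fun z => ?_) (fun z => ?_) (fun k z hz => ?_) (fun k hk => hselect _ k _ (hmem k hk))
      (fun k hk => ?_) (normalize_eq_zero_of_mem_supported hrank hM (he.mem _ le_rfl))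
    · simp [normalize_boundary_normalize, boundary_boundary]
    · simp [ω, map_normalize hinj, map_boundary]
    · refine exists_resolutionDifferential_eq (map_pow_eq_one hg) (hS _) (hselect _ _)
        (fun z hz => sum_map_pow_select_map_pow hg (fun b hb => hF b (hgood b hb).2)
          (fun t ht => ?_) hz) k hz
      obtain ⟨b, t, rfl⟩ := List.exists_cons_of_length_eq_add_one ht.2
      exact ⟨b, rfl, ht.1 b List.mem_cons_self⟩
    · rw [LinearMap.comp_apply, normalize_boundary_normalize, he.boundary_succ k hk]
      exact map_resolutionDifferential (fun z => (map_normalize hinj z).symm) k (e k)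
  simp [he.zero, normalize_single_of_isChain] at hzero

end ListChain

end Obstruction

section GeneralPosition

lemma finrank_span_list_le {𝕜 V : Type*} [DivisionRing 𝕜] [AddCommGroup V] [Module 𝕜 V]
    (l : List V) : Module.finrank 𝕜 (Submodule.span 𝕜 {x | x ∈ l}) ≤ l.length := by
  classical
  have hset : {x | x ∈ l} = (l.toFinset : Set V) := by ext; simp
  rw [hset]
  exact (finrank_span_finset_le_card _).trans l.toFinset_card_le

variable {𝕜 V : Type*} [Field 𝕜] [LinearOrder 𝕜] [AddCommGroup V] [Module 𝕜 V]
  {T : Submodule 𝕜 V} {l : List V}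

/-- The affine simplex with the listed vertices misses the subspace `T`. -/
def Avoids (T : Submodule 𝕜 V) (l : List V) : Prop :=
  Disjoint (convexHull 𝕜 {x | x ∈ l}) (T : Set V)

lemma Avoids.map (h : Avoids T l) {f : V →ₗ[𝕜] V} (hf : ∀ x, f x ∈ T → x ∈ T) :
    Avoids T (l.map f) := by
  have hset : {x | x ∈ l.map f} = f '' {x | x ∈ l} := by ext; simp
  rw [Avoids, hset, ← f.image_convexHull, Set.disjoint_image_left]
  exact h.mono_right hf

variable [IsStrictOrderedRing 𝕜]

lemma Avoids.cons (h : Avoids T l) {q : V} (hq : q ∉ Submodule.span 𝕜 {x | x ∈ l} ⊔ T) :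
    Avoids T (q :: l) := by
  have hset : {x | x ∈ q :: l} = insert q {x | x ∈ l} := by ext; simp
  rw [Avoids, hset, Set.disjoint_left]
  intro z hz hzT
  rcases Set.eq_empty_or_nonempty {x | x ∈ l} with hempty | hne
  · obtain rfl : z = q := by simpa [hempty] using hz
    exact hq (Submodule.mem_sup_right hzT)
  · rw [convexHull_insert hne, mem_convexJoin] at hz
    obtain ⟨_, rfl, y, hy, a, b, -, -, hab, rfl⟩ := hz
    have hy' : y ∈ Submodule.span 𝕜 {x | x ∈ l} :=
      convexHull_min Submodule.subset_span (Submodule.convex _) hy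
    have ha : a ≠ 0 := by
      rintro rfl
      obtain rfl : b = 1 := by simpa using hab
      exact Set.disjoint_left.mp h hy (by simpa using hzT)
    refine hq ((Submodule.smul_mem_iff _ ha).mp ?_)
    exact (Submodule.add_mem_iff_left _ (Submodule.smul_mem _ b (Submodule.mem_sup_left hy'))).mp
      (Submodule.mem_sup_right hzT)

lemma exists_forall_notMem_span_sup [FiniteDimensional 𝕜 V] {n : ℕ}
    (hn : n + Module.finrank 𝕜 T < Module.finrank 𝕜 V) (F : Finset (List V))
    (hF : ∀ l ∈ F, l.length ≤ n) :
    ∃ q : V, ∀ l ∈ F, q ∉ Submodule.span 𝕜 {x | x ∈ l} ⊔ T := by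
  classical
  by_contra! hcon
  refine Subspace.biUnion_ne_univ_of_top_notMem (k := 𝕜)
    (s := F.image fun l => Submodule.span 𝕜 {x | x ∈ l} ⊔ T) (fun htop => ?_) ?_
  · obtain ⟨l, hl, htop⟩ := Finset.mem_image.mp htop
    have hspan := (finrank_span_list_le (𝕜 := 𝕜) l).trans (hF l hl)
    have hsup := Submodule.finrank_add_le_finrank_add_finrank (Submodule.span 𝕜 {x | x ∈ l}) T
    rw [htop, finrank_top] at hsup
    omega
  · simpa [Set.eq_univ_iff_forall] using hcon

variable {K : Type*} [Ring K] {p N : ℕ}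

namespace ListChain

lemma exists_boundary_eq_of_avoids [FiniteDimensional 𝕜 V] {k : ℕ}
    (hk : k + Module.finrank 𝕜 T < Module.finrank 𝕜 V) {z : ListChain K V}
    (hz : z ∈ Finsupp.supported K K {l | l ∈ {l | Avoids T l} ∧ l.length = k})
    (hz0 : boundary K z = 0) :
    ∃ c ∈ Finsupp.supported K K {l | l ∈ {l | Avoids T l} ∧ l.length = k + 1},
      boundary K c = z := by
  have hmem {l : List V} (hl : l ∈ z.support) : Avoids T l ∧ l.length = k :=
    (Finsupp.mem_supported K z).mp hz hl
  obtain ⟨q, hq⟩ := exists_forall_notMem_span_sup hk z.support fun l hl => (hmem hl).2.le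
  refine ⟨cone K q z, cone_mem_supported (P := {l | l ∈ z.support}) (fun l hl => ?_) ?_, ?_⟩
  · exact ⟨(hmem hl).1.cons (hq l hl), by rw [List.length_cons, (hmem hl).2]⟩
  · exact (Finsupp.mem_supported K z).mpr fun l hl => hl
  · rw [boundary_cone, hz0, map_zero, sub_zero]

theorem exists_isResolutionImage_avoids [FiniteDimensional 𝕜 V] {f : V →ₗ[𝕜] V} (hf : f^[p] = id)
    (hfT : ∀ x, f x ∈ T → x ∈ T)
    (hN : N + Module.finrank 𝕜 T ≤ Module.finrank 𝕜 V) :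
    ∃ e : ℕ → ListChain K V, IsResolutionImage p N f {l | Avoids T l} e :=
  exists_isResolutionImage hf (by simp [Avoids]) (fun _ hl => hl.map hfT) fun _ hk _ hz hz0 =>
    exists_boundary_eq_of_avoids (by omega) hz hz0

end ListChain

end GeneralPosition

section Barycentre

variable {V : Type*} [AddCommGroup V] [Module ℝ V]

/-- The barycentre of a nonempty list of points; the empty list has barycentre `0`. -/
noncomputable def barycentre (l : List V) : V := (l.length : ℝ)⁻¹ • l.sum

lemma barycentre_map (f : V →ₗ[ℝ] V) (l : List V) : barycentre (l.map f) = f (barycentre l) := by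
  simp [barycentre, map_list_sum]

lemma barycentre_mem {l : List V} {C : Set V} (hC : Convex ℝ C) (hl : l ≠ [])
    (h : ∀ x ∈ l, x ∈ C) : barycentre l ∈ C := by
  have hlen : (l.length : ℝ) ≠ 0 := by simpa using hl
  rw [barycentre, ← Fin.sum_univ_getElem, Finset.smul_sum]
  exact hC.sum_mem (fun _ _ => by positivity) (by simp [hlen]) fun i _ => h _ (List.get_mem l i)

end Barycentre

section Subdivision

variable {V : Type*} [SeminormedAddCommGroup V] [NormedSpace ℝ V] {l s t : List V} {η : ℝ}

lemma dist_barycentre_le (h : ∀ x ∈ l, ∀ y ∈ l, dist x y ≤ η) {x : V} (hx : x ∈ l) :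
    dist x (barycentre l) ≤ (1 - (l.length : ℝ)⁻¹) * η := by
  obtain ⟨i₀, rfl⟩ := List.get_of_mem hx
  have hlen : 0 < l.length := List.length_pos_of_mem hx
  have hsub : barycentre l - l.get i₀ =
      (l.length : ℝ)⁻¹ • ∑ i ∈ Finset.univ.erase i₀, (l.get i - l.get i₀) := by
    rw [Finset.sum_erase _ (sub_self _), Finset.sum_sub_distrib, smul_sub]
    simp [barycentre, Fin.sum_univ_getElem, ← Nat.cast_smul_eq_nsmul ℝ, smul_smul, hlen.ne']
  have hnorm : ‖∑ i ∈ Finset.univ.erase i₀, (l.get i - l.get i₀)‖ ≤ (l.length - 1) * η :=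
    calc _ ≤ ∑ _i ∈ Finset.univ.erase i₀, η := norm_sum_le_of_le _ fun i _ => by
          simpa [dist_eq_norm] using h _ (List.get_mem l i) _ hx
      _ = (l.length - 1) * η := by simp [Finset.card_erase_of_mem, Nat.cast_pred hlen]
  calc dist (l.get i₀) (barycentre l)
      = (l.length : ℝ)⁻¹ * ‖∑ i ∈ Finset.univ.erase i₀, (l.get i - l.get i₀)‖ := by
        rw [dist_comm, dist_eq_norm, hsub, norm_smul, Real.norm_of_nonneg (by positivity)]
    _ ≤ (l.length : ℝ)⁻¹ * ((l.length - 1) * η) := by gcongr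
    _ = (1 - (l.length : ℝ)⁻¹) * η := by field_simp

lemma dist_barycentre_barycentre_le (h : ∀ x ∈ s, ∀ y ∈ s, dist x y ≤ η) (hts : t <+ s)
    (ht : t ≠ []) : dist (barycentre s) (barycentre t) ≤ (1 - (s.length : ℝ)⁻¹) * η := by
  rw [dist_comm]
  exact barycentre_mem (convex_closedBall (barycentre s) _) ht fun x hx =>
    dist_barycentre_le h (hts.subset hx)

/-- The simplices of diameter at most `η` contained in `X`. -/
def fineSimplices (X : Set V) (η : ℝ) : Set (List V) :=
  {l | convexHull ℝ {x | x ∈ l} ⊆ X ∧ ∀ x ∈ l, ∀ y ∈ l, dist x y ≤ η}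

lemma IsFullFlag.map_barycentre_mem_fineSimplices {X : Set V} {L : List (List V)} {N : ℕ}
    (hL : IsFullFlag l L) (hl : l ∈ fineSimplices X η) (hN : l.length ≤ N) :
    L.map barycentre ∈ fineSimplices X ((1 - (N + 1 : ℝ)⁻¹) * η) := by
  refine ⟨(convexHull_min ?_ (convex_convexHull ℝ _)).trans hl.1, ?_⟩
  · intro x hx
    obtain ⟨s, hs, rfl⟩ := List.mem_map.mp hx
    obtain ⟨hsl, hs0⟩ := hL.mem s hs
    exact barycentre_mem (convex_convexHull ℝ _) hs0 fun x hx =>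
      subset_convexHull ℝ _ (hsl.subset hx)
  have hdist (s t : List V) (hs : s ∈ L) (ht : t ∈ L) (hts : t <+ s) :
      dist (barycentre s) (barycentre t) ≤ (1 - (N + 1 : ℝ)⁻¹) * η := by
    obtain ⟨hsl, hs0⟩ := hL.mem s hs
    have hη : 0 ≤ η := by
      obtain ⟨x, hx⟩ := List.exists_mem_of_ne_nil s hs0
      simpa using hl.2 x (hsl.subset hx) x (hsl.subset hx)
    have hpos : 0 < s.length := List.length_pos_of_ne_nil hs0
    have hlen : (s.length : ℝ) ≤ N + 1 := by
      exact_mod_cast (hsl.length_le.trans hN).trans N.le_succ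
    refine (dist_barycentre_barycentre_le (fun x hx y hy => hl.2 x (hsl.subset hx) y
      (hsl.subset hy)) hts (hL.mem t ht).2).trans ?_
    gcongr
  have hsymm : Std.Symm fun s t : List V =>
      dist (barycentre s) (barycentre t) ≤ (1 - (N + 1 : ℝ)⁻¹) * η :=
    ⟨fun s t h => by rwa [dist_comm]⟩
  intro x hx y hy
  obtain ⟨s, hs, rfl⟩ := List.mem_map.mp hx
  obtain ⟨t, ht, rfl⟩ := List.mem_map.mp hy
  exact List.Pairwise.forall_of_forall (fun s hs => hdist s s hs hs (.refl s))
    (hL.pairwise.imp_of_mem fun hs ht hts => hdist _ _ hs ht hts) hs ht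

namespace ListChain

variable {K : Type*} [Ring K] {p N : ℕ} {f : V →ₗ[ℝ] V}

lemma IsResolutionImage.exists_fineSimplices_pow {X : Set V} {e : ℕ → ListChain K V}
    (he : IsResolutionImage p N f (fineSimplices X η) e) (m : ℕ) : ∃ e : ℕ → ListChain K V,
      IsResolutionImage p N f (fineSimplices X ((1 - (N + 1 : ℝ)⁻¹) ^ m * η)) e := by
  induction m with
  | zero => exact ⟨e, by simpa using he⟩
  | succ m ih =>
    obtain ⟨e', he'⟩ := ih
    refine ⟨_, he'.flagMap (barycentre_map f) fun l hl hN L hL => ?_⟩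
    rw [pow_succ', mul_assoc]
    exact hL.map_barycentre_mem_fineSimplices hl hN

lemma IsResolutionImage.exists_fineSimplices {X : Set V} {e : ℕ → ListChain K V}
    (he : IsResolutionImage p N f (fineSimplices X η) e) {ε : ℝ} (hε : 0 < ε) :
    ∃ e : ℕ → ListChain K V, IsResolutionImage p N f (fineSimplices X ε) e := by
  have hlim : Filter.Tendsto (fun m : ℕ => (1 - (N + 1 : ℝ)⁻¹) ^ m * η) Filter.atTop (nhds 0) := by
    have hinv : (N + 1 : ℝ)⁻¹ ≤ 1 := inv_le_one_of_one_le₀ (by simp)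
    simpa using (tendsto_pow_atTop_nhds_zero_of_lt_one (sub_nonneg.mpr hinv)
      (sub_lt_self 1 (by positivity))).mul_const η
  obtain ⟨m, hm⟩ := (hlim.eventually_le_const hε).exists
  obtain ⟨e', he'⟩ := he.exists_fineSimplices_pow m
  exact ⟨e', he'.mono fun l hl => ⟨hl.1, fun x hx y hy => (hl.2 x hx y hy).trans hm⟩⟩

theorem exists_isCompact_forall_exists_isResolutionImage [FiniteDimensional ℝ V]
    {T : Submodule ℝ V} (hf : f^[p] = id) (hfT : ∀ x, f x ∈ T → x ∈ T)
    (hN : N + Module.finrank ℝ T ≤ Module.finrank ℝ V) :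
    ∃ X : Set V, IsCompact X ∧ Disjoint X (T : Set V) ∧ ∀ η > 0, ∃ e : ℕ → ListChain K V,
      IsResolutionImage p N f (fineSimplices X η) e := by
  obtain ⟨e, he⟩ := exists_isResolutionImage_avoids (K := K) hf hfT hN
  let X : Set V := ⋃ k ∈ Finset.range (N + 1), ⋃ l ∈ (e k).support, convexHull ℝ {x | x ∈ l}
  have hmem {k : ℕ} (hk : k ≤ N) {l : List V} (hl : l ∈ (e k).support) :
      Avoids T l ∧ l.length = k := (Finsupp.mem_supported K _).mp (he.mem k hk) hl
  have hX : IsCompact X := Finset.isCompact_biUnion _ fun _ _ => Finset.isCompact_biUnion _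
    fun l _ => (List.finite_toSet l).isCompact_convexHull ℝ
  have hdisj : Disjoint X (T : Set V) := by
    simp only [X, Set.disjoint_iUnion_left]
    exact fun k hk l hl => (hmem (Finset.mem_range_succ_iff.mp hk) hl).1
  have heX : IsResolutionImage p N f (fineSimplices X (Metric.diam X)) e := by
    refine ⟨he.zero, fun k hk => (Finsupp.mem_supported K _).mpr fun l hl => ?_, he.boundary_succ⟩
    have hlX : convexHull ℝ {x | x ∈ l} ⊆ X := Set.subset_iUnion₂_of_subset k
      (Finset.mem_range_succ_iff.mpr hk) (Set.subset_iUnion₂_of_subset l hl subset_rfl)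
    refine ⟨⟨hlX, fun x hx y hy => ?_⟩, (hmem hk hl).2⟩
    exact Metric.dist_le_diam_of_mem hX.isBounded (hlX (subset_convexHull ℝ _ hx))
      (hlX (subset_convexHull ℝ _ hy))
  exact ⟨X, hX, hdisj, fun η hη => heX.exists_fineSimplices hη⟩

end ListChain

end Subdivision

section Labels

lemma card_quotient_lt {α : Type*} [Finite α] {s t : Setoid α} (h : s < t) :
    Nat.card (Quotient t) < Nat.card (Quotient s) := by
  have := Fintype.ofFinite (Quotient s)
  have := Fintype.ofFinite (Quotient t)
  rw [Nat.card_eq_fintype_card, Nat.card_eq_fintype_card]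
  refine Fintype.card_lt_of_surjective_not_injective (Quotient.map' id fun x y hxy => h.le hxy)
    (Quotient.ind fun x => ⟨Quotient.mk s x, rfl⟩) fun hinj => h.not_ge fun {x y} hxy => ?_
  have hq : (Quotient.mk t x) = Quotient.mk t y := Quotient.sound hxy
  exact Quotient.exact (@hinj (Quotient.mk s x) (Quotient.mk s y) hq)

lemma one_lt_card_quotient {α : Type*} [Finite α] {s : Setoid α} (h : s ≠ ⊤) :
    1 < Nat.card (Quotient s) := by
  obtain ⟨x, y, hxy⟩ : ∃ x y, ¬ s x y := by
    simpa [Setoid.eq_top_iff] using h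
  exact Finite.one_lt_card_iff_nontrivial.mpr
    ⟨Quotient.mk s x, Quotient.mk s y, fun h => hxy (Quotient.exact h)⟩

lemma card_quotient_lt_card {α : Type*} [Finite α] {s : Setoid α} (h : s ≠ ⊥) :
    Nat.card (Quotient s) < Nat.card α :=
  (card_quotient_lt (bot_lt_iff_ne_bot.mpr h)).trans_le
    (Nat.card_le_card_of_surjective _ Quotient.mk_surjective)

lemma comap_equiv_eq_bot_iff {α β : Type*} (σ : α ≃ β) {s : Setoid β} : s.comap σ = ⊥ ↔ s = ⊥ := by
  rw [← (Setoid.comap_injective σ σ.surjective).eq_iff (b := ⊥)]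
  have hbot : (⊥ : Setoid β).comap σ = ⊥ := by ext; exact σ.injective.eq_iff
  rw [hbot]

lemma comap_equiv_eq_top_iff {α β : Type*} (σ : α ≃ β) {s : Setoid β} : s.comap σ = ⊤ ↔ s = ⊤ :=
  (Setoid.comap_injective σ σ.surjective).eq_iff (b := ⊤)

lemma eq_of_periodic_one {p : ℕ} {β : Type*} {f : ZMod p → β} (hf : Function.Periodic f 1)
    (x y : ZMod p) : f x = f y := by
  obtain ⟨n, hn⟩ := ZMod.intCast_surjective (y - x)
  rw [← hf.zsmul n x, zsmul_one, hn, add_sub_cancel]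

lemma eq_empty_or_univ_of_preimage_add_one {p : ℕ} {A : Set (ZMod p)}
    (hA : (· + 1) ⁻¹' A = A) : A = ∅ ∨ A = Set.univ := by
  refine or_iff_not_imp_left.mpr fun hne => Set.eq_univ_of_forall fun y => ?_
  obtain ⟨x, hx⟩ := Set.nonempty_iff_ne_empty.mpr hne
  exact (eq_of_periodic_one (f := (· ∈ A)) (fun z => congrArg (z ∈ ·) hA) x y).mp hx

lemma eq_bot_or_top_of_comap_add_one {p : ℕ} (hp : p.Prime) {s : Setoid (ZMod p)}
    (hs : s.comap (· + 1) = s) : s = ⊥ ∨ s = ⊤ := by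
  have := Fact.mk hp
  have htrans (a x y : ZMod p) : s x (x + a) ↔ s y (y + a) := by
    refine iff_of_eq (eq_of_periodic_one (f := fun x => s x (x + a)) (fun x => ?_) x y)
    conv_rhs => rw [← hs]
    simp only [Setoid.comap_rel, add_right_comm]
  have hdiff (x y : ZMod p) : s x y ↔ s 0 (y - x) := by simpa using htrans (y - x) x 0
  let H : AddSubgroup (ZMod p) :=
    { carrier := {a | s 0 a}
      zero_mem' := s.refl 0
      add_mem' := fun {a b} ha hb => s.trans ha ((hdiff a (a + b)).mpr (by simpa using hb))
      neg_mem' := fun {a} ha => s.symm ((hdiff (-a) 0).mpr (by simpa using ha)) }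
  have hH (x y : ZMod p) : s x y ↔ y - x ∈ H := hdiff x y
  refine (eq_bot_or_eq_top H).imp (fun h => ?_) fun h => ?_
  · ext x y
    rw [hH, h, AddSubgroup.mem_bot, sub_eq_zero, eq_comm]
    rfl
  · ext x y
    simp [hH, h]

/-- The labels attached to the simplices of a fine triangulation: families of sets, below all
partitions. Both kinds are ordered by refinement. -/
abbrev Label (ι α : Type*) := (ι → Set α) ⊕ₗ Setoid α

namespace Label

variable {ι α : Type*}

/-- The action on labels of a self-map of `α`. -/
def relabel (σ : α → α) : Label ι α → Label ι α
  | Sum.inlₗ A => Sum.inlₗ fun j => σ ⁻¹' A j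
  | Sum.inrₗ s => Sum.inrₗ (s.comap σ)

lemma iterate_relabel (σ : α → α) (n : ℕ) :
    (relabel σ : Label ι α → Label ι α)^[n] = relabel σ^[n] := by
  induction n with
  | zero => ext (A | s) <;> rfl
  | succ n ih =>
    rw [Function.iterate_succ, ih, Function.iterate_succ']
    ext (A | s) <;> rfl

/-- The label recording the partition `s` or, when `s` is discrete, the family `A`. -/
noncomputable def combine (s : Setoid α) (A : ι → Set α) : Label ι α :=
  open scoped Classical in if s = ⊥ then Sum.inlₗ A else Sum.inrₗ s

lemma combine_mono {s t : Setoid α} {A B : ι → Set α} (hst : s ≤ t) (hAB : A ≤ B) :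
    combine s A ≤ combine t B := by
  rcases eq_or_ne t ⊥ with rfl | ht
  · rw [combine, combine, if_pos (le_bot_iff.mp hst), if_pos rfl]
    exact Sum.Lex.inl_le_inl_iff.mpr hAB
  · rw [combine, combine, if_neg ht]
    split_ifs
    · exact Sum.Lex.inl_le_inr _ _
    · exact Sum.Lex.inr_le_inr_iff.mpr hst

lemma relabel_combine (σ : α ≃ α) (s : Setoid α) (A : ι → Set α) :
    relabel σ (combine s A) = combine (s.comap σ) fun j => σ ⁻¹' A j := by
  by_cases hs : s = ⊥
  · rw [combine, combine, if_pos hs, if_pos ((comap_equiv_eq_bot_iff σ).mpr hs)]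
    rfl
  · rw [combine, combine, if_neg hs, if_neg ((comap_equiv_eq_bot_iff σ).not.mpr hs)]
    rfl

/-- The labels whose orbit under a transitive group of permutations of prime order is free: not all
sets are empty and none is everything, or the partition is neither discrete nor trivial. -/
def good (ι α : Type*) : Set (Label ι α) :=
  {b | match b with
    | Sum.inlₗ A => (∃ j, (A j).Nonempty) ∧ ∀ j, A j ≠ Set.univ
    | Sum.inrₗ s => s ≠ ⊥ ∧ s ≠ ⊤}

lemma combine_mem_good {s : Setoid α} {A : ι → Set α} (hs : s ≠ ⊤)
    (hA : s = ⊥ → (∃ j, (A j).Nonempty) ∧ ∀ j, A j ≠ Set.univ) : combine s A ∈ good ι α := by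
  rw [combine]
  split_ifs with h
  · exact hA h
  · exact ⟨h, hs⟩

lemma relabel_mem_good (σ : α ≃ α) {b : Label ι α} (hb : b ∈ good ι α) :
    relabel σ b ∈ good ι α := by
  rcases b with A | s
  · obtain ⟨⟨j, hj⟩, hA⟩ := hb
    refine ⟨⟨j, hj.preimage σ.surjective⟩, fun i h => hA i ?_⟩
    rwa [Set.preimage_eq_univ_iff, σ.surjective.range_eq, Set.univ_subset_iff] at h
  · exact ⟨(comap_equiv_eq_bot_iff σ).not.mpr hb.1, (comap_equiv_eq_top_iff σ).not.mpr hb.2⟩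

lemma relabel_add_one_ne {p : ℕ} (hp : p.Prime) {b : Label ι (ZMod p)}
    (hb : b ∈ good ι (ZMod p)) : relabel (· + 1) b ≠ b := by
  intro h
  rcases b with A | s
  · obtain ⟨⟨j, hj⟩, hA⟩ := hb
    have hAj : (· + 1) ⁻¹' A j = A j := congrFun (Sum.inl_injective h) j
    exact (eq_empty_or_univ_of_preimage_add_one hAj).elim hj.ne_empty (hA j)
  · exact (eq_bot_or_top_of_comap_add_one hp (Sum.inr_injective h)).elim hb.1 hb.2

variable [Fintype ι]

/-- The height of a label in the poset of good labels. -/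
noncomputable def rank : Label ι α → ℕ
  | Sum.inlₗ A => ∑ j, (A j).ncard - 1
  | Sum.inrₗ s => Fintype.card ι * (Nat.card α - 1) + (Nat.card α - 1 - Nat.card (Quotient s))

variable [Finite α]

lemma one_le_sum_ncard {A : ι → Set α} (hA : ∃ j, (A j).Nonempty) : 1 ≤ ∑ j, (A j).ncard := by
  obtain ⟨j, hj⟩ := hA
  exact ((Set.ncard_pos).mpr hj).trans_le
    (Finset.single_le_sum (f := fun j => (A j).ncard) (fun _ _ => zero_le) (Finset.mem_univ j))

lemma sum_ncard_le {A : ι → Set α} (hA : ∀ j, A j ≠ Set.univ) :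
    ∑ j, (A j).ncard ≤ Fintype.card ι * (Nat.card α - 1) := by
  refine Finset.sum_le_card_nsmul _ _ _ fun j _ => Nat.le_sub_one_of_lt ?_
  rw [← Set.ncard_univ]
  exact Set.ncard_lt_ncard (Set.ssubset_univ_iff.mpr (hA j))

lemma rank_lt {b : Label ι α} (hb : b ∈ good ι α) :
    rank b < Fintype.card ι * (Nat.card α - 1) + (Nat.card α - 2) := by
  rcases b with A | s
  · have h1 := one_le_sum_ncard hb.1
    have h2 := sum_ncard_le hb.2
    simp only [rank]
    omega
  · have h1 := one_lt_card_quotient hb.2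
    have h2 := card_quotient_lt_card hb.1
    simp only [rank]
    omega

lemma strictMonoOn_rank : StrictMonoOn rank (good ι α) := by
  rintro (A | s) hb (B | t) _ hbc
  · have hAB : A < B := Sum.Lex.inl_lt_inl_iff.mp hbc
    have h1 := one_le_sum_ncard hb.1
    have h2 : ∑ j, (A j).ncard < ∑ j, (B j).ncard := by
      obtain ⟨hle, j, hj⟩ := Pi.lt_def.mp hAB
      exact Finset.sum_lt_sum (fun j _ => Set.ncard_le_ncard (hle j))
        ⟨j, Finset.mem_univ j, Set.ncard_lt_ncard hj⟩
    simp only [rank]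
    omega
  · have h1 := one_le_sum_ncard hb.1
    have h2 := sum_ncard_le hb.2
    simp only [rank]
    omega
  · exact absurd hbc Sum.Lex.not_inr_lt_inl
  · have h := card_quotient_lt (Sum.Lex.inr_lt_inr_iff.mp hbc)
    have h2 := card_quotient_lt_card hb.1
    simp only [rank]
    omega

end Label

end Labels

section Compactness

lemma exists_pos_forall_exists_le {X ι : Type*} [TopologicalSpace X] [Finite ι] {C : Set X}
    (hC : IsCompact C) {F : X → ι → ℝ} (hF : ContinuousOn F C)
    (hpos : ∀ x ∈ C, ∃ i, 0 < F x i) : ∃ ε > 0, ∀ x ∈ C, ∃ i, ε ≤ F x i := by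
  have := Fintype.ofFinite ι
  rcases C.eq_empty_or_nonempty with rfl | hne
  · exact ⟨1, one_pos, by simp⟩
  have hι : (Finset.univ : Finset ι).Nonempty := by
    obtain ⟨x, hx⟩ := hne
    obtain ⟨i, -⟩ := hpos x hx
    exact ⟨i, Finset.mem_univ i⟩
  obtain ⟨x₀, hx₀, hmin⟩ := hC.exists_isMinOn hne <|
    ContinuousOn.finset_sup'_apply hι fun i _ => continuousOn_pi.mp hF i
  refine ⟨Finset.univ.sup' hι fun i => F x₀ i, ?_, fun x hx => ?_⟩
  · obtain ⟨i, hi⟩ := hpos x₀ hx₀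
    exact hi.trans_le (Finset.le_sup' (fun i => F x₀ i) (Finset.mem_univ i))
  · obtain ⟨i, -, hi⟩ := Finset.exists_mem_eq_sup' hι fun i => F x i
    exact ⟨i, (hmin hx).trans hi.le⟩

lemma eqvGen_comap {α β : Type*} (σ : α ≃ β) (R : β → β → Prop) :
    Relation.EqvGen.setoid (fun i k => R (σ i) (σ k)) = (Relation.EqvGen.setoid R).comap σ := by
  refine le_antisymm (Setoid.eqvGen_le fun i k h => Relation.EqvGen.rel _ _ h) fun {i k} h => ?_
  have hle : Relation.EqvGen.setoid R ≤
      (Relation.EqvGen.setoid fun i k => R (σ i) (σ k)).comap σ.symm :=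
    Setoid.eqvGen_le fun i k h => Relation.EqvGen.rel _ _ (by simpa using h)
  simpa [Setoid.comap_rel] using hle h

lemma exists_pos_exists_le_dist_of_eqvGen_eq_top {α E : Type*} [Finite α] [MetricSpace E]
    {C : Set (α → E)} (hC : IsCompact C) (hne : ∀ x ∈ C, ∃ i k, x i ≠ x k) :
    ∃ δ > 0, ∀ R : α → α → Prop, Relation.EqvGen.setoid R = ⊤ →
      ∀ x ∈ C, ∃ i k, R i k ∧ δ ≤ dist (x i) (x k) := by
  have hrel (R : α → α → Prop) : ∃ δ > 0, Relation.EqvGen.setoid R = ⊤ →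
      ∀ x ∈ C, ∃ i k, R i k ∧ δ ≤ dist (x i) (x k) := by
    by_cases hR : Relation.EqvGen.setoid R = ⊤
    · have hpos (x) (hx : x ∈ C) :
          ∃ q : {q : α × α // R q.1 q.2}, 0 < dist (x q.1.1) (x q.1.2) := by
        by_contra! hle
        have hker : Relation.EqvGen.setoid R ≤ Setoid.ker x :=
          Setoid.eqvGen_le fun i k h => dist_le_zero.mp (hle ⟨(i, k), h⟩)
        obtain ⟨i, k, hik⟩ := hne x hx
        rw [hR] at hker
        exact hik (hker (x := i) (y := k) trivial)
      obtain ⟨δ, hδ, h⟩ := exists_pos_forall_exists_le hC (by fun_prop) hpos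
      refine ⟨δ, hδ, fun _ x hx => ?_⟩
      obtain ⟨⟨⟨i, k⟩, hik⟩, hle⟩ := h x hx
      exact ⟨i, k, hik, hle⟩
    · exact ⟨1, one_pos, fun h => absurd h hR⟩
  choose δ hδ h using hrel
  have := Fintype.ofFinite (α → α → Prop)
  refine ⟨Finset.univ.inf' Finset.univ_nonempty δ, (Finset.lt_inf'_iff _).mpr fun R _ => hδ R,
    fun R hR x hx => ?_⟩
  obtain ⟨i, k, hik, hle⟩ := h R hR x hx
  exact ⟨i, k, hik, (Finset.inf'_le δ (Finset.mem_univ R)).trans hle⟩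

end Compactness

section Clusters

variable {α E : Type*} [PseudoMetricSpace E] {δ : ℝ} {s t : Set (α → E)}

/-- The partition of the indices generated by relating two of them when, in some configuration of
`s`, the corresponding points are at distance at most `δ`. -/
def clusters (δ : ℝ) (s : Set (α → E)) : Setoid α :=
  Relation.EqvGen.setoid fun i k => ∃ x ∈ s, dist (x i) (x k) ≤ δ

lemma clusters_mono (h : s ⊆ t) : clusters δ s ≤ clusters δ t :=
  Setoid.eqvGen_mono fun _ _ ⟨x, hx, hd⟩ => ⟨x, h hx, hd⟩

lemma clusters_image_comp (σ : α ≃ α) :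
    clusters δ ((· ∘ σ) '' s) = (clusters δ s).comap σ := by
  rw [clusters, clusters, ← eqvGen_comap]
  simp

lemma lt_dist_of_clusters_eq_bot (h : clusters δ s = ⊥) {x : α → E} (hx : x ∈ s) {i k : α}
    (hik : i ≠ k) : δ < dist (x i) (x k) := by
  by_contra! hle
  have hrel : clusters δ s i k := Relation.EqvGen.rel _ _ ⟨x, hx, hle⟩
  rw [h] at hrel
  exact hik hrel

lemma exists_pos_clusters_ne_top {E : Type*} [MetricSpace E] [Fintype α] {C : Set (α → E)}
    (hC : IsCompact C) (hne : ∀ x ∈ C, ∃ i k, x i ≠ x k) : ∃ δ > 0, ∀ s ⊆ C, s.Nonempty →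
      (∀ x ∈ s, ∀ y ∈ s, dist x y ≤ δ) → clusters δ s ≠ ⊤ := by
  obtain ⟨δ, hδ, h⟩ := exists_pos_exists_le_dist_of_eqvGen_eq_top hC hne
  refine ⟨δ / 4, by positivity, fun s hsC ⟨x, hx⟩ hs htop => ?_⟩
  obtain ⟨i, k, ⟨y, hy, hik⟩, hle⟩ := h _ htop x (hsC hx)
  have hxy (i : α) : dist (x i) (y i) ≤ δ / 4 := (dist_le_pi_dist x y i).trans (hs x hx y hy)
  have hyx : dist (y k) (x k) ≤ δ / 4 := dist_comm (x k) (y k) ▸ hxy k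
  linarith [dist_triangle4 (x i) (y i) (y k) (x k), hxy i]

end Clusters

section ElevatedSet

variable {X ι α : Type*} {ε : ℝ}

/-- The indices `i` for which, somewhere on `s`, the coordinate `Y · i` exceeds another coordinate
by at least `ε`. -/
def elevatedSet (ε : ℝ) (Y : X → α → ℝ) (s : Set X) : Set α :=
  {i | ∃ x ∈ s, ∃ k, Y x k + ε ≤ Y x i}

lemma elevatedSet_mono (Y : X → α → ℝ) {s t : Set X} (h : s ⊆ t) :
    elevatedSet ε Y s ⊆ elevatedSet ε Y t :=
  fun _ ⟨x, hx, hi⟩ => ⟨x, h hx, hi⟩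

lemma elevatedSet_image {Y : X → α → ℝ} {F : X → X} {σ : α ≃ α} (hF : ∀ x, Y (F x) = Y x ∘ σ)
    (s : Set X) : elevatedSet ε Y (F '' s) = σ ⁻¹' elevatedSet ε Y s := by
  ext i
  have hiff (x : X) : (∃ k, Y (F x) k + ε ≤ Y (F x) i) ↔ ∃ k, Y x k + ε ≤ Y x (σ i) := by
    rw [hF]
    exact σ.exists_congr_left.trans (by simp)
  simp [elevatedSet, hiff]

lemma exists_pos_elevatedSet_nonempty_ne_univ [PseudoMetricSpace X] [Finite ι] [Finite α]
    {C : Set X} (hC : IsCompact C) {Y : X → ι → α → ℝ} (hY : ContinuousOn Y C)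
    (hne : ∀ x ∈ C, ∃ j i k, Y x j i ≠ Y x j k) :
    ∃ ε : ℝ, ∃ η > 0, ∀ s ⊆ C, s.Nonempty → (∀ x ∈ s, ∀ y ∈ s, dist x y ≤ η) →
      (∃ j, (elevatedSet ε (Y · j) s).Nonempty) ∧ ∀ j, elevatedSet ε (Y · j) s ≠ Set.univ := by
  have := Fintype.ofFinite ι
  have := Fintype.ofFinite α
  have hpos (x) (hx : x ∈ C) : ∃ q : ι × α × α, 0 < Y x q.1 q.2.1 - Y x q.1 q.2.2 := by
    obtain ⟨j, i, k, hik⟩ := hne x hx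
    rcases hik.lt_or_gt with h | h
    · exact ⟨(j, k, i), sub_pos.mpr h⟩
    · exact ⟨(j, i, k), sub_pos.mpr h⟩
  obtain ⟨ε, hε, hεY⟩ := exists_pos_forall_exists_le hC (by fun_prop) hpos
  obtain ⟨η, hη, hηY⟩ := Metric.uniformContinuousOn_iff.mp
    (hC.uniformContinuousOn_of_continuous hY) (ε / 2) (by positivity)
  refine ⟨ε, η / 2, by positivity, fun s hsC ⟨x₀, hx₀⟩ hs => ⟨?_, fun j huniv => ?_⟩⟩
  · obtain ⟨⟨j, i, k⟩, hjik⟩ := hεY x₀ (hsC hx₀)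
    exact ⟨j, i, x₀, hx₀, k, by linarith⟩
  · have : Nonempty α := by
      obtain ⟨_, i, -⟩ := hne x₀ (hsC hx₀)
      exact ⟨i⟩
    obtain ⟨i, hi⟩ := Finite.exists_min (Y x₀ j)
    obtain ⟨x, hx, k, hik⟩ : i ∈ elevatedSet ε (Y · j) s := huniv ▸ Set.mem_univ i
    have hclose (i : α) : |Y x j i - Y x₀ j i| < ε / 2 :=
      ((dist_le_pi_dist (Y x j) (Y x₀ j) i).trans (dist_le_pi_dist (Y x) (Y x₀) j)).trans_lt <|
        hηY x (hsC hx) x₀ (hsC hx₀) ((hs x hx x₀ hx₀).trans_lt (half_lt_self hη))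
    linarith [hi k, (abs_lt.mp (hclose i)).2, (abs_lt.mp (hclose k)).1]

end ElevatedSet

section Configurations

variable {ι α E : Type*} [PseudoMetricSpace E] {δ ε : ℝ}

/-- The label of a set of families: its partition into clusters or, when no two points of a family
are clustered, the elevated sets of the rows of `Y`. -/
noncomputable def configLabel (δ ε : ℝ) (Y : {x : α → E // Function.Injective x} → ι → α → ℝ)
    (s : Set (α → E)) : Label ι α :=
  Label.combine (clusters δ s) fun j => elevatedSet ε (Y · j) (Subtype.val ⁻¹' s)

variable {Y : {x : α → E // Function.Injective x} → ι → α → ℝ}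

lemma configLabel_mono {s t : Set (α → E)} (h : s ⊆ t) :
    configLabel δ ε Y s ≤ configLabel δ ε Y t :=
  Label.combine_mono (clusters_mono h) fun j => elevatedSet_mono (Y · j) (Set.preimage_mono h)

lemma configLabel_image_comp (σ : α ≃ α)
    (hY : ∀ x j, Y ⟨x.1 ∘ σ, x.2.comp σ.injective⟩ j = Y x j ∘ σ) (s : Set (α → E)) :
    configLabel δ ε Y ((· ∘ σ) '' s) = Label.relabel σ (configLabel δ ε Y s) := by
  have hval : Subtype.val ⁻¹' ((· ∘ σ) '' s) =
      (fun x : {x : α → E // Function.Injective x} => ⟨x.1 ∘ σ, x.2.comp σ.injective⟩) ''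
        (Subtype.val ⁻¹' s) := by
    ext ⟨y, hy⟩
    refine ⟨fun ⟨x, hx, (hxy : x ∘ σ = y)⟩ => ?_,
      fun ⟨x, hx, hxy⟩ => ⟨x.1, hx, congrArg Subtype.val hxy⟩⟩
    have hxinj : Function.Injective x :=
      (Function.Injective.of_comp_iff' x σ.bijective).mp (hxy ▸ hy)
    exact ⟨⟨x, hxinj⟩, hx, Subtype.ext hxy⟩
  rw [configLabel, configLabel, Label.relabel_combine, clusters_image_comp, hval]
  exact congrArg _ (funext fun j => elevatedSet_image (Y := (Y · j)) (fun x => hY x j) _)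

lemma injective_of_forall_le_dist (hδ : 0 < δ) {x : α → E}
    (h : ∀ i k, i ≠ k → δ ≤ dist (x i) (x k)) : Function.Injective x := fun i k hik => by
  by_contra hne
  exact (h i k hne).not_gt (by rwa [hik, dist_self])

lemma isClosed_setOf_forall_le_dist (δ : ℝ) :
    IsClosed {x : α → E | ∀ i k, i ≠ k → δ ≤ dist (x i) (x k)} := by
  simp only [Set.ofPred_forall]
  exact isClosed_iInter fun i => isClosed_iInter fun k => isClosed_iInter fun _ =>
    isClosed_le continuous_const (by fun_prop)

lemma isCompact_setOf_forall_le_dist {C : Set (α → E)} (hC : IsCompact C) (hδ : 0 < δ) :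
    IsCompact {x : {x : α → E // Function.Injective x} |
      x.1 ∈ C ∧ ∀ i k, i ≠ k → δ ≤ dist (x.1 i) (x.1 k)} :=
  (Topology.IsInducing.subtypeVal.isCompact_preimage_iff fun x hx =>
    ⟨⟨x, injective_of_forall_le_dist hδ hx.2⟩, rfl⟩).mpr
      (hC.inter_right (isClosed_setOf_forall_le_dist δ))

lemma exists_configLabel_mem_good {E : Type*} [MetricSpace E] [Finite ι] [Fintype α]
    {C : Set (α → E)} {Y : {x : α → E // Function.Injective x} → ι → α → ℝ}
    (hC : IsCompact C) (hCne : ∀ x ∈ C, ∃ i k, x i ≠ x k) (hYc : Continuous Y)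
    (hYne : ∀ x, ∃ j i k, Y x j i ≠ Y x j k) :
    ∃ δ ε : ℝ, ∃ η > 0, ∀ s ⊆ C, s.Nonempty → (∀ x ∈ s, ∀ y ∈ s, dist x y ≤ η) →
      configLabel δ ε Y s ∈ Label.good ι α := by
  obtain ⟨δ, hδ, hδs⟩ := exists_pos_clusters_ne_top hC hCne
  obtain ⟨ε, η, hη, hηs⟩ := exists_pos_elevatedSet_nonempty_ne_univ
    (isCompact_setOf_forall_le_dist hC hδ) hYc.continuousOn fun x _ => hYne x
  refine ⟨δ, ε, min δ η, lt_min hδ hη, fun s hsC hs hdist => Label.combine_mem_good ?_ ?_⟩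
  · exact hδs s hsC hs fun x hx y hy => (hdist x hx y hy).trans (min_le_left _ _)
  · intro hbot
    have hsep (x) (hx : x ∈ s) (i k) (hik : i ≠ k) : δ ≤ dist (x i) (x k) :=
      (lt_dist_of_clusters_eq_bot hbot hx hik).le
    refine hηs _ (fun x hx => ⟨hsC hx, hsep x hx⟩) ?_
      fun x hx y hy => (hdist x hx y hy).trans (min_le_right _ _)
    obtain ⟨x, hx⟩ := hs
    exact ⟨⟨x, injective_of_forall_le_dist hδ (hsep x hx)⟩, hx⟩

end Configurations

section CyclicShift

lemma iterate_add_one_self (p : ℕ) : (fun k : ZMod p => k + 1)^[p] = id := by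
  simp [add_right_iterate, funext_iff]

lemma iterate_funLeft {R M α : Type*} [Semiring R] [AddCommMonoid M] [Module R M] (σ : α → α)
    (n : ℕ) : (LinearMap.funLeft R M σ)^[n] = LinearMap.funLeft R M σ^[n] := by
  induction n with
  | zero => rfl
  | succ n ih => rw [Function.iterate_succ, ih, Function.iterate_succ']; rfl

/-- The thin diagonal, consisting of the constant families. -/
def constantFamilies (R α M : Type*) [Semiring R] [AddCommMonoid M] [Module R M] :
    Submodule R (α → M) :=
  LinearMap.range (LinearMap.pi fun _ => LinearMap.id)

lemma mem_constantFamilies {R α M : Type*} [Semiring R] [AddCommMonoid M] [Module R M]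
    {x : α → M} : x ∈ constantFamilies R α M ↔ ∃ c, ∀ k, x k = c := by
  simp [constantFamilies, funext_iff, eq_comm]

variable {p : ℕ} {ι E : Type*}

lemma ListChain.exists_isCompact_nonconstant_forall_exists_isResolutionImage
    {K : Type*} [Ring K] {N : ℕ} [NeZero p] [NormedAddCommGroup E] [NormedSpace ℝ E]
    [FiniteDimensional ℝ E] (hN : N ≤ (p - 1) * Module.finrank ℝ E) :
    ∃ C : Set (ZMod p → E), IsCompact C ∧ (∀ x ∈ C, ∃ i k, x i ≠ x k) ∧
      ∀ η > 0, ∃ e : ℕ → ListChain K (ZMod p → E), IsResolutionImage p N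
        (LinearMap.funLeft ℝ E (· + 1)) (fineSimplices C η) e := by
  have hiter : (LinearMap.funLeft ℝ E fun k : ZMod p => k + 1)^[p] = id := by
    rw [iterate_funLeft, iterate_add_one_self]
    rfl
  have hshift (x : ZMod p → E)
      (hx : LinearMap.funLeft ℝ E (· + 1) x ∈ constantFamilies ℝ (ZMod p) E) :
      x ∈ constantFamilies ℝ (ZMod p) E := by
    obtain ⟨c, hc⟩ := mem_constantFamilies.mp hx
    exact mem_constantFamilies.mpr ⟨c, fun k => by
      simpa [LinearMap.funLeft_apply] using hc (k - 1)⟩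
  have hdim : N + Module.finrank ℝ (constantFamilies ℝ (ZMod p) E) ≤
      Module.finrank ℝ (ZMod p → E) := calc
    _ ≤ (p - 1) * Module.finrank ℝ E + Module.finrank ℝ E :=
      add_le_add hN (LinearMap.finrank_range_le _)
    _ = Module.finrank ℝ (ZMod p → E) := by
      rw [Module.finrank_pi_fintype, ← Nat.succ_mul, Nat.succ_eq_add_one,
        Nat.sub_one_add_one (NeZero.ne p)]
      simp [ZMod.card]
  obtain ⟨C, hC, hdisj, hres⟩ :=
    exists_isCompact_forall_exists_isResolutionImage (K := K) hiter hshift hdim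
  refine ⟨C, hC, fun x hx => ?_, hres⟩
  by_contra! hconst
  exact Set.disjoint_left.mp hdisj hx (mem_constantFamilies.mpr ⟨x 0, fun k => hconst k 0⟩)

lemma configLabel_map_funLeft_add_one [SeminormedAddCommGroup E] [NormedSpace ℝ E] {δ ε : ℝ}
    {Y : {x : ZMod p → E // Function.Injective x} → ι → ZMod p → ℝ}
    (hY : ∀ x, Y (configShift x) = fun j k => Y x j (k + 1)) (l : List (ZMod p → E)) :
    configLabel δ ε Y {x | x ∈ l.map (LinearMap.funLeft ℝ E (· + 1))} =
      Label.relabel (· + 1) (configLabel δ ε Y {x | x ∈ l}) := by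
  have himage : {x | x ∈ l.map (LinearMap.funLeft ℝ E (· + 1))} =
      (· ∘ Equiv.addRight (1 : ZMod p)) '' {x | x ∈ l} := by
    ext x
    exact List.mem_map
  rw [himage]
  exact configLabel_image_comp (Equiv.addRight 1) (fun x j => congrFun (hY x) j) _

lemma IsFullFlag.map_configLabel_mem [SeminormedAddCommGroup E] [NormedSpace ℝ E] {α : Type*}
    [Fintype α] {C : Set (α → E)} {δ ε η : ℝ}
    {Y : {x : α → E // Function.Injective x} → ι → α → ℝ}
    (hgood : ∀ s ⊆ C, s.Nonempty → (∀ x ∈ s, ∀ y ∈ s, dist x y ≤ η) →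
      configLabel δ ε Y s ∈ Label.good ι α) {l : List (α → E)} (hl : l ∈ fineSimplices C η)
    {L : List (List (α → E))} (hL : IsFullFlag l L) :
    L.map (fun s => configLabel δ ε Y {x | x ∈ s}) ∈
      {t | (∀ b ∈ t, b ∈ Label.good ι α) ∧ t.Pairwise (· ≥ ·)} := by
  refine ⟨List.forall_mem_map.mpr fun s hs => ?_,
    List.pairwise_map.mpr (hL.pairwise.imp fun hts => configLabel_mono hts.subset)⟩
  obtain ⟨hsl, hs0⟩ := hL.mem s hs
  exact hgood _ (fun x hx => hl.1 (subset_convexHull ℝ _ (hsl.subset hx)))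
    (List.exists_mem_of_ne_nil s hs0) fun x hx y hy => hl.2 x (hsl.subset hx) y (hsl.subset hy)

variable [Fintype ι]

theorem exists_forall_apply_eq_of_card_lt_finrank [NormedAddCommGroup E] [NormedSpace ℝ E]
    [FiniteDimensional ℝ E] (hp : p.Prime) (hι : Fintype.card ι < Module.finrank ℝ E)
    {Y : {x : ZMod p → E // Function.Injective x} → ι → ZMod p → ℝ} (hYc : Continuous Y)
    (hY : ∀ x, Y (configShift x) = fun j k => Y x j (k + 1)) :
    ∃ x, ∀ j i k, Y x j i = Y x j k := by
  by_contra! hYne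
  have := Fact.mk hp
  let M := Fintype.card ι * (Nat.card (ZMod p) - 1) + (Nat.card (ZMod p) - 2)
  have hM : M + 1 ≤ (p - 1) * Module.finrank ℝ E := by
    have hmul := Nat.mul_le_mul_left (p - 1) hι
    rw [Nat.succ_eq_add_one, mul_add_one, mul_comm] at hmul
    have := hp.two_le
    simp only [M, Nat.card_zmod]
    omega
  obtain ⟨C, hC, hCne, hres⟩ :=
    ListChain.exists_isCompact_nonconstant_forall_exists_isResolutionImage (K := ZMod p) hM
  obtain ⟨δ, ε, η, hη, hgood⟩ := exists_configLabel_mem_good hC hCne hYc hYne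
  obtain ⟨e, he⟩ := hres η hη
  have hiter : (Label.relabel (· + 1) : Label ι (ZMod p) → Label ι (ZMod p))^[p] = id := by
    rw [Label.iterate_relabel, iterate_add_one_self]
    ext (A | s) <;> rfl
  refine ListChain.not_isResolutionImage hp (ZMod.natCast_self p) hiter
    (fun b hb => ⟨Label.relabel_mem_good (Equiv.addRight 1) hb, Label.relabel_add_one_ne hp hb⟩)
    Label.strictMonoOn_rank (fun b hb => Label.rank_lt hb) _
    (he.flagMap (a := fun s => configLabel δ ε Y {x | x ∈ s})
      (configLabel_map_funLeft_add_one hY) fun l hl _ L hL => ?_)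
  exact hL.map_configLabel_mem hgood hl

theorem no_equivariant_map_config_to_complement_general [AddCommGroup E] [Module ℝ E]
    [TopologicalSpace E] [ContinuousAdd E] [ContinuousSMul ℝ E] (hp : p.Prime)
    (hι : Fintype.card ι < Module.rank ℝ E) :
    ¬ ∃ h : {f : ZMod p → E // Function.Injective f} → (ι → ZMod p → ℝ),
      Continuous h ∧
      (∀ x, ∃ i : ι, ∃ k : ZMod p, h x i k ≠ h x i 0) ∧
      (∀ x, h (configShift x) = fun i k => h x i (k + 1)) := by
  rintro ⟨h, hcont, hne, hshift⟩
  obtain ⟨φ, hφ⟩ : ∃ φ : (Fin (Fintype.card ι + 1) → ℝ) →ₗ[ℝ] E, Function.Injective φ :=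
    Module.le_rank_iff_exists_linearMap.mp (by exact_mod_cast Order.succ_le_of_lt hι)
  let Φ (x : {f : ZMod p → Fin (Fintype.card ι + 1) → ℝ // Function.Injective f}) :
    {f : ZMod p → E // Function.Injective f} := ⟨φ ∘ x.1, hφ.comp x.2⟩
  have hΦ : Continuous Φ := Continuous.subtype_mk (continuous_pi fun k =>
    φ.continuous_on_pi.comp ((continuous_apply k).comp continuous_subtype_val)) _
  obtain ⟨x, hx⟩ := exists_forall_apply_eq_of_card_lt_finrank hp (by simp)
    (hcont.comp hΦ) fun x => hshift (Φ x)
  obtain ⟨i, k, hik⟩ := hne (Φ x)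
  exact hik (hx i k 0)

end CyclicShift

/-- For `p` an odd prime and `d > r ≥ 1` there is no `ℤ/p`-equivariant continuous map
`F(ℝᵈ, p) → (ℝᵖ)ʳ ∖ Δʳ`. -/
theorem no_equivariant_map_config_to_complement
    (p d r : ℕ) (hp : p.Prime) (hodd : Odd p) (hd : 1 ≤ d) (hr : 1 ≤ r) (hdr : d > r) :
    ¬ ∃ h : {f : ZMod p → EuclideanSpace ℝ (Fin d) // Function.Injective f} →
        (Fin r → ZMod p → ℝ),
      Continuous h ∧
      (∀ x, ∃ i : Fin r, ∃ k : ZMod p, h x i k ≠ h x i 0) ∧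
      (∀ x, h (configShift x) = fun i k => h x i (k + 1)) :=
  no_equivariant_map_config_to_complement_general hp (by simpa [← Module.finrank_eq_rank] using hdr)
end

section
/- Let p be an odd prime and d ≥ 1. If p ≤ 2d + 1 and (p−1)²/2 is not of the form jd + 1 for any j = 1, 2, …, p−1, then the pair (d, p) is admissible: for every continuous injective map f : Sᵈ → ℝ^{d+1} and every choice of (p−1)/2 metrics ρ₁, …, ρ_{(p−1)/2} on ℝ^{d+1}, each inducing the standard Euclidean topology, there exist p distinct points x₀, x₁, …, x_{p−1} ∈ Sᵈ, indexed by 𝔽_p, such that for every j = 1, …, (p−1)/2: ρⱼ(f(x₀), f(x_j)) = ρⱼ(f(x_j), f(x_{2j})) = ⋯ = ρⱼ(f(x_{(p−1)j}), f(x₀)). -/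
/-- `ρ` is a metric on `E` that induces the (given) standard topology of `E`. -/
def IsMetricEquivToStd {E : Type*} [TopologicalSpace E] (ρ : E → E → ℝ) : Prop :=
  (∀ x y, ρ x y = ρ y x) ∧
  (∀ x y, ρ x y = 0 ↔ x = y) ∧
  (∀ x y z, ρ x z ≤ ρ x y + ρ y z) ∧
  (∀ s : Set E, IsOpen s ↔ ∀ x ∈ s, ∃ ε > 0, {y | ρ x y < ε} ⊆ s)

/-!
Suppose no such configuration exists. Labels are pairs of a color in a `d`-element set `C` and a
residue modulo `p`, and the sets of labels that miss a residue of every color are the simplices of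
the `d`-fold join of the boundaries of `(p - 1)`-simplices, a sphere of dimension `d (p - 1) - 1` on
which `ℤ/p` acts by shifting residues. Collapsing the boundary of a cube to a point of the sphere
attaches a configuration of `p` points to every point of the cube `[0, 1] ^ (C × ℤ/p)`. Recording a
color in which the distances oscillate, and where they are maximal, labels the lattice points of a
fine grid, compatibly with the action at the height `r` of half of the cube, in such a way that grid
cells have simplices as label sets.

This is impossible. A ladder of cochains climbing the periodic resolution of `ℤ` over `ℤ/p` detects
the join: its top cochain `η` evaluates to `1`, up to a power of `σ - 1` for a generator `σ` of the
action, both on labels and, by equivariance, after pulling it back to the outer faces at height `r`.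
As the labels form a sphere, `η` is closed for dimension reasons, so the pullbacks to the outer
faces at heights `r` and `m` are cohomologous; but at height `m` the faces are identified or
degenerate, because there a point of the configuration has collapsed to the pole, and the pullback
is a coboundary, on which the evaluation vanishes.
-/

namespace AdmissiblePair

open Finset

/-- Cochains of degree `n - 1` on the full simplex with vertex set `X`: functions of the ordered
`n`-tuples of vertices, repetitions allowed. -/
abbrev Cochain (X : Type*) (n : ℕ) (K : Type*) : Type _ := (Fin n → X) → K

section Coboundary

variable {K : Type*} [CommRing K] {X : Type*} {n : ℕ}

/-- The alternating sum over the entries `t k` of a tuple, each paired with the face of the tuple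
opposite to it. -/
def faceSum (f : X → Cochain X n K) : Cochain X (n + 1) K :=
  fun t => ∑ k : Fin (n + 1), (-1) ^ (k : ℕ) * f (t k) (t ∘ k.succAbove)

/-- The simplicial coboundary of a cochain. -/
def cobd (η : Cochain X n K) : Cochain X (n + 1) K :=
  faceSum fun _ => η

theorem faceSum_congr {f g : X → Cochain X n K} {t : Fin (n + 1) → X}
    (h : ∀ k, f (t k) (t ∘ k.succAbove) = g (t k) (t ∘ k.succAbove)) :
    faceSum f t = faceSum g t := by
  simp only [faceSum, h]

theorem faceSum_add (f g : X → Cochain X n K) : faceSum (f + g) = faceSum f + faceSum g := by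
  ext t
  simp [faceSum, mul_add, sum_add_distrib]

theorem faceSum_sub (f g : X → Cochain X n K) : faceSum (f - g) = faceSum f - faceSum g := by
  ext t
  simp [faceSum, mul_sub, sum_sub_distrib]

theorem cobd_add (η θ : Cochain X n K) : cobd (η + θ) = cobd η + cobd θ :=
  faceSum_add _ _

theorem cobd_sub (η θ : Cochain X n K) : cobd (η - θ) = cobd η - cobd θ :=
  faceSum_sub _ _

/-- The involution on ordered pairs of removals from a tuple that exchanges the order of the two
removals; `(k, l)` removes the entry `k` and then the entry `l` of what is left. -/
def removalSwap (q : Fin (n + 2) × Fin (n + 1)) : Fin (n + 2) × Fin (n + 1) :=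
  (q.1.succAbove q.2, q.2.predAbove q.1)

theorem removalSwap_involutive : Function.Involutive (removalSwap (n := n)) := fun q => by
  simp [removalSwap, Fin.succAbove_succAbove_predAbove, Fin.predAbove_predAbove_succAbove]

theorem faceSum_faceSum_eq_zero {f : X → X → Cochain X n K} (hf : ∀ x y, f x y = f y x) :
    faceSum (fun x => faceSum (f x)) = 0 := by
  ext t
  simp only [faceSum, mul_sum, Pi.zero_apply]
  rw [← Fintype.sum_prod_type']
  refine sum_involution (fun q _ => removalSwap q) (fun ⟨k, l⟩ _ => ?_)
    (fun q _ _ h => Fin.succAbove_ne q.1 q.2 (congrArg Prod.fst h)) (fun _ _ => mem_univ _)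
    fun q _ => removalSwap_involutive q
  have hface : t ∘ (k.succAbove l).succAbove ∘ (l.predAbove k).succAbove =
      t ∘ k.succAbove ∘ l.succAbove := by
    ext i
    simp [Fin.succAbove_succAbove_succAbove_predAbove]
  simp only [removalSwap, Function.comp_assoc, hface, Function.comp_apply, ← mul_assoc, ← pow_add,
    Fin.neg_one_pow_succAbove_add_predAbove, Fin.succAbove_succAbove_predAbove, hf (t k)]
  ring

theorem faceSum_faceSum_comm (f : X → X → Cochain X n K) :
    faceSum (fun x => faceSum (f x)) = -faceSum fun x => faceSum fun y => f y x := by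
  have h : faceSum (fun x => faceSum (f x + fun y => f y x)) = 0 :=
    faceSum_faceSum_eq_zero fun x y => add_comm _ _
  simp only [faceSum_add] at h
  exact eq_neg_of_add_eq_zero_left ((faceSum_add _ _).symm.trans h)

theorem cobd_cobd (η : Cochain X n K) : cobd (cobd η) = 0 :=
  faceSum_faceSum_eq_zero fun _ _ => rfl

end Coboundary

section Alternating

variable {K : Type*} [CommRing K] {X : Type*} {n : ℕ}

/-- A cochain is alternating if exchanging two adjacent entries changes the sign. -/
def IsAlt (η : Cochain X n K) : Prop :=
  ∀ i j : Fin n, (i : ℕ) + 1 = j → ∀ t, η (t ∘ Equiv.swap i j) = -η t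

theorem IsAlt.of_subsingleton [Subsingleton (Fin n)] (η : Cochain X n K) : IsAlt η :=
  fun i j hij => absurd hij (by simp [Subsingleton.elim i j])

theorem IsAlt.sub {η θ : Cochain X n K} (hη : IsAlt η) (hθ : IsAlt θ) : IsAlt (η - θ) :=
  fun i j hij t => by rw [Pi.sub_apply, Pi.sub_apply, hη i j hij, hθ i j hij]; ring

theorem val_add_one_eq_of_succAbove {i j k : Fin (n + 1)} {i' j' : Fin n}
    (hij : (i : ℕ) + 1 = j) (hi : k.succAbove i' = i) (hj : k.succAbove j' = j) :
    (i' : ℕ) + 1 = j' := by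
  grind [Fin.succAbove]

theorem swap_comp_succAbove {i j : Fin (n + 1)} (hij : (i : ℕ) + 1 = j) :
    Equiv.swap i j ∘ i.succAbove = j.succAbove := by
  ext x
  simp only [Function.comp_apply, Equiv.swap_apply_def]
  grind [Fin.succAbove]

theorem IsAlt.faceSum {f : X → Cochain X n K} (hf : ∀ x, IsAlt (f x)) : IsAlt (faceSum f) := by
  intro i j hij t
  simp only [AdmissiblePair.faceSum, ← sum_neg_distrib]
  refine Fintype.sum_equiv (Equiv.swap i j) _ _ fun k => ?_
  rw [Function.comp_apply, Function.comp_assoc]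
  rcases eq_or_ne k i with rfl | hki
  · rw [Equiv.swap_apply_left, swap_comp_succAbove hij, ← hij, pow_succ]
    ring
  rcases eq_or_ne k j with rfl | hkj
  · have hcomp : Equiv.swap i k ∘ k.succAbove = i.succAbove := by
      rw [← swap_comp_succAbove hij, ← Function.comp_assoc]
      ext x
      simp
    rw [Equiv.swap_apply_right, hcomp, ← hij, pow_succ]
    ring
  · obtain ⟨i', hi'⟩ := Fin.exists_succAbove_eq (Ne.symm hki)
    obtain ⟨j', hj'⟩ := Fin.exists_succAbove_eq (Ne.symm hkj)
    have hcomp : Equiv.swap i j ∘ k.succAbove = k.succAbove ∘ Equiv.swap i' j' := by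
      rw [← hi', ← hj']
      exact Function.Injective.swap_comp Fin.succAbove_right_injective i' j'
    rw [Equiv.swap_apply_of_ne_of_ne hki hkj, hcomp, ← Function.comp_assoc,
      hf _ _ _ (val_add_one_eq_of_succAbove hij hi' hj'), mul_neg]

theorem IsAlt.cobd {η : Cochain X n K} (hη : IsAlt η) : IsAlt (cobd η) :=
  IsAlt.faceSum fun _ => hη

theorem IsAlt.comp_perm {η : Cochain X n K} (hη : IsAlt η) (σ : Equiv.Perm (Fin n))
    (t : Fin n → X) : η (t ∘ σ) = ((Equiv.Perm.sign σ : ℤ) : K) * η t := by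
  obtain _ | n := n
  · simp [Subsingleton.elim σ 1]
  have hσ : σ ∈ Submonoid.closure (Set.range fun i : Fin n => Equiv.swap i.castSucc i.succ) :=
    Equiv.Perm.mclosure_swap_castSucc_succ n ▸ Submonoid.mem_top σ
  induction hσ using Submonoid.closure_induction generalizing t with
  | mem σ hσ =>
    obtain ⟨i, rfl⟩ := hσ
    rw [hη _ _ (by simp), Equiv.Perm.sign_swap Fin.castSucc_lt_succ.ne]
    simp
  | one => simp
  | mul σ τ _ _ hσ hτ =>
    rw [Equiv.Perm.coe_mul, ← Function.comp_assoc, hτ, hσ, Equiv.Perm.sign_mul]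
    push_cast
    ring

theorem IsAlt.eq_zero [NoZeroDivisors K] [NeZero (2 : K)] {η : Cochain X n K} (hη : IsAlt η)
    {t : Fin n → X} (ht : ¬Function.Injective t) : η t = 0 := by
  obtain ⟨i, j, hij, hne⟩ := Function.not_injective_iff.1 ht
  have hswap := hη.comp_perm (Equiv.swap i j) t
  rw [Equiv.Perm.sign_swap hne, Equiv.comp_swap_eq_update, hij, Function.update_eq_self, ← hij,
    Function.update_eq_self] at hswap
  have htwo : 2 * η t = 0 := by
    push_cast at hswap
    linear_combination hswap
  exact (mul_eq_zero.1 htwo).resolve_left two_ne_zero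

end Alternating

section KuhnTriangulation

variable {K : Type*} [CommRing K] {X : Type*} {n : ℕ}

/-- Insertion of a point in front of a cochain: the contraction of the simplex onto `v`. -/
def insertFront (v : X) : Cochain X (n + 1) K →ₗ[K] Cochain X n K :=
  LinearMap.funLeft K K fun t => Fin.cons v t

theorem insertFront_apply (v : X) (η : Cochain X (n + 1) K) (t : Fin n → X) :
    insertFront v η t = η (Fin.cons v t) := rfl

theorem insertFront_cobd (v : X) (η : Cochain X (n + 1) K) :
    insertFront v (cobd η) = η - cobd (insertFront v η) := by
  ext t
  have hface (k : Fin (n + 1)) : (Fin.cons v t : Fin (n + 2) → X) ∘ k.succ.succAbove =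
      Fin.cons v (t ∘ k.succAbove) := by
    ext i
    refine Fin.cases ?_ (fun i => ?_) i <;> simp
  simp only [insertFront_apply, cobd, faceSum, Pi.sub_apply, Fin.sum_univ_succ (n := n + 1), hface,
    Fin.val_succ, pow_succ, mul_neg_one, neg_mul, sum_neg_distrib, sub_eq_add_neg]
  simp

variable {V : Type*} [AddCommMonoid V]

/-- The sum of a cochain over Kuhn's triangulation of the cube at `v` spanned by `t`: the
simplices starting with the edge `t k` form the cone with apex `v` over the facet at `v + t k`. -/
def cubeSum : (n : ℕ) → Cochain V (n + 1) K → V → Cochain V n K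
  | 0, η, v => fun _ => η fun _ => v
  | n + 1, η, v => faceSum fun x => cubeSum n (insertFront v η) (v + x)

/-- The vertex sequences of the simplices of Kuhn's triangulation. -/
def IsKuhnPath : (n : ℕ) → V → (Fin n → V) → (Fin (n + 1) → V) → Prop
  | 0, v, _, x => x = fun _ => v
  | n + 1, v, t, x => ∃ k, ∃ y, x = Fin.cons v y ∧ IsKuhnPath n (v + t k) (t ∘ k.succAbove) y

theorem IsKuhnPath.exists_eq {v : V} {t : Fin n → V} {x : Fin (n + 1) → V}
    (h : IsKuhnPath n v t x) (i : Fin (n + 1)) :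
    ∃ c : Fin n → ℕ, (∀ s, c s ≤ 1) ∧ x i = v + ∑ s, c s • t s := by
  induction n generalizing v with
  | zero => exact ⟨fun _ => 0, by simp, by simp [show x = fun _ => v from h]⟩
  | succ n ih =>
    obtain ⟨k, y, rfl, hy⟩ := h
    refine Fin.cases ⟨fun _ => 0, by simp, by simp⟩ (fun i => ?_) i
    obtain ⟨c, hc, hyc⟩ := ih hy i
    refine ⟨k.insertNth 1 c, fun s => ?_, ?_⟩
    · refine Fin.succAboveCases k ?_ (fun s => ?_) s <;> simp [hc]
    · rw [Fin.sum_univ_succAbove _ k]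
      simp [hyc, add_assoc]

theorem IsKuhnPath.exists_step {v : V} {t : Fin n → V} {x : Fin (n + 1) → V}
    (h : IsKuhnPath n v t x) (s : Fin n) : ∃ i : Fin n, x i.succ = x i.castSucc + t s := by
  induction n generalizing v with
  | zero => exact s.elim0
  | succ n ih =>
    obtain ⟨k, y, rfl, hy⟩ := h
    refine Fin.succAboveCases k ?_ (fun s => ?_) s
    · refine ⟨0, ?_⟩
      obtain _ | n := n
      · simp [show y = fun _ => v + t k from hy]
      · obtain ⟨_, _, rfl, _⟩ := hy
        simp
    · obtain ⟨i, hi⟩ := ih hy s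
      exact ⟨i.succ, by simpa using hi⟩

theorem cubeSum_congr {η θ : Cochain V (n + 1) K} {v : V} {t : Fin n → V}
    (h : ∀ x, IsKuhnPath n v t x → η x = θ x) : cubeSum n η v t = cubeSum n θ v t := by
  induction n generalizing v with
  | zero => exact h _ rfl
  | succ n ih => exact faceSum_congr fun k => ih fun y hy => h _ ⟨k, y, rfl, hy⟩

theorem cubeSum_sub (η θ : Cochain V (n + 1) K) (v : V) :
    cubeSum n (η - θ) v = cubeSum n η v - cubeSum n θ v := by
  induction n generalizing v with
  | zero => rfl
  | succ n ih =>
    simp only [cubeSum, map_sub, ih]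
    exact faceSum_sub _ _

theorem IsAlt.cubeSum (η : Cochain V (n + 1) K) (v : V) : IsAlt (cubeSum n η v) := by
  induction n generalizing v with
  | zero => exact IsAlt.of_subsingleton _
  | succ n ih => exact IsAlt.faceSum fun x => ih _ _

theorem cubeSum_cobd (η : Cochain V (n + 1) K) (v : V) :
    cubeSum (n + 1) (cobd η) v = faceSum fun x => cubeSum n η (v + x) - cubeSum n η v := by
  induction n generalizing v with
  | zero =>
    ext t
    simp only [cubeSum, insertFront_cobd]
    refine faceSum_congr fun k => ?_
    have hvertex (t' : Fin 0 → V) : insertFront v η t' = η fun _ => v :=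
      congrArg η (funext fun i => by rw [Fin.fin_one_eq_zero i]; rfl)
    simp [cobd, faceSum, hvertex]
  | succ n ih =>
    set ξ : Cochain V (n + 1) K := insertFront v η with hξ
    have hsymm : faceSum (fun x => faceSum fun y => cubeSum n ξ (v + x + y)) = 0 :=
      faceSum_faceSum_eq_zero fun x y => by rw [add_right_comm]
    have hcone : (faceSum fun x => cubeSum (n + 1) (cobd ξ) (v + x)) =
        faceSum fun _ => cubeSum (n + 1) η v :=
      calc (faceSum fun x => cubeSum (n + 1) (cobd ξ) (v + x))
          = faceSum fun x => (faceSum fun y => cubeSum n ξ (v + x + y)) -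
              faceSum fun _ => cubeSum n ξ (v + x) := by
            simp only [ih]
            exact congrArg faceSum (funext fun x => faceSum_sub _ _)
        _ = -faceSum fun x => faceSum fun _ => cubeSum n ξ (v + x) := by
            rw [← zero_sub, ← hsymm]
            exact faceSum_sub _ _
        _ = faceSum fun _ => cubeSum (n + 1) η v := by
            rw [faceSum_faceSum_comm, neg_neg]
            rfl
    calc cubeSum (n + 2) (cobd η) v
        = faceSum fun x => cubeSum (n + 1) η (v + x) - cubeSum (n + 1) (cobd ξ) (v + x) := by
          simp only [← cubeSum_sub, hξ, ← insertFront_cobd]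
          rfl
      _ = (faceSum fun x => cubeSum (n + 1) η (v + x)) -
            faceSum fun x => cubeSum (n + 1) (cobd ξ) (v + x) := faceSum_sub _ _
      _ = faceSum fun x => cubeSum (n + 1) η (v + x) - cubeSum (n + 1) η v := by
          rw [hcone]
          exact (faceSum_sub _ _).symm

/-- The sum of a cochain over the Kuhn triangulations of all cells of an `m × ⋯ × m` grid of cubes
at `v` spanned by `t`. -/
def gridSum (m : ℕ) (η : Cochain V (n + 1) K) (v : V) : Cochain V n K :=
  fun t => ∑ u : Fin n → Fin m, cubeSum n η (v + ∑ s, (u s : ℕ) • t s) t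

theorem gridSum_sub (m : ℕ) (η θ : Cochain V (n + 1) K) (v : V) :
    gridSum m (η - θ) v = gridSum m η v - gridSum m θ v := by
  ext t
  simp only [gridSum, cubeSum_sub, Pi.sub_apply, sum_sub_distrib]

theorem IsAlt.gridSum (m : ℕ) (η : Cochain V (n + 1) K) (v : V) : IsAlt (gridSum m η v) := by
  intro i j hij t
  simp only [AdmissiblePair.gridSum, ← sum_neg_distrib]
  refine Fintype.sum_equiv ((Equiv.swap i j).arrowCongr (Equiv.refl _)) _ _ fun u => ?_
  rw [IsAlt.cubeSum η _ i j hij]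
  congr 3
  refine Fintype.sum_equiv (Equiv.swap i j) _ _ fun s => ?_
  simp [Equiv.arrowCongr]

theorem gridSum_congr {m : ℕ} {η θ : Cochain V (n + 1) K} {v : V} {t : Fin n → V}
    (h : ∀ (u : Fin n → Fin m) (x : Fin (n + 1) → V),
      IsKuhnPath n (v + ∑ s, (u s : ℕ) • t s) t x → η x = θ x) :
    gridSum m η v t = gridSum m θ v t :=
  sum_congr rfl fun u _ => cubeSum_congr (h u)

theorem sum_insertNth_smul {m : ℕ} (t : Fin (n + 1) → V) (k : Fin (n + 1)) (a : Fin m)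
    (u : Fin n → Fin m) :
    ∑ s, (k.insertNth (α := fun _ => Fin m) a u s : ℕ) • t s =
      (a : ℕ) • t k + ∑ s, (u s : ℕ) • (t ∘ k.succAbove) s := by
  rw [Fin.sum_univ_succAbove _ k]
  simp

theorem gridSum_cobd (m : ℕ) (η : Cochain V (n + 1) K) (v : V) :
    gridSum m (cobd η) v = faceSum fun x => gridSum m η (v + m • x) - gridSum m η v := by
  ext t
  simp only [gridSum, cubeSum_cobd, faceSum]
  rw [sum_comm]
  refine sum_congr rfl fun k _ => ?_
  rw [← mul_sum, ← (Fin.insertNthEquiv (fun _ => Fin m) k).sum_comp, Fintype.sum_prod_type,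
    sum_comm, Pi.sub_apply]
  simp only [gridSum, ← sum_sub_distrib]
  congr 1
  refine sum_congr rfl fun u _ => ?_
  let layer : ℕ → K := fun a =>
    cubeSum n η (v + a • t k + ∑ s, (u s : ℕ) • (t ∘ k.succAbove) s) (t ∘ k.succAbove)
  calc _ = ∑ a : Fin m, (layer (a + 1) - layer a) := by
        simp only [Fin.insertNthEquiv_apply, sum_insertNth_smul, Pi.sub_apply, layer, succ_nsmul,
          add_assoc, add_comm, add_left_comm]
    _ = layer m - layer 0 := by
        rw [Fin.sum_univ_eq_sum_range fun a => layer (a + 1) - layer a, sum_range_sub]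
    _ = _ := by simp only [layer, zero_smul, add_zero]

end KuhnTriangulation

section Shift

variable {K : Type*} [CommRing K] {p : ℕ} {C : Type*} {n : ℕ}

/-- The cyclic shift by `i` of a label: labels are pairs of a color and a residue. -/
def shift (i : ZMod p) (l : C × ZMod p) : C × ZMod p :=
  (l.1, l.2 + i)

theorem shift_zero : (shift 0 : C × ZMod p → C × ZMod p) = id := by
  ext l <;> simp [shift]

theorem shift_comp_shift_comp {α : Type*} (i j : ZMod p) (t : α → C × ZMod p) :
    shift i ∘ shift j ∘ t = shift (j + i) ∘ t := by
  ext s <;> simp [shift, add_assoc]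

/-- The action of a cyclic shift on cochains. -/
def shiftOp (i : ZMod p) : Module.End K (Cochain (C × ZMod p) n K) :=
  LinearMap.funLeft K K (shift i ∘ ·)

@[simp]
theorem shiftOp_apply (i : ZMod p) (η : Cochain (C × ZMod p) n K) (t : Fin n → C × ZMod p) :
    shiftOp i η t = η (shift i ∘ t) := rfl

/-- The operator `σ - 1`, where `σ` generates the action of the cyclic group on cochains. -/
def diffOp : Module.End K (Cochain (C × ZMod p) n K) :=
  shiftOp 1 - 1

theorem diffOp_apply (η : Cochain (C × ZMod p) n K) (t : Fin n → C × ZMod p) :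
    diffOp η t = η (shift 1 ∘ t) - η t := rfl

theorem diffOp_pow_diffOp_pow (i j : ℕ) (η : Cochain (C × ZMod p) n K) :
    (diffOp ^ i) ((diffOp ^ j) η) = (diffOp ^ (i + j)) η := by
  rw [pow_add, Module.End.mul_apply]

theorem shiftOp_one_pow (j : ℕ) :
    (shiftOp 1 : Module.End K (Cochain (C × ZMod p) n K)) ^ j = shiftOp (j : ZMod p) := by
  induction j with
  | zero => ext η t; simp [shift_zero]
  | succ j ih =>
    ext η t
    simp [pow_succ, ih, shift_comp_shift_comp]

theorem cobd_diffOp_pow (j : ℕ) (η : Cochain (C × ZMod p) n K) :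
    cobd ((diffOp ^ j) η) = (diffOp ^ j) (cobd η) := by
  induction j generalizing η with
  | zero => rfl
  | succ j ih =>
    rw [pow_succ, pow_succ, Module.End.mul_apply, Module.End.mul_apply, ih]
    exact congrArg _ (cobd_sub (shiftOp 1 η) η)

theorem diffOp_pow_congr {P : (Fin n → C × ZMod p) → Prop} (hP : ∀ t, P t → P (shift 1 ∘ t))
    {η θ : Cochain (C × ZMod p) n K} (h : ∀ t, P t → η t = θ t) (j : ℕ) :
    ∀ t, P t → (diffOp ^ j) η t = (diffOp ^ j) θ t := by
  induction j with
  | zero => exact h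
  | succ j ih =>
    intro t ht
    rw [pow_succ', Module.End.mul_apply, Module.End.mul_apply, diffOp_apply, diffOp_apply,
      ih t ht, ih _ (hP t ht)]

theorem IsAlt.diffOp_pow {η : Cochain (C × ZMod p) n K} (hη : IsAlt η) (j : ℕ) :
    IsAlt ((diffOp ^ j) η) := by
  induction j with
  | zero => exact hη
  | succ j ih =>
    rw [pow_succ', Module.End.mul_apply]
    exact IsAlt.sub (fun i j hij t => ih i j hij (shift 1 ∘ t)) ih

theorem sum_zmod_eq_sum_range [NeZero p] {M : Type*} [AddCommMonoid M] (g : ZMod p → M) :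
    ∑ i, g i = ∑ j ∈ range p, g j :=
  sum_nbij' (fun i => i.val) (fun j => (j : ZMod p)) (fun i _ => by simp [ZMod.val_lt])
    (fun _ _ => mem_univ _) (fun i _ => by simp)
    (fun j hj => ZMod.val_cast_of_lt (by simpa using hj)) (fun i _ => by simp)

variable [hp : Fact p.Prime] [CharP K p]

theorem diffOp_pow_pred :
    (diffOp : Module.End K (Cochain (C × ZMod p) n K)) ^ (p - 1) =
      ∑ j ∈ range p, shiftOp 1 ^ j := by
  have hpoly : (Polynomial.X - 1 : Polynomial K) ^ (p - 1) = ∑ j ∈ range p, Polynomial.X ^ j := by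
    rw [← Polynomial.cyclotomic_prime, ← Polynomial.cyclotomic_one,
      ← Polynomial.cyclotomic_mul_prime_eq_pow_of_not_dvd K hp.out.not_dvd_one, one_mul]
  simpa [diffOp] using congrArg
    (Polynomial.aeval (shiftOp 1 : Module.End K (Cochain (C × ZMod p) n K))) hpoly

theorem diffOp_pow_pred_apply (η : Cochain (C × ZMod p) n K) (t : Fin n → C × ZMod p) :
    (diffOp ^ (p - 1)) η t = ∑ i, η (shift i ∘ t) := by
  simp [diffOp_pow_pred, shiftOp_one_pow, sum_zmod_eq_sum_range]

theorem diffOp_pow_card :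
    (diffOp : Module.End K (Cochain (C × ZMod p) n K)) ^ p = 0 := by
  rw [← mul_pow_sub_one hp.out.ne_zero, diffOp_pow_pred, diffOp, mul_geom_sum, shiftOp_one_pow,
    CharP.cast_eq_zero, sub_eq_zero]
  ext η t
  simp [shift_zero]

end Shift

section Nonfull

variable {p : ℕ} {C : Type*}

/-- A set of labels is nonfull if it misses a label of every color. The finite nonfull sets are
the simplices of the join, over all colors, of the boundaries of the simplices with vertex set
`ZMod p`. -/
def Nonfull (S : Set (C × ZMod p)) : Prop := ∀ a, ∃ i, (a, i) ∉ S

theorem Nonfull.mono {S T : Set (C × ZMod p)} (hT : Nonfull T) (h : S ⊆ T) : Nonfull S :=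
  fun a => (hT a).imp fun _ hi his => hi (h his)

theorem Nonfull.image_shift {S : Set (C × ZMod p)} (hS : Nonfull S) (j : ZMod p) :
    Nonfull (shift j '' S) := fun a => by
  obtain ⟨i, hi⟩ := hS a
  refine ⟨i + j, ?_⟩
  rintro ⟨⟨b, k⟩, hbk, h⟩
  obtain ⟨rfl, hk⟩ := Prod.mk.inj h
  exact hi (add_right_cancel hk ▸ hbk)

theorem Nonfull.range_shift_comp {n : ℕ} {t : Fin n → C × ZMod p} (ht : Nonfull (Set.range t))
    (j : ZMod p) : Nonfull (Set.range (shift j ∘ t)) :=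
  Set.range_comp (shift j) t ▸ ht.image_shift j

theorem nonfull_range_of_card_lt [NeZero p] [DecidableEq C] {n : ℕ} {t : Fin n → C × ZMod p}
    (ht : ∀ a, #{s | (t s).1 = a} < p) : Nonfull (Set.range t) := by
  by_contra h
  simp only [Nonfull, not_forall, not_exists, not_not] at h
  obtain ⟨a, ha⟩ := h
  choose s hs using ha
  refine (ht a).not_ge ?_
  calc p = #(univ : Finset (ZMod p)) := by rw [card_univ, ZMod.card]
    _ ≤ _ := card_le_card_of_injOn s (fun i _ => by simp [hs]) fun i _ j _ hij => by
      simpa [hs] using congrArg t hij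

theorem cobd_congr_nonfull {K : Type*} [CommRing K] {n : ℕ} {η θ : Cochain (C × ZMod p) n K}
    (h : ∀ t, Nonfull (Set.range t) → η t = θ t) {t : Fin (n + 1) → C × ZMod p}
    (ht : Nonfull (Set.range t)) : cobd η t = cobd θ t :=
  faceSum_congr fun _ => h _ (ht.mono (Set.range_comp_subset_range _ _))

theorem diffOp_pow_congr_nonfull {K : Type*} [CommRing K] {n : ℕ}
    {η θ : Cochain (C × ZMod p) n K} (h : ∀ t, Nonfull (Set.range t) → η t = θ t) (j : ℕ)
    {t : Fin n → C × ZMod p} (ht : Nonfull (Set.range t)) :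
    (diffOp ^ j) η t = (diffOp ^ j) θ t :=
  diffOp_pow_congr (fun _ h => h.range_shift_comp 1) h j t ht

variable [Fact p.Prime]

/-- The mean of a set of residues, which is `0` by convention if `p` divides its cardinality. -/
def mean (B : Finset (ZMod p)) : ZMod p := (∑ b ∈ B, b) * (#B : ZMod p)⁻¹

theorem mean_image_add {B : Finset (ZMod p)} (hne : B.Nonempty) (huniv : B ≠ univ) (i : ZMod p) :
    mean (B.image (· + i)) = mean B + i := by
  have hinj : Function.Injective (· + i) := add_left_injective i
  have hcard : (#B : ZMod p) ≠ 0 := by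
    rw [Ne, ZMod.natCast_eq_zero_iff]
    refine Nat.not_dvd_of_pos_of_lt hne.card_pos ?_
    simpa [ZMod.card] using B.card_lt_iff_ne_univ.2 huniv
  rw [mean, mean, card_image_of_injective _ hinj, sum_image hinj.injOn, sum_add_distrib,
    sum_const, nsmul_eq_mul]
  field_simp

variable [Nonempty C]

open Classical in
/-- The mean of the residues with which one chosen color occurs in a set of labels; a shift
equivariant function on nonempty nonfull sets. -/
noncomputable def residue (S : Set (C × ZMod p)) : ZMod p :=
  mean {i | (Classical.epsilon (· ∈ Prod.fst '' S), i) ∈ S}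

theorem residue_image_shift {S : Set (C × ZMod p)} (hne : S.Nonempty) (hS : Nonfull S)
    (i : ZMod p) : residue (shift i '' S) = residue S + i := by
  classical
  have hcolor : Prod.fst '' (shift i '' S) = Prod.fst '' S := by
    rw [← Set.image_comp]
    rfl
  obtain ⟨⟨a, j⟩, haj, ha⟩ := Classical.epsilon_spec (hne.image Prod.fst)
  rw [residue, residue, hcolor]
  simp only at ha
  rw [← ha, ← mean_image_add]
  · congr 1
    ext k
    simp [shift, ← eq_sub_iff_add_eq, sub_eq_add_neg]
  · exact ⟨j, by simpa using haj⟩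
  · obtain ⟨k, hk⟩ := hS a
    exact fun huniv => hk (by simpa using eq_univ_iff_forall.1 huniv k)

theorem residue_range_shift_comp {n : ℕ} {t : Fin (n + 1) → C × ZMod p}
    (ht : Nonfull (Set.range t)) (i : ZMod p) :
    residue (Set.range (shift i ∘ t)) = residue (Set.range t) + i := by
  rw [Set.range_comp, residue_image_shift (Set.range_nonempty t) ht]

end Nonfull

section Ladder

variable {K : Type*} [CommRing K] {p : ℕ} {C : Type*} {n : ℕ}

theorem sum_range_val_add_one [NeZero p] {M : Type*} [AddCommMonoid M] {f : ZMod p → M}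
    (hf : ∑ i, f i = 0) (c : ZMod p) :
    ∑ j ∈ range (c + 1).val, f j = ∑ j ∈ range c.val, f j + f c := by
  have hsucc : ∑ j ∈ range c.val, f j + f c = ∑ j ∈ range (c.val + 1), f j := by
    rw [sum_range_succ, ZMod.natCast_zmod_val]
  obtain h | h := (Nat.succ_le_of_lt c.val_lt).lt_or_eq
  · have hone : (1 : ZMod p).val = 1 := ZMod.val_one'' (by omega)
    rw [hsucc, ZMod.val_add_of_lt (by rwa [hone]), hone]
  · have hc : c + 1 = 0 := by
      rw [← ZMod.natCast_zmod_val c, ← Nat.cast_one, ← Nat.cast_add, ← Nat.succ_eq_add_one, h,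
        CharP.cast_eq_zero]
    rw [hsucc, ← Nat.succ_eq_add_one, h, ← sum_zmod_eq_sum_range, hf, hc, ZMod.val_zero,
      range_zero, sum_empty]

section

variable [Fact p.Prime]

theorem exists_diffOp_eq [Nonempty C] {η : Cochain (C × ZMod p) (n + 1) K} (hη : IsAlt η)
    (h : ∀ t, Nonfull (Set.range t) → ∑ i, η (shift i ∘ t) = 0) :
    ∃ ω : Cochain (C × ZMod p) (n + 1) K, IsAlt ω ∧
      ∀ t, Nonfull (Set.range t) → diffOp ω t = η t := by
  let κ (t : Fin (n + 1) → C × ZMod p) : ZMod p := residue (Set.range t)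
  refine ⟨fun t => ∑ j ∈ range (κ t).val, η (shift (j - κ t) ∘ t), fun i j hij t => ?_,
    fun t ht => ?_⟩
  · simp only [κ, EquivLike.range_comp, ← sum_neg_distrib]
    exact sum_congr rfl fun l _ => hη i j hij (shift _ ∘ t)
  · have hsum : ∑ j, η (shift (j - κ t) ∘ t) = 0 := by
      rw [← h t ht]
      exact (Equiv.subRight (κ t)).sum_comp fun i => η (shift i ∘ t)
    have hshift (j : ZMod p) : 1 + (j - (κ t + 1)) = j - κ t := by ring
    have hκ : κ (shift 1 ∘ t) = κ t + 1 := residue_range_shift_comp ht 1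
    simp only [diffOp_apply, hκ, shift_comp_shift_comp, hshift]
    rw [sum_range_val_add_one hsum, add_sub_cancel_left, sub_self, shift_zero, Function.id_comp]

theorem shift_comp_of_diffOp_eq_zero {η : Cochain (C × ZMod p) n K}
    (h : ∀ t, Nonfull (Set.range t) → diffOp η t = 0) {t : Fin n → C × ZMod p}
    (ht : Nonfull (Set.range t)) (i : ZMod p) : η (shift i ∘ t) = η t := by
  have hnat (j : ℕ) : η (shift (j : ZMod p) ∘ t) = η t := by
    induction j with
    | zero => simp [shift_zero]
    | succ j ih =>
      have hj := h _ (ht.range_shift_comp (j : ZMod p))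
      rwa [diffOp_apply, shift_comp_shift_comp, ih, sub_eq_zero, ← Nat.cast_succ] at hj
  simpa using hnat i.val

theorem exists_sum_shift_eq [Nonempty C] {η : Cochain (C × ZMod p) (n + 1) K} (hη : IsAlt η)
    (h : ∀ t, Nonfull (Set.range t) → diffOp η t = 0) :
    ∃ ω : Cochain (C × ZMod p) (n + 1) K, IsAlt ω ∧
      ∀ t, Nonfull (Set.range t) → ∑ i, ω (shift i ∘ t) = η t := by
  let κ (t : Fin (n + 1) → C × ZMod p) : ZMod p := residue (Set.range t)
  refine ⟨fun t => if κ t = 0 then η t else 0, fun i j hij t => ?_, fun t ht => ?_⟩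
  · simp only [κ, EquivLike.range_comp, hη i j hij t]
    split_ifs <;> simp
  · have hκ (i : ZMod p) : κ (shift i ∘ t) = κ t + i := residue_range_shift_comp ht i
    simp only [hκ, shift_comp_of_diffOp_eq_zero h ht, add_eq_zero_iff_neg_eq, sum_ite_eq, mem_univ,
      if_true]

end

/-- The exponent of `σ - 1` in the `k`-th differential of the periodic resolution of the cyclic
group of order `p` in characteristic `p`: the differentials alternate between `σ - 1` and the norm
`(σ - 1) ^ (p - 1)`. -/
def ladderExp (p k : ℕ) : ℕ := if Even k then 1 else p - 1

theorem ladderExp_add_two (k : ℕ) : ladderExp p (k + 2) = ladderExp p k := by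
  simp [ladderExp, Nat.even_add]

/-- The functional on cochains that is inverse to the climb along a ladder: it inserts the labels
of residue `0` with the colors `b k`, …, `b 1`, applies the differentials of the resolution in
between, and evaluates at `b 0`. -/
def evalAlong (b : ℕ → C) : (k : ℕ) → Cochain (C × ZMod p) (k + 1) K →ₗ[K] K
  | 0 => LinearMap.proj fun _ => (b 0, 0)
  | k + 1 => evalAlong b k ∘ₗ (diffOp ^ ladderExp p k) ∘ₗ insertFront (b (k + 1), (0 : ZMod p))

theorem evalAlong_succ (b : ℕ → C) (k : ℕ) (η : Cochain (C × ZMod p) (k + 2) K) :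
    evalAlong b (k + 1) η =
      evalAlong b k ((diffOp ^ ladderExp p k) (insertFront (b (k + 1), 0) η)) := rfl

theorem evalAlong_congr {b : ℕ → C} {k : ℕ} {η θ : Cochain (C × ZMod p) (k + 1) K}
    (h : ∀ t, (∀ s : Fin (k + 1), (t s).1 = b s.rev) → η t = θ t) :
    evalAlong b k η = evalAlong b k θ := by
  induction k with
  | zero => exact h (fun _ => (b 0, 0)) (by simp)
  | succ k ih =>
    refine ih fun t ht => diffOp_pow_congr
      (P := fun t : Fin (k + 1) → C × ZMod p => ∀ s : Fin (k + 1), (t s).1 = b s.rev)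
      (fun t ht => ht) (fun t ht => h _ ?_) _ t ht
    exact Fin.cases (by simp) (fun s => by simpa [Fin.rev_succ] using ht s)

variable [hp : Fact p.Prime]

theorem evalAlong_congr_nonfull [DecidableEq C] {b : ℕ → C} {k : ℕ}
    (hb : ∀ a, #{s : Fin (k + 1) | b s = a} < p) {η θ : Cochain (C × ZMod p) (k + 1) K}
    (h : ∀ t, Nonfull (Set.range t) → η t = θ t) : evalAlong b k η = evalAlong b k θ := by
  refine evalAlong_congr fun t ht => h t (nonfull_range_of_card_lt fun a => ?_)
  calc #{s | (t s).1 = a} = #{s : Fin (k + 1) | b s = a} :=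
        card_equiv Fin.revPerm fun s => by simp [ht]
    _ < p := hb a

theorem one_le_ladderExp (k : ℕ) : 1 ≤ ladderExp p k := by
  have := hp.out.two_le
  unfold ladderExp
  split_ifs <;> omega

theorem ladderExp_le (k : ℕ) : ladderExp p k ≤ p - 1 := by
  have := hp.out.two_le
  unfold ladderExp
  split_ifs <;> omega

theorem ladderExp_add_succ (k : ℕ) : ladderExp p k + ladderExp p (k + 1) = p := by
  have := hp.out.one_le
  by_cases h : Even k <;> simp [ladderExp, h, Nat.even_add_one] <;> omega

/-- A ladder of cochains `Ψ k` over nonfull tuples climbing the periodic resolution of the cyclic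
group: the norm of `Ψ 0` is the constant `1` and the coboundary of each rung is the differential of
the next. -/
structure IsLadder (Ψ : (k : ℕ) → Cochain (C × ZMod p) (k + 1) K) : Prop where
  norm_eq_one : ∀ t, Nonfull (Set.range t) → (diffOp ^ (p - 1)) (Ψ 0) t = 1
  cobd_eq : ∀ k t, Nonfull (Set.range t) → cobd (Ψ k) t = (diffOp ^ ladderExp p k) (Ψ (k + 1)) t

variable [CharP K p]

theorem diffOp_pow_eq_zero {e : ℕ} (he : p ≤ e) (η : Cochain (C × ZMod p) n K) :
    (diffOp ^ e) η = 0 := by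
  rw [pow_eq_zero_of_le he diffOp_pow_card, LinearMap.zero_apply]

theorem exists_diffOp_pow_eq [Nonempty C] (k : ℕ) {η : Cochain (C × ZMod p) (n + 1) K}
    (hη : IsAlt η)
    (h : ∀ t, Nonfull (Set.range t) → (diffOp ^ ladderExp p (k + 1)) η t = 0) :
    ∃ ω : Cochain (C × ZMod p) (n + 1) K, IsAlt ω ∧
      ∀ t, Nonfull (Set.range t) → (diffOp ^ ladderExp p k) ω t = η t := by
  by_cases hk : Even k
  · simp only [ladderExp, hk, Nat.even_add_one, not_true, if_true, if_false,
      diffOp_pow_pred_apply, pow_one] at h ⊢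
    exact exists_diffOp_eq hη h
  · simp only [ladderExp, hk, Nat.even_add_one, not_false_eq_true, if_true, if_false,
      diffOp_pow_pred_apply, pow_one] at h ⊢
    exact exists_sum_shift_eq hη h

variable (p C) in
theorem exists_norm_eq_one :
    ∃ ω : Cochain (C × ZMod p) 1 K, (diffOp ^ (p - 1)) ω = 1 := by
  refine ⟨fun t => if (t 0).2 = 0 then 1 else 0, ?_⟩
  ext t
  simp [diffOp_pow_pred_apply, shift, add_eq_zero_iff_neg_eq]

variable (K p C) in
theorem exists_isLadder [Nonempty C] :
    ∃ Ψ : (k : ℕ) → Cochain (C × ZMod p) (k + 1) K, (∀ k, IsAlt (Ψ k)) ∧ IsLadder Ψ := by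
  let P (k : ℕ) (ω : Cochain (C × ZMod p) (k + 1) K) : Prop :=
    IsAlt ω ∧ ∀ t, Nonfull (Set.range t) → (diffOp ^ ladderExp p (k + 1)) (cobd ω) t = 0
  have hstep (k : ℕ) (ω : {ω // P k ω}) : ∃ ω' : {ω' // P (k + 1) ω'},
      ∀ t, Nonfull (Set.range t) → cobd ω.1 t = (diffOp ^ ladderExp p k) ω'.1 t := by
    obtain ⟨ω', halt, heq⟩ := exists_diffOp_pow_eq k ω.2.1.cobd ω.2.2
    refine ⟨⟨ω', halt, fun t ht => ?_⟩, fun t ht => (heq t ht).symm⟩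
    rw [ladderExp_add_two, ← cobd_diffOp_pow, cobd_congr_nonfull heq ht, cobd_cobd]
    rfl
  choose next hnext using hstep
  obtain ⟨ω₀, hω₀⟩ := exists_norm_eq_one (K := K) p C
  have hP : P 0 ω₀ := by
    refine ⟨IsAlt.of_subsingleton (n := 1) _, fun t _ => ?_⟩
    rw [← cobd_diffOp_pow, zero_add, ladderExp, if_neg Nat.not_even_one, hω₀]
    simp [cobd, faceSum, Fin.sum_univ_two]
  let Ψ : (k : ℕ) → {ω // P k ω} := fun k => Nat.rec ⟨ω₀, hP⟩ next k
  exact ⟨fun k => (Ψ k).1, fun k => (Ψ k).2.1, fun t _ => congrFun hω₀ t,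
    fun k t ht => hnext k (Ψ k) t ht⟩

theorem evalAlong_cobd (b : ℕ → C) (k : ℕ) (η : Cochain (C × ZMod p) (k + 1) K) :
    evalAlong b (k + 1) (cobd η) = evalAlong b k ((diffOp ^ ladderExp p k) η) := by
  induction k with
  | zero =>
    have hconst : (diffOp ^ ladderExp p 0) (cobd (insertFront (b 1, 0) η)) = 0 := by
      ext t
      simp [ladderExp, cobd, faceSum, diffOp_apply,
        Subsingleton.elim ((shift 1 ∘ t) ∘ Fin.succ) (t ∘ Fin.succ)]
    rw [evalAlong_succ, insertFront_cobd, map_sub, hconst, sub_zero]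
  | succ k ih =>
    rw [evalAlong_succ, insertFront_cobd, map_sub, map_sub, ← cobd_diffOp_pow, ih,
      diffOp_pow_diffOp_pow, diffOp_pow_eq_zero (ladderExp_add_succ k).ge, map_zero, sub_zero]

theorem evalAlong_diffOp_pow_pred_cobd (b : ℕ → C) (k : ℕ) (η : Cochain (C × ZMod p) (k + 1) K) :
    evalAlong b (k + 1) ((diffOp ^ (p - 1)) (cobd η)) = 0 := by
  have hexp : p ≤ ladderExp p k + (p - 1) := by
    have := one_le_ladderExp (p := p) k
    omega
  rw [← cobd_diffOp_pow, evalAlong_cobd, diffOp_pow_diffOp_pow,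
    diffOp_pow_eq_zero hexp, map_zero]

theorem IsLadder.evalAlong_eq_one [DecidableEq C]
    {Ψ : (k : ℕ) → Cochain (C × ZMod p) (k + 1) K} (hΨ : IsLadder Ψ) {b : ℕ → C} {k : ℕ}
    (hb : ∀ a, #{s : Fin (k + 1) | b s = a} < p) :
    evalAlong b k ((diffOp ^ (p - 1)) (Ψ k)) = 1 := by
  induction k with
  | zero =>
    refine hΨ.norm_eq_one _ (nonfull_range_of_card_lt fun a => ?_)
    exact (card_filter_le _ _).trans_lt (by simpa using hp.out.one_lt)
  | succ k ih =>
    have hb' (a : C) : #{s : Fin (k + 1) | b s = a} < p :=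
      (card_le_card_of_injOn Fin.castSucc (fun s hs => by simpa using hs)
        (Fin.castSucc_injective _).injOn).trans_lt (hb a)
    have hexp := Nat.sub_add_cancel (ladderExp_le (p := p) k)
    have hcobd (t : Fin (k + 2) → C × ZMod p) (ht : Nonfull (Set.range t)) :
        (diffOp ^ (p - 1)) (Ψ (k + 1)) t = cobd ((diffOp ^ (p - 1 - ladderExp p k)) (Ψ k)) t := by
      rw [cobd_diffOp_pow, ← hexp, ← diffOp_pow_diffOp_pow, hexp]
      exact diffOp_pow_congr_nonfull (fun t ht => (hΨ.cobd_eq k t ht).symm) _ ht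
    rw [evalAlong_congr_nonfull hb hcobd, evalAlong_cobd, diffOp_pow_diffOp_pow,
      Nat.add_sub_cancel' (ladderExp_le k), ih hb']

end Ladder

section Naturality

variable {K : Type*} [CommRing K] {V W : Type*} [AddCommMonoid V] [AddCommMonoid W] {n : ℕ}

theorem cubeSum_comp {g : V → W} {t : Fin n → V} {t' : Fin n → W}
    (hg : ∀ x s, g (x + t s) = g x + t' s) (η : Cochain W (n + 1) K) (v : V) :
    cubeSum n η (g v) t' = cubeSum n (fun x => η (g ∘ x)) v t := by
  induction n generalizing v with
  | zero => rfl
  | succ n ih =>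
    have hcons : (fun y => insertFront (g v) η (g ∘ y)) =
        insertFront v fun x => η (g ∘ x) := by
      ext y
      simp only [insertFront_apply, Fin.comp_cons]
    simp only [cubeSum, faceSum]
    refine sum_congr rfl fun k _ => congrArg _ ?_
    rw [← hg, ih (t := t ∘ k.succAbove) (t' := t' ∘ k.succAbove) fun x s => hg x _, hcons]

theorem gridSum_comp {g : V → W} {t : Fin n → V} {t' : Fin n → W}
    (hg : ∀ x s, g (x + t s) = g x + t' s) (m : ℕ) (η : Cochain W (n + 1) K) (v : V) :
    gridSum m η (g v) t' = gridSum m (fun x => η (g ∘ x)) v t := by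
  have hsmul (s : Fin n) (c : ℕ) (x : V) : g (x + c • t s) = g x + c • t' s := by
    induction c with
    | zero => simp
    | succ c ih => rw [succ_nsmul, ← add_assoc, hg, ih, succ_nsmul, add_assoc]
  have hsum (u : Fin n → ℕ) (S : Finset (Fin n)) :
      g (v + ∑ s ∈ S, u s • t s) = g v + ∑ s ∈ S, u s • t' s := by
    induction S using Finset.cons_induction with
    | empty => simp
    | cons s S hs ih =>
      rw [sum_cons, sum_cons, add_comm (u s • t s), ← add_assoc, hsmul, ih, add_assoc,
        add_comm (u s • t' s)]
  refine sum_congr rfl fun u _ => ?_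
  rw [← hsum fun s => (u s : ℕ)]
  exact cubeSum_comp hg η _

theorem cubeSum_zero (v : V) : cubeSum n (0 : Cochain V (n + 1) K) v = 0 := by
  simpa using cubeSum_sub (0 : Cochain V (n + 1) K) 0 v

theorem gridSum_eq_of_le {r m : ℕ} (hrm : r ≤ m) {η : Cochain V (n + 1) K} {v : V}
    {t : Fin n → V}
    (h : ∀ u : Fin n → Fin m, (∃ s, r ≤ u s) → cubeSum n η (v + ∑ s, (u s : ℕ) • t s) t = 0) :
    gridSum r η v t = gridSum m η v t := by
  refine sum_of_injOn (Fin.castLE hrm ∘ ·)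
    ((Fin.castLE_injective hrm).comp_left.injOn) (fun _ _ => mem_coe.2 (mem_univ _))
    (fun u _ hu => h u ?_) fun u _ => rfl
  by_contra! hlt
  exact hu ⟨fun s => ⟨u s, hlt s⟩, by simp, rfl⟩

end Naturality

section Box

variable {K : Type*} [CommRing K] {L : Type*} {n m : ℕ}

/-- The lattice points of the box `[0, m] ^ T`. -/
def box (T : Set L) (m : ℕ) : Set (L → ℕ) :=
  {y | Function.support y ⊆ T ∧ ∀ l, y l ≤ m}

theorem apply_eq_zero_of_mem_box {T : Set L} {y : L → ℕ} (hy : y ∈ box T m) {l : L}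
    (hl : l ∉ T) : y l = 0 :=
  Function.notMem_support.1 fun h => hl (hy.1 h)

theorem box_mono {S T : Set L} (h : S ⊆ T) : box S m ⊆ box T m :=
  fun _ hy => ⟨hy.1.trans h, hy.2⟩

variable [DecidableEq L]

theorem single_add_mem_box {T : Set L} {l : L} (hl : l ∉ T) {y : L → ℕ} (hy : y ∈ box T m) :
    Pi.single l m + y ∈ box (insert l T) m := by
  refine ⟨fun l' hl' => ?_, fun l' => ?_⟩
  · by_contra hmem
    simp only [Set.mem_insert_iff, not_or] at hmem
    simp [hmem.1, apply_eq_zero_of_mem_box hy hmem.2] at hl'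
  · rcases eq_or_ne l' l with rfl | hne
    · simp [apply_eq_zero_of_mem_box hy hl]
    · simpa [hne] using hy.2 l'

theorem sum_smul_single_apply {t : Fin n → L} (ht : Function.Injective t) (w : Fin n → ℕ)
    (s : Fin n) : (∑ s, w s • (Pi.single (t s) 1 : L → ℕ)) (t s) = w s := by
  simp [Pi.single_apply, ht.eq_iff]

theorem sum_smul_single_mem_box {t : Fin n → L} (ht : Function.Injective t) {w : Fin n → ℕ}
    (hw : ∀ s, w s ≤ m) : ∑ s, w s • (Pi.single (t s) 1 : L → ℕ) ∈ box (Set.range t) m := by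
  have hzero (l : L) (hl : l ∉ Set.range t) :
      (∑ s, w s • (Pi.single (t s) 1 : L → ℕ)) l = 0 := by
    simp [fun s => (Ne.symm fun h : t s = l => hl ⟨s, h⟩)]
  refine ⟨fun l hl => by_contra fun h => hl (hzero l h), fun l => ?_⟩
  by_cases hl : l ∈ Set.range t
  · obtain ⟨s, rfl⟩ := hl
    rw [sum_smul_single_apply ht]
    exact hw s
  · rw [hzero l hl]
    exact Nat.zero_le m

theorem IsKuhnPath.mem_Icc {v : L → ℕ} {t : Fin n → L} (ht : Function.Injective t)
    {x : Fin (n + 1) → L → ℕ} (hx : IsKuhnPath n v (fun s => Pi.single (t s) 1) x)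
    (i : Fin (n + 1)) : x i ∈ Set.Icc v (v + 1) := by
  obtain ⟨c, hc, hxi⟩ := hx.exists_eq i
  rw [hxi]
  exact ⟨le_self_add, add_le_add_right (sum_smul_single_mem_box ht hc).2 v⟩

theorem IsKuhnPath.mem_box {t : Fin n → L} (ht : Function.Injective t) {u : Fin n → Fin m}
    {x : Fin (n + 1) → L → ℕ}
    (hx : IsKuhnPath n (0 + ∑ s, (u s : ℕ) • Pi.single (t s) 1) (fun s => Pi.single (t s) 1) x)
    (i : Fin (n + 1)) : x i ∈ box (Set.range t) m := by
  obtain ⟨c, hc, hxi⟩ := hx.exists_eq i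
  rw [hxi, zero_add, ← sum_add_distrib]
  simp only [← add_smul]
  exact sum_smul_single_mem_box ht fun s => (add_le_add_right (hc s) _).trans (u s).2

/-- The sum of a cochain on lattice points over the box `[0, m] ^ n` in the directions `t`. -/
def boxSum (m : ℕ) (η : Cochain (L → ℕ) (n + 1) K) : Cochain L n K :=
  fun t => gridSum m η 0 fun s => Pi.single (t s) 1

/-- The sum of a cochain on lattice points over the face with `l`-th coordinate `m` of the box of
side `m` in the directions `l` and `R`. -/
def faceBoxSum (m : ℕ) (η : Cochain (L → ℕ) (n + 1) K) (l : L) : Cochain L n K :=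
  fun R => gridSum m η (Pi.single l m) fun s => Pi.single (R s) 1

/-- The sum of a cochain on lattice points over the faces of a box that do not contain the
origin. -/
def outerSum (m : ℕ) (η : Cochain (L → ℕ) (n + 1) K) : Cochain L (n + 1) K :=
  faceSum (faceBoxSum m η)

theorem boxSum_cobd (m : ℕ) (η : Cochain (L → ℕ) (n + 1) K) :
    boxSum m (cobd η) = outerSum m η - cobd (boxSum m η) := by
  refine Eq.trans ?_ (faceSum_sub _ _)
  ext t
  simp only [boxSum, gridSum_cobd, faceSum, Pi.sub_apply, zero_add, faceBoxSum, ← Pi.single_smul,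
    smul_eq_mul, mul_one]
  rfl

theorem boxSum_zero (m : ℕ) : boxSum m (0 : Cochain (L → ℕ) (n + 1) K) = 0 := by
  ext t
  simp [boxSum, gridSum, cubeSum_zero]

theorem outerSum_cobd (m : ℕ) (η : Cochain (L → ℕ) (n + 1) K) :
    outerSum m (cobd η) = cobd (outerSum m η) := by
  have h := boxSum_cobd m (cobd η)
  rw [cobd_cobd, boxSum_zero, boxSum_cobd, cobd_sub, cobd_cobd, sub_zero] at h
  exact sub_eq_zero.1 h.symm

theorem outerSum_sub (m : ℕ) (η θ : Cochain (L → ℕ) (n + 1) K) :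
    outerSum m (η - θ) = outerSum m η - outerSum m θ := by
  simp only [outerSum, ← faceSum_sub]
  congr 1
  ext l R
  simp [faceBoxSum, gridSum_sub]

theorem IsAlt.boxSum (m : ℕ) (η : Cochain (L → ℕ) (n + 1) K) : IsAlt (boxSum m η) :=
  fun i j hij t => IsAlt.gridSum m η 0 i j hij fun s => Pi.single (t s) 1

theorem IsAlt.faceBoxSum (m : ℕ) (η : Cochain (L → ℕ) (n + 1) K) (l : L) :
    IsAlt (faceBoxSum m η l) :=
  fun i j hij R => IsAlt.gridSum m η (Pi.single l m) i j hij fun s => Pi.single (R s) 1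

theorem IsAlt.outerSum (m : ℕ) (η : Cochain (L → ℕ) (n + 1) K) : IsAlt (outerSum m η) :=
  IsAlt.faceSum (IsAlt.faceBoxSum m η)

theorem faceBoxSum_eq_boxSum (m : ℕ) (η : Cochain (L → ℕ) (n + 1) K) (l : L) :
    faceBoxSum m η l = boxSum m fun x => η fun i => Pi.single l m + x i := by
  ext R
  have h := gridSum_comp (g := fun x : L → ℕ => Pi.single l m + x)
    (t' := fun s => Pi.single (R s) 1) (fun x s => (add_assoc _ x _).symm) m η 0
  rwa [add_zero] at h

theorem boxSum_congr {η θ : Cochain (L → ℕ) (n + 1) K} {t : Fin n → L}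
    (ht : Function.Injective t)
    (h : ∀ v x, IsKuhnPath n v (fun s => Pi.single (t s) 1) x →
      (∀ i, x i ∈ box (Set.range t) m) → η x = θ x) :
    boxSum m η t = boxSum m θ t :=
  gridSum_congr fun _ _ hx => h _ _ hx (hx.mem_box ht)

theorem boxSum_eq_of_le {r : ℕ} (hrm : r ≤ m) {η : Cochain (L → ℕ) (n + 1) K} {t : Fin n → L}
    (ht : Function.Injective t)
    (h : ∀ v x, (∀ i, x i ∈ Set.Icc v (v + 1)) → (∀ i, x i ∈ box (Set.range t) m) →
      (∀ i, ∃ l, r ≤ x i l) → η x = 0) :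
    boxSum r η t = boxSum m η t := by
  refine gridSum_eq_of_le hrm fun u ⟨s, hs⟩ => ?_
  refine (cubeSum_congr fun x hx => ?_).trans (congrFun (cubeSum_zero _) _)
  refine h _ x (hx.mem_Icc ht) (hx.mem_box ht) fun i => ⟨t s, hs.trans ?_⟩
  refine le_trans ?_ ((hx.mem_Icc ht i).1 (t s))
  rw [zero_add, sum_smul_single_apply ht]

theorem outerSum_congr {η θ : Cochain (L → ℕ) (n + 1) K} {t : Fin (n + 1) → L}
    (ht : Function.Injective t)
    (h : ∀ v x, (∀ i, x i ∈ Set.Icc v (v + 1)) → (∀ i, x i ∈ box (Set.range t) m) →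
      (∀ i, ∃ l, x i l = m) → η x = θ x) :
    outerSum m η t = outerSum m θ t := by
  refine faceSum_congr fun k => ?_
  have hk : t k ∉ Set.range (t ∘ k.succAbove) := fun ⟨s, hs⟩ => Fin.succAbove_ne k s (ht hs)
  have hrange : insert (t k) (Set.range (t ∘ k.succAbove)) ⊆ Set.range t :=
    Set.insert_subset ⟨k, rfl⟩ (Set.range_comp_subset_range _ _)
  have ht' : Function.Injective (t ∘ k.succAbove) := ht.comp Fin.succAbove_right_injective
  rw [faceBoxSum_eq_boxSum, faceBoxSum_eq_boxSum]
  refine boxSum_congr ht' fun v x hx hmem => ?_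
  refine h (Pi.single (t k) m + v) _ (fun i => ?_)
    (fun i => box_mono hrange (single_add_mem_box hk (hmem i)))
    fun i => ⟨t k, by simp [apply_eq_zero_of_mem_box (hmem i) hk]⟩
  obtain ⟨hle, hge⟩ := hx.mem_Icc ht' i
  exact ⟨add_le_add_right hle _, (add_le_add_right hge _).trans_eq (add_assoc _ _ _).symm⟩

end Box

section Labeling

variable {p : ℕ} {C : Type*} [DecidableEq C]

/-- A labeling of the lattice points outside the box of side `r` in the box of side `m`, as it
arises from a cyclic configuration of points on a sphere. It commutes with the rotation of
coordinates at height `r`, it respects the identifications on the outer faces at height `m`, whose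
`j`-th points are collapsed to the base point, and it maps cells to nonfull sets. -/
structure IsSphereLabeling (r m : ℕ) (lab : (C × ZMod p → ℕ) → C × ZMod p) : Prop where
  le : r ≤ m
  rotate : ∀ T, Nonfull T → ∀ y ∈ box T r, (∃ l, y l = r) →
    lab (y ∘ shift (-1)) = shift 1 (lab y)
  face : ∀ a j, j ≠ 0 → ∀ z ∈ box {(a, 0), (a, j)}ᶜ m,
    lab (Pi.single (a, 0) m + z) = lab (Pi.single (a, j) m + z)
  degenerate : ∀ a j, j ≠ 0 → ∀ z : C × ZMod p → ℕ, z + Pi.single (a, 0) 1 ∈ box {(a, j)}ᶜ m →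
    lab (Pi.single (a, j) m + (z + Pi.single (a, 0) 1)) = lab (Pi.single (a, j) m + z)
  nonfull : ∀ T, Nonfull T → ∀ (q : ℕ) (x : Fin q → C × ZMod p → ℕ) (v : C × ZMod p → ℕ),
    (∀ s, x s ∈ Set.Icc v (v + 1)) → (∀ s, x s ∈ box T m) → (∀ s, ∃ l, r ≤ x s l) →
    Nonfull (Set.range (lab ∘ x))

/-- The pullback of a cochain along a map of vertices. -/
def pullback {X Y K : Type*} {n : ℕ} (lab : Y → X) (η : Cochain X n K) : Cochain Y n K :=
  fun x => η (lab ∘ x)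

variable {K : Type*} [CommRing K] {n r m : ℕ} {lab : (C × ZMod p → ℕ) → C × ZMod p}

theorem IsSphereLabeling.outerSum_congr (h : IsSphereLabeling r m lab)
    {η θ : Cochain (C × ZMod p) (n + 1) K} (hηθ : ∀ t, Nonfull (Set.range t) → η t = θ t)
    {t : Fin (n + 1) → C × ZMod p} (ht : Function.Injective t) (ht' : Nonfull (Set.range t)) :
    outerSum r (pullback lab η) t = outerSum r (pullback lab θ) t :=
  AdmissiblePair.outerSum_congr ht fun v x hx hmem hr => hηθ _ <|
    h.nonfull _ ht' _ x v hx (fun i => ⟨(hmem i).1, fun l => ((hmem i).2 l).trans h.le⟩)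
      fun i => (hr i).imp fun _ => ge_of_eq

theorem single_comp_shift_neg_one (l : C × ZMod p) (c : ℕ) :
    (Pi.single l c : C × ZMod p → ℕ) ∘ shift (-1) = Pi.single (shift 1 l) c := by
  ext l'
  simp [Pi.single_apply, shift, Prod.ext_iff, ← sub_eq_add_neg, sub_eq_iff_eq_add]

theorem outerSum_shift_comp (η : Cochain (C × ZMod p → ℕ) (n + 1) K)
    (t : Fin (n + 1) → C × ZMod p) :
    outerSum m η (shift 1 ∘ t) = outerSum m (fun x => η ((· ∘ shift (-1)) ∘ x)) t := by
  simp only [outerSum, faceSum]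
  refine sum_congr rfl fun k _ => congrArg _ ?_
  have h := gridSum_comp (g := fun y : C × ZMod p → ℕ => y ∘ shift (-1))
    (t := fun s => Pi.single ((t ∘ k.succAbove) s) 1)
    (t' := fun s => Pi.single (shift 1 ((t ∘ k.succAbove) s)) 1)
    (fun x s => by rw [← single_comp_shift_neg_one]; rfl) m η (Pi.single (t k) m)
  rwa [single_comp_shift_neg_one] at h

theorem IsSphereLabeling.outerSum_diffOp (h : IsSphereLabeling r m lab)
    (η : Cochain (C × ZMod p) (n + 1) K)
    {t : Fin (n + 1) → C × ZMod p} (ht : Function.Injective t) (ht' : Nonfull (Set.range t)) :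
    outerSum r (pullback lab (diffOp η)) t = diffOp (outerSum r (pullback lab η)) t := by
  have hdiff : pullback lab (diffOp η) = pullback lab (shiftOp 1 η) - pullback lab η := rfl
  rw [hdiff, outerSum_sub, diffOp_apply, Pi.sub_apply, outerSum_shift_comp]
  refine congrArg (· - _) (AdmissiblePair.outerSum_congr ht fun v x _ hmem hr => ?_)
  refine congrArg η (funext fun i => ?_)
  exact (h.rotate _ ht' (x i) (hmem i) (hr i)).symm

theorem IsSphereLabeling.outerSum_diffOp_pow (h : IsSphereLabeling r m lab)
    (η : Cochain (C × ZMod p) (n + 1) K) (j : ℕ)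
    {t : Fin (n + 1) → C × ZMod p} (ht : Function.Injective t) (ht' : Nonfull (Set.range t)) :
    outerSum r (pullback lab ((diffOp ^ j) η)) t =
      (diffOp ^ j) (outerSum r (pullback lab η)) t := by
  induction j generalizing t with
  | zero => rfl
  | succ j ih =>
    have hshift : Function.Injective (shift 1 : C × ZMod p → C × ZMod p) := fun l l' hl => by
      simpa [shift, Prod.ext_iff] using hl
    rw [pow_succ', Module.End.mul_apply, Module.End.mul_apply, h.outerSum_diffOp _ ht ht',
      diffOp_apply, diffOp_apply, ih ht ht', ih (hshift.comp ht) (ht'.range_shift_comp 1)]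

theorem IsSphereLabeling.faceBoxSum_eq_of_zero (h : IsSphereLabeling r m lab)
    (η : Cochain (C × ZMod p) (n + 1) K) {R : Fin n → C × ZMod p} (hR : Function.Injective R)
    {a : C} {j : ZMod p} (hj : j ≠ 0) (ha0 : (a, 0) ∉ Set.range R) (haj : (a, j) ∉ Set.range R) :
    faceBoxSum m (pullback lab η) (a, 0) R = faceBoxSum m (pullback lab η) (a, j) R := by
  have hsub : Set.range R ⊆ {(a, 0), (a, j)}ᶜ := fun l hl hl' => by
    rcases hl' with rfl | rfl
    exacts [ha0 hl, haj hl]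
  rw [faceBoxSum_eq_boxSum, faceBoxSum_eq_boxSum]
  exact boxSum_congr hR fun v x _ hmem => congrArg η <| funext fun i =>
    h.face a j hj (x i) (box_mono hsub (hmem i))

variable [NoZeroDivisors K] [NeZero (2 : K)]

theorem IsSphereLabeling.isLadder (h : IsSphereLabeling r m lab)
    {Ψ : (k : ℕ) → Cochain (C × ZMod p) (k + 1) K} (hΨ : IsLadder Ψ) :
    IsLadder fun k => outerSum r (pullback lab (Ψ k)) where
  norm_eq_one t ht := by
    have hinj : Function.Injective t := fun i j _ => Subsingleton.elim (α := Fin 1) i j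
    rw [← h.outerSum_diffOp_pow _ _ hinj ht,
      h.outerSum_congr (θ := fun _ => 1) hΨ.norm_eq_one hinj ht]
    simp [outerSum, faceSum, faceBoxSum, gridSum, cubeSum, pullback]
  cobd_eq k t ht := by
    by_cases hinj : Function.Injective t
    · rw [← outerSum_cobd, ← h.outerSum_diffOp_pow _ _ hinj ht]
      exact h.outerSum_congr (hΨ.cobd_eq k) hinj ht
    · rw [(IsAlt.outerSum _ _).cobd.eq_zero hinj,
        ((IsAlt.outerSum _ _).diffOp_pow _).eq_zero hinj]

theorem IsSphereLabeling.faceBoxSum_eq_zero (h : IsSphereLabeling r m lab)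
    {η : Cochain (C × ZMod p) (n + 1) K} (hη : IsAlt η) {R : Fin n → C × ZMod p}
    (hR : Function.Injective R) {a : C} {j : ZMod p} (hj : j ≠ 0) (ha0 : (a, 0) ∈ Set.range R)
    (haj : (a, j) ∉ Set.range R) :
    faceBoxSum m (pullback lab η) (a, j) R = 0 := by
  rw [faceBoxSum_eq_boxSum]
  refine (boxSum_congr hR fun v x hx hmem => hη.eq_zero fun hinj => ?_).trans
    (congrFun (boxSum_zero m) R)
  obtain ⟨s, hs⟩ := ha0
  obtain ⟨i, hi⟩ := hx.exists_step s
  rw [hs] at hi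
  have hsub : Set.range R ⊆ {(a, j)}ᶜ := fun l hl hl' => haj (hl' ▸ hl)
  have hlab := h.degenerate a j hj (x i.castSucc) (hi ▸ box_mono hsub (hmem i.succ))
  rw [← hi] at hlab
  exact Fin.castSucc_lt_succ.ne' (hinj hlab)

end Labeling

section Counting

variable {C : Type*} [Fintype C]

theorem exists_card_fiber_le [Nonempty C] [DecidableEq C] {e n : ℕ}
    (hn : n = Fintype.card C * e) : ∃ b : ℕ → C, ∀ a, #{s : Fin n | b s = a} ≤ e := by
  subst hn
  let φ : Fin (Fintype.card C * e) ≃ C × Fin e :=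
    finProdFinEquiv.symm.trans ((Fintype.equivFin C).symm.prodCongr (Equiv.refl _))
  refine ⟨fun i => if hi : i < Fintype.card C * e then (φ ⟨i, hi⟩).1 else Classical.arbitrary C,
    fun a => ?_⟩
  simp only [Fin.is_lt, dite_true, Fin.eta]
  calc #{s | (φ s).1 = a} ≤ #(univ : Finset (Fin e)) :=
        card_le_card_of_injOn (fun s => (φ s).2) (fun _ _ => mem_coe.2 (mem_univ _))
          fun s hs s' hs' h => φ.injective <| Prod.ext (by simp_all) h
    _ = e := by simp

variable {p : ℕ} [Fact p.Prime]

theorem ncard_setOf_ne (i : C → ZMod p) :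
    {l : C × ZMod p | l.2 ≠ i l.1}.ncard = Fintype.card C * (p - 1) := by
  have hcompl : {l : C × ZMod p | l.2 ≠ i l.1} = (Set.range fun a => (a, i a))ᶜ := by
    ext ⟨a, j⟩
    simp [eq_comm]
  rw [hcompl, Set.ncard_compl, Set.ncard_range_of_injective fun a b hab => congrArg Prod.fst hab]
  simp [Nat.mul_sub]

theorem Nonfull.ncard_le {S : Set (C × ZMod p)} (hS : Nonfull S) :
    S.ncard ≤ Fintype.card C * (p - 1) := by
  choose i hi using hS
  rw [← ncard_setOf_ne i]
  exact Set.ncard_le_ncard fun l hl h => hi l.1 (h ▸ hl)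

theorem Nonfull.exists_eq_setOf_ne {S : Set (C × ZMod p)} (hS : Nonfull S)
    (hcard : Fintype.card C * (p - 1) ≤ S.ncard) : ∃ i : C → ZMod p, S = {l | l.2 ≠ i l.1} := by
  choose i hi using hS
  exact ⟨i, Set.eq_of_subset_of_ncard_le (fun l hl h => hi l.1 (h ▸ hl))
    (ncard_setOf_ne i ▸ hcard)⟩

/-- Across a ridge of the join of boundaries of simplices there are exactly two facets, obtained
by inserting one of the two missing labels of a single color. -/
theorem Nonfull.exists_color_of_insert {S : Set (C × ZMod p)}
    (hcard : S.ncard + 1 = Fintype.card C * (p - 1)) {l l' : C × ZMod p} (hne : l ≠ l')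
    (hl : l ∉ S) (hl' : l' ∉ S) (hSl : Nonfull (insert l S)) (hSl' : Nonfull (insert l' S)) :
    ∃ a j j', l = (a, j) ∧ l' = (a, j') ∧ ∀ k, k ≠ j → k ≠ j' → (a, k) ∈ S := by
  obtain ⟨i, hi⟩ := hSl.exists_eq_setOf_ne (by rw [Set.ncard_insert_of_notMem hl, hcard])
  have hmem (x : C × ZMod p) : x = l ∨ x ∈ S ↔ x.2 ≠ i x.1 := Set.ext_iff.1 hi x
  obtain ⟨a, j⟩ := l
  obtain ⟨a', j'⟩ := l'
  have hj' : j' = i a' := by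
    by_contra h
    exact ((hmem (a', j')).2 h).elim (fun h => hne h.symm) hl'
  obtain ⟨k, hk⟩ := hSl' a'
  rw [Set.mem_insert_iff, not_or] at hk
  have hkl : (a', k) = (a, j) :=
    ((hmem (a', k)).2 fun h => hk.1 (by rw [hj', ← h])).resolve_right hk.2
  obtain rfl : a' = a := congrArg Prod.fst hkl
  exact ⟨a', j, j', rfl, rfl, fun k hkj hkj' =>
    ((hmem (a', k)).2 (hj' ▸ hkj')).resolve_left fun h => hkj (congrArg Prod.snd h)⟩

end Counting

section Contradiction

variable {K : Type*} [CommRing K] [NoZeroDivisors K] [NeZero (2 : K)] {p : ℕ} [Fact p.Prime]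
  {C : Type*} [Fintype C] [DecidableEq C] {n r m : ℕ} {lab : (C × ZMod p → ℕ) → C × ZMod p}

theorem IsSphereLabeling.boxSum_eq (h : IsSphereLabeling r m lab)
    {η : Cochain (C × ZMod p) (n + 1) K} (hη : IsAlt η)
    (hn : n = Fintype.card C * (p - 1)) {t : Fin n → C × ZMod p} (ht : Nonfull (Set.range t)) :
    boxSum r (pullback lab η) t = boxSum m (pullback lab η) t := by
  by_cases hinj : Function.Injective t
  · refine boxSum_eq_of_le h.le hinj fun v x hx hmem hr => hη.eq_zero fun hinj' => ?_
    have hcard := (h.nonfull _ ht _ x v hx hmem hr).ncard_le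
    rw [Set.ncard_range_of_injective hinj', Nat.card_fin] at hcard
    omega
  · rw [(IsAlt.boxSum _ _).eq_zero hinj, (IsAlt.boxSum _ _).eq_zero hinj]

theorem IsSphereLabeling.faceBoxSum_eq (h : IsSphereLabeling r m lab)
    {η : Cochain (C × ZMod p) (n + 1) K} (hη : IsAlt η)
    (hn : n + 1 = Fintype.card C * (p - 1)) {R : Fin n → C × ZMod p} {l l' : C × ZMod p}
    (hR : Function.Injective R) (hl : l ∉ Set.range R) (hl' : l' ∉ Set.range R)
    (hRl : Nonfull (insert l (Set.range R))) (hRl' : Nonfull (insert l' (Set.range R))) :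
    faceBoxSum m (pullback lab η) l R = faceBoxSum m (pullback lab η) l' R := by
  rcases eq_or_ne l l' with rfl | hne
  · rfl
  obtain ⟨a, j, j', rfl, rfl, hmem⟩ := Nonfull.exists_color_of_insert
    (by rw [Set.ncard_range_of_injective hR, Nat.card_fin, hn]) hne hl hl' hRl hRl'
  have hjj' : j ≠ j' := fun h => hne (by rw [h])
  rcases eq_or_ne j 0 with rfl | hj
  · exact h.faceBoxSum_eq_of_zero η hR hjj'.symm hl hl'
  rcases eq_or_ne j' 0 with rfl | hj'
  · exact (h.faceBoxSum_eq_of_zero η hR hjj' hl' hl).symm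
  have ha0 : (a, 0) ∈ Set.range R := hmem 0 hj.symm hj'.symm
  rw [h.faceBoxSum_eq_zero hη hR hj ha0 hl, h.faceBoxSum_eq_zero hη hR hj' ha0 hl']

theorem IsSphereLabeling.exists_outerSum_eq_cobd (h : IsSphereLabeling r m lab)
    {η : Cochain (C × ZMod p) (n + 1) K} (hη : IsAlt η)
    (hn : n + 1 = Fintype.card C * (p - 1)) :
    ∃ β : Cochain (C × ZMod p) n K, ∀ t, Nonfull (Set.range t) →
      outerSum m (pullback lab η) t = cobd β t := by
  classical
  let Q (S : Set (C × ZMod p)) (l : C × ZMod p) : Prop := l ∉ S ∧ Nonfull (insert l S)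
  let β (R : Fin n → C × ZMod p) : K :=
    if hR : ∃ l, Q (Set.range R) l then faceBoxSum m (pullback lab η) hR.choose R else 0
  have hβ : IsAlt β := by
    intro i j hij R
    simp only [β, EquivLike.range_comp R (Equiv.swap i j)]
    split_ifs
    · exact IsAlt.faceBoxSum _ _ _ i j hij R
    · simp
  refine ⟨β, fun t ht => ?_⟩
  by_cases hinj : Function.Injective t
  · refine faceSum_congr fun k => ?_
    have hk : Q (Set.range (t ∘ k.succAbove)) (t k) :=
      ⟨fun ⟨s, hs⟩ => Fin.succAbove_ne k s (hinj hs),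
        ht.mono (Set.insert_subset ⟨k, rfl⟩ (Set.range_comp_subset_range _ _))⟩
    have hex : ∃ l, Q (Set.range (t ∘ k.succAbove)) l := ⟨_, hk⟩
    simp only [β, dif_pos hex]
    exact h.faceBoxSum_eq hη hn (hinj.comp Fin.succAbove_right_injective) hk.1
      hex.choose_spec.1 hk.2 hex.choose_spec.2
  · rw [(IsAlt.outerSum _ _).eq_zero hinj, hβ.cobd.eq_zero hinj]

theorem IsSphereLabeling.exists_outerSum_eq_cobd_inner (h : IsSphereLabeling r m lab)
    {η : Cochain (C × ZMod p) (n + 1) K} (hη : IsAlt η)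
    (hn : n + 1 = Fintype.card C * (p - 1)) :
    ∃ β : Cochain (C × ZMod p) n K, ∀ t, Nonfull (Set.range t) →
      outerSum r (pullback lab η) t = cobd β t := by
  obtain ⟨β, hβ⟩ := h.exists_outerSum_eq_cobd hη hn
  refine ⟨β - boxSum m (pullback lab η) + boxSum r (pullback lab η), fun t ht => ?_⟩
  have hr := congrFun (boxSum_cobd r (pullback lab η)) t
  have hm := congrFun (boxSum_cobd m (pullback lab η)) t
  have hrm : boxSum r (cobd (pullback lab η)) t = boxSum m (cobd (pullback lab η)) t :=
    h.boxSum_eq hη.cobd hn ht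
  rw [cobd_add, cobd_sub]
  simp only [Pi.sub_apply, Pi.add_apply] at hr hm ⊢
  linear_combination hm + hrm - hr + hβ t ht

end Contradiction

theorem not_isSphereLabeling {p : ℕ} [Fact p.Prime] (hp : p ≠ 2) {C : Type*} [DecidableEq C]
    [Finite C] [Nonempty C] {r m : ℕ} {lab : (C × ZMod p → ℕ) → C × ZMod p} :
    ¬IsSphereLabeling r m lab := by
  intro h
  have := Fintype.ofFinite C
  have hp2 : 2 < p := (Fact.out : p.Prime).two_le.lt_of_ne' hp
  have : NeZero (2 : ZMod p) :=
    ⟨fun h0 => (Nat.le_of_dvd two_pos ((ZMod.natCast_eq_zero_iff 2 p).1 h0)).not_gt hp2⟩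
  obtain ⟨k, hk⟩ : ∃ k, k + 2 = Fintype.card C * (p - 1) := by
    have := Nat.mul_le_mul (Fintype.card_pos (α := C)) (show 2 ≤ p - 1 by omega)
    exact ⟨Fintype.card C * (p - 1) - 2, by omega⟩
  obtain ⟨b, hb⟩ := exists_card_fiber_le (C := C) hk
  have hb' (a : C) : #{s : Fin (k + 2) | b s = a} < p := (hb a).trans_lt (by omega)
  obtain ⟨Ψ, halt, hΨ⟩ := exists_isLadder (ZMod p) p C
  obtain ⟨β, hβ⟩ := h.exists_outerSum_eq_cobd_inner (halt (k + 1)) hk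
  have hone := (h.isLadder hΨ).evalAlong_eq_one hb'
  rw [evalAlong_congr_nonfull hb' fun t ht => diffOp_pow_congr_nonfull hβ (p - 1) ht,
    evalAlong_diffOp_pow_pred_cobd] at hone
  exact zero_ne_one hone

section CubeToSphere

variable {ι : Type*} [Fintype ι] {d : ℕ}

/-- A function on the cube `[-1, 1] ^ ι` which is positive in the interior and vanishes on the
boundary. -/
def bump (x : ι → ℝ) : ℝ := ∏ a, (1 - x a ^ 2)

theorem bump_eq_zero {x : ι → ℝ} {a : ι} (h : |x a| = 1) : bump x = 0 :=
  prod_eq_zero (mem_univ a) (by rw [← sq_abs, h]; norm_num)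

theorem bump_pos {x : ι → ℝ} (h : ∀ a, |x a| < 1) : 0 < bump x :=
  prod_pos fun a _ => sub_pos.2 ((sq_lt_one_iff_abs_lt_one (x a)).2 (h a))

theorem bump_nonneg {x : ι → ℝ} (h : ∀ a, |x a| ≤ 1) : 0 ≤ bump x :=
  prod_nonneg fun a _ => sub_nonneg.2 ((sq_le_one_iff_abs_le_one (x a)).2 (h a))

theorem bump_le_bump {x y : ι → ℝ} (hy : ∀ a, |y a| ≤ 1) (h : ∀ a, |x a| ≤ |y a|) :
    bump y ≤ bump x :=
  prod_le_prod (fun a _ => sub_nonneg.2 ((sq_le_one_iff_abs_le_one (y a)).2 (hy a)))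
    fun a _ => sub_le_sub_left (sq_le_sq.2 (h a)) 1

@[fun_prop]
theorem continuous_bump : Continuous (bump (ι := ι)) := by
  unfold bump
  fun_prop

theorem sum_sq_add_bump_sq_pos (x : ι → ℝ) : 0 < ∑ a, x a ^ 2 + bump x ^ 2 := by
  by_cases hx : x = 0
  · simp [hx, bump]
  · obtain ⟨a, ha⟩ := Function.ne_iff.1 hx
    have : 0 < ∑ a, x a ^ 2 :=
      sum_pos' (fun a _ => sq_nonneg _) ⟨a, mem_univ a, sq_pos_of_ne_zero ha⟩
    positivity

theorem eq_of_bump_smul_eq {x y : ι → ℝ} (hx : ∀ a, |x a| ≤ 1) (hy : ∀ a, |y a| ≤ 1)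
    (hbx : 0 < bump x) (hby : 0 < bump y) (h : bump y • x = bump x • y) : x = y := by
  wlog hle : bump x ≤ bump y generalizing x y
  · exact (this hy hx hby hbx h.symm (le_of_not_ge hle)).symm
  have habs (a : ι) : |x a| ≤ |y a| := by
    refine le_of_mul_le_mul_left ?_ hby
    calc bump y * |x a| = bump x * |y a| := by
          simpa [abs_mul, abs_of_pos hbx, abs_of_pos hby] using congrArg abs (congrFun h a)
      _ ≤ bump y * |y a| := mul_le_mul_of_nonneg_right hle (abs_nonneg _)
  rw [hle.antisymm (bump_le_bump hy habs)] at h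
  exact smul_right_injective _ hby.ne' h

/-- The inverse stereographic projection of `x / bump x`, extended to a map of the cube to the
sphere collapsing the boundary of the cube to the pole. -/
noncomputable def cubeToSphere (x : Fin d → ℝ) :
    Metric.sphere (0 : EuclideanSpace ℝ (Fin (d + 1))) 1 :=
  ⟨WithLp.toLp 2 (Fin.cons ((∑ a, x a ^ 2 - bump x ^ 2) / (∑ a, x a ^ 2 + bump x ^ 2))
    fun a => 2 * bump x * x a / (∑ a, x a ^ 2 + bump x ^ 2)), by
    have h := (sum_sq_add_bump_sq_pos x).ne'
    rw [mem_sphere_zero_iff_norm, EuclideanSpace.norm_eq, Real.sqrt_eq_one, Fin.sum_univ_succ]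
    simp only [Real.norm_eq_abs, sq_abs, Fin.cons_zero, Fin.cons_succ, div_pow, mul_pow,
      ← Finset.sum_div, ← Finset.mul_sum]
    field_simp
    ring⟩

theorem continuous_cubeToSphere : Continuous (cubeToSphere (d := d)) := by
  have h (x : Fin d → ℝ) := (sum_sq_add_bump_sq_pos x).ne'
  refine Continuous.subtype_mk ((PiLp.continuous_toLp 2 _).comp (continuous_pi fun i => ?_)) _
  refine Fin.cases ?_ (fun a => ?_) i
  · simp only [Fin.cons_zero]
    fun_prop (disch := exact h _)
  · simp only [Fin.cons_succ]
    fun_prop (disch := exact h _)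

theorem cubeToSphere_eq_of_bump_eq_zero {x y : Fin d → ℝ} (hx : bump x = 0) (hy : bump y = 0) :
    cubeToSphere x = cubeToSphere y := by
  have hsx := (sum_sq_add_bump_sq_pos x).ne'
  have hsy := (sum_sq_add_bump_sq_pos y).ne'
  simp only [hx, hy, ne_eq, OfNat.ofNat_ne_zero, not_false_eq_true, zero_pow, add_zero] at hsx hsy
  simp [cubeToSphere, hx, hy, hsx, hsy]

theorem bump_smul_eq_of_cubeToSphere_eq {x y : Fin d → ℝ} (hx : 0 < bump x) (hy : 0 ≤ bump y)
    (h : cubeToSphere x = cubeToSphere y) : 0 < bump y ∧ bump y • x = bump x • y := by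
  have hsx := sum_sq_add_bump_sq_pos x
  have hsy := sum_sq_add_bump_sq_pos y
  have hcoord (i) : (cubeToSphere x).1 i = (cubeToSphere y).1 i := by rw [h]
  have hhead := hcoord 0
  have htail (a : Fin d) := hcoord a.succ
  simp only [cubeToSphere, Fin.cons_zero, Fin.cons_succ, div_eq_div_iff hsx.ne' hsy.ne']
    at hhead htail
  generalize ∑ a, x a ^ 2 = X at hsx hhead htail
  generalize ∑ a, y a ^ 2 = Y at hsy hhead htail
  have hXY : bump x ^ 2 * (Y + bump y ^ 2) = bump y ^ 2 * (X + bump x ^ 2) := by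
    linear_combination -hhead / 2
  have hpos : 0 < bump y := hy.lt_of_ne' fun hy0 => by
    have : 0 < bump x ^ 2 * (Y + bump y ^ 2) := by positivity
    rw [hXY, hy0, zero_pow two_ne_zero, zero_mul] at this
    exact this.false
  refine ⟨hpos, funext fun a => mul_left_cancel₀ (mul_pos hsx hpos).ne' ?_⟩
  simp only [Pi.smul_apply, smul_eq_mul]
  linear_combination bump x / 2 * htail a - x a * hXY

/-- A continuous map of the cube `[-1, 1] ^ ι` which is injective in the interior and collapses the
boundary to a further point. -/
structure IsBoundaryCollapse {ι S : Type*} [TopologicalSpace S] (q : (ι → ℝ) → S) : Prop where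
  continuous : Continuous q
  eq_of_boundary : ∀ x y, (∃ a, |x a| = 1) → (∃ a, |y a| = 1) → q x = q y
  eq_of_interior : ∀ x y, (∀ a, |x a| < 1) → (∀ a, |y a| ≤ 1) → q x = q y → x = y

theorem isBoundaryCollapse_cubeToSphere : IsBoundaryCollapse (cubeToSphere (d := d)) where
  continuous := continuous_cubeToSphere
  eq_of_boundary _ _ hx hy :=
    cubeToSphere_eq_of_bump_eq_zero (bump_eq_zero hx.choose_spec) (bump_eq_zero hy.choose_spec)
  eq_of_interior x y hx hy h := by
    obtain ⟨hpos, hsmul⟩ := bump_smul_eq_of_cubeToSphere_eq (bump_pos hx) (bump_nonneg hy) h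
    exact eq_of_bump_smul_eq (fun a => (hx a).le) hy (bump_pos hx) hpos hsmul

end CubeToSphere

section Spread

variable {p : ℕ} [NeZero p] {C : Type*}

/-- The largest coordinate of color `a`. -/
noncomputable def colorMax (y : C × ZMod p → ℝ) (a : C) : ℝ :=
  univ.sup' univ_nonempty fun i => y (a, i)

/-- A configuration of `p` points of the cube `[-1, 1] ^ C` attached to a point of the cube
`[0, 1] ^ (C × ZMod p)`. Its `i`-th point reaches the boundary as soon as `y (a, i) = 1` for some
`a` and `i ≠ 0`, and the first factor keeps the point with index `0` in the interior. -/
noncomputable def spread (y : C × ZMod p → ℝ) (i : ZMod p) (a : C) : ℝ :=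
  (if i = 0 then min 1 (2 - 2 * colorMax y a) else 1) * (2 * y (a, i) - colorMax y a)

theorem le_colorMax (y : C × ZMod p → ℝ) (a : C) (i : ZMod p) : y (a, i) ≤ colorMax y a :=
  le_sup' (fun i => y (a, i)) (mem_univ i)

theorem exists_eq_colorMax (y : C × ZMod p → ℝ) (a : C) : ∃ i, y (a, i) = colorMax y a := by
  obtain ⟨i, _, hi⟩ := exists_mem_eq_sup' univ_nonempty fun i => y (a, i)
  exact ⟨i, hi.symm⟩

theorem colorMax_le {y : C × ZMod p → ℝ} {a : C} {c : ℝ} (h : ∀ i, y (a, i) ≤ c) :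
    colorMax y a ≤ c :=
  sup'_le _ _ fun i _ => h i

theorem colorMax_congr {y z : C × ZMod p → ℝ} {a : C} (h : ∀ i, y (a, i) = z (a, i)) :
    colorMax y a = colorMax z a := by
  simp only [colorMax, h]

theorem colorMax_comp_shift (y : C × ZMod p → ℝ) (j : ZMod p) (a : C) :
    colorMax (y ∘ shift j) a = colorMax y a :=
  (colorMax_le fun i => le_colorMax y a (i + j)).antisymm <| colorMax_le fun i => by
    simpa [shift] using le_colorMax (y ∘ shift j) a (i - j)

theorem continuous_spread : Continuous (spread (p := p) (C := C)) := by
  have hmax (a : C) : Continuous fun y : C × ZMod p → ℝ => colorMax y a :=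
    Continuous.finset_sup'_apply _ fun i _ => continuous_apply (a, i)
  refine continuous_pi fun i => continuous_pi fun a => ?_
  have := hmax a
  unfold spread
  split_ifs <;> fun_prop

theorem spread_of_ne_zero (y : C × ZMod p → ℝ) {i : ZMod p} (hi : i ≠ 0) (a : C) :
    spread y i a = 2 * y (a, i) - colorMax y a := by
  simp [spread, hi]

theorem spread_zero (y : C × ZMod p → ℝ) (a : C) :
    spread y 0 a = min 1 (2 - 2 * colorMax y a) * (2 * y (a, 0) - colorMax y a) := by
  simp [spread]

theorem abs_spread_zero_lt {y : C × ZMod p → ℝ} (hy : y ∈ Set.Icc 0 1) (a : C) :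
    |spread y 0 a| < 1 := by
  have hmax : colorMax y a ≤ 1 := colorMax_le fun i => hy.2 (a, i)
  have hle := le_colorMax y a 0
  have hnonneg : 0 ≤ y (a, 0) := hy.1 (a, 0)
  have hfactor : 0 ≤ min 1 (2 - 2 * colorMax y a) := le_min zero_le_one (by linarith)
  have habs : |2 * y (a, 0) - colorMax y a| ≤ colorMax y a := by
    rw [abs_le]
    constructor <;> linarith
  rw [spread_zero, abs_mul, abs_of_nonneg hfactor]
  refine (mul_le_mul_of_nonneg_left habs hfactor).trans_lt ?_
  rcases le_or_gt (colorMax y a) (3 / 4) with hle | hgt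
  · nlinarith [min_le_left 1 (2 - 2 * colorMax y a)]
  · nlinarith [min_le_right 1 (2 - 2 * colorMax y a)]

theorem abs_spread_le {y : C × ZMod p → ℝ} (hy : y ∈ Set.Icc 0 1) (i : ZMod p) (a : C) :
    |spread y i a| ≤ 1 := by
  rcases eq_or_ne i 0 with rfl | hi
  · exact (abs_spread_zero_lt hy a).le
  · have hmax : colorMax y a ≤ 1 := colorMax_le fun i => hy.2 (a, i)
    have hle := le_colorMax y a i
    have hnonneg : 0 ≤ y (a, i) := hy.1 (a, i)
    rw [spread_of_ne_zero y hi, abs_le]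
    constructor <;> linarith

theorem exists_spread_ne {y : C × ZMod p → ℝ} (hy : y ∈ Set.Icc 0 1) {a : C}
    (hmin : ∃ i, y (a, i) = 0) (hpos : ∃ i, 0 < y (a, i)) : ∃ i, spread y i a ≠ spread y 0 a := by
  by_contra! hall
  have hmax : colorMax y a ≤ 1 := colorMax_le fun i => hy.2 (a, i)
  obtain ⟨i, hi⟩ := hmin
  obtain ⟨j, hj⟩ := exists_eq_colorMax y a
  obtain ⟨k, hk⟩ := hpos
  have hM : 0 < colorMax y a := hk.trans_le (le_colorMax y a k)
  have hfactor : 0 ≤ min 1 (2 - 2 * colorMax y a) * colorMax y a :=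
    mul_nonneg (le_min zero_le_one (by linarith)) hM.le
  have hspread_i := hall i
  have hspread_j := hall j
  rcases eq_or_ne i 0 with rfl | hi0
  · have hj0 : j ≠ 0 := by
      rintro rfl
      linarith
    rw [spread_of_ne_zero y hj0, spread_zero, hj, hi] at hspread_j
    linarith
  · rw [spread_of_ne_zero y hi0, hi] at hspread_i
    rcases eq_or_ne j 0 with rfl | hj0
    · rw [spread_zero, hj] at hspread_i
      linarith
    · rw [spread_of_ne_zero y hj0, hj] at hspread_j
      linarith

theorem spread_comp_shift {y : C × ZMod p → ℝ} (hy : ∀ l, y l ≤ 1 / 2) (j i : ZMod p) :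
    spread (y ∘ shift j) i = spread y (i + j) := by
  have hhalf (i : ZMod p) (z : C × ZMod p → ℝ) (hz : ∀ l, z l ≤ 1 / 2) (a : C) :
      spread z i a = 2 * z (a, i) - colorMax z a := by
    have : colorMax z a ≤ 1 / 2 := colorMax_le fun i => hz (a, i)
    rw [spread, min_eq_left (by linarith), ite_self, one_mul]
  funext a
  rw [hhalf i (y ∘ shift j) fun l => hy _, hhalf (i + j) y hy, colorMax_comp_shift]
  rfl

theorem spread_eq_of_colorMax_eq_one {y z : C × ZMod p → ℝ} {a : C} (hy : colorMax y a = 1)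
    (hz : colorMax z a = 1) (h : ∀ b ≠ a, ∀ k, y (b, k) = z (b, k)) {i : ZMod p}
    (hi : i ≠ 0 → y (a, i) = z (a, i)) : spread y i = spread z i := by
  funext b
  rcases eq_or_ne b a with rfl | hb
  · rcases eq_or_ne i 0 with rfl | hi0
    · simp [spread_zero, hy, hz]
    · rw [spread_of_ne_zero _ hi0, spread_of_ne_zero _ hi0, hy, hz, hi hi0]
  · rw [spread, spread, colorMax_congr (h b hb), h b hb i]

variable [DecidableEq C]

theorem colorMax_single_add {z : C × ZMod p → ℝ} (hz : ∀ l, z l ≤ 1) {a : C} {j : ZMod p}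
    (hj : z (a, j) = 0) : colorMax (Pi.single (a, j) 1 + z) a = 1 := by
  refine (colorMax_le fun i => ?_).antisymm ?_
  · rcases eq_or_ne i j with rfl | hi
    · simp [hj]
    · simpa [hi] using hz (a, i)
  · exact le_of_eq_of_le (by simp [hj]) (le_colorMax (Pi.single (a, j) 1 + z) a j)

theorem IsBoundaryCollapse.apply_spread_single_add {S : Type*} [TopologicalSpace S]
    {q : (C → ℝ) → S} (hq : IsBoundaryCollapse q) {z : C × ZMod p → ℝ} (hz : ∀ l, z l ≤ 1) {a : C}
    {j : ZMod p} (hj : j ≠ 0) (hz0 : z (a, 0) = 0) (hzj : z (a, j) = 0) (i : ZMod p) :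
    q (spread (Pi.single (a, 0) 1 + z) i) = q (spread (Pi.single (a, j) 1 + z) i) := by
  have hmax0 := colorMax_single_add hz hz0
  have hmaxj := colorMax_single_add hz hzj
  rcases eq_or_ne i j with rfl | hij
  · refine hq.eq_of_boundary _ _ ⟨a, ?_⟩ ⟨a, ?_⟩
    · rw [spread_of_ne_zero _ hj, hmax0]
      simp [hzj, hj]
    · rw [spread_of_ne_zero _ hj, hmaxj]
      norm_num [hzj]
  · exact congrArg q <| spread_eq_of_colorMax_eq_one hmax0 hmaxj (fun b hb k => by simp [hb])
      fun hi => by simp [hi, hij]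

end Spread

section Oscillation

variable {p : ℕ} {C : Type*}

/-- The coordinates of color `a` have oscillation at least `δ`. -/
def HasOsc (δ : ℝ) (g : C × ZMod p → ℝ) (a : C) : Prop := ∃ i j, δ ≤ g (a, i) - g (a, j)

theorem hasOsc_comp_shift (δ : ℝ) (g : C × ZMod p → ℝ) (k : ZMod p) :
    HasOsc δ (g ∘ shift k) = HasOsc δ g := by
  ext a
  constructor
  · rintro ⟨i, j, hij⟩
    exact ⟨i + k, j + k, hij⟩
  · rintro ⟨i, j, hij⟩
    exact ⟨i - k, j - k, by simpa [shift] using hij⟩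

theorem exists_forall_hasOsc [Finite C] [NeZero p] {X : Type*} [TopologicalSpace X] {K : Set X}
    (hK : IsCompact K) {G : X → C × ZMod p → ℝ} (hG : Continuous G)
    (hne : ∀ x ∈ K, ∃ l, G x l ≠ G x (l.1, 0)) : ∃ δ > 0, ∀ x ∈ K, ∃ a, HasOsc δ (G x) a := by
  have := Fintype.ofFinite C
  have hpos : ∀ x ∈ K, 0 < ‖fun l => G x l - G x (l.1, 0)‖ := fun x hx =>
    norm_pos_iff.2 <| Function.ne_iff.2 <| (hne x hx).imp fun l => sub_ne_zero.2
  obtain ⟨δ, hδ, hle⟩ := hK.exists_forall_le' (by fun_prop) hpos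
  refine ⟨δ, hδ, fun x hx => ?_⟩
  by_contra! hlt
  refine (hle x hx).not_gt ((pi_norm_lt_iff hδ).2 fun l => abs_sub_lt_iff.2 ?_)
  have hcolor := hlt l.1
  simp only [HasOsc, not_exists, not_le] at hcolor
  exact ⟨hcolor l.2 0, hcolor 0 l.2⟩

section Argmax

variable [NeZero p]

open Classical in
/-- The positions of the maxima of `g` in the color `a`. -/
noncomputable def argmaxSet (g : C × ZMod p → ℝ) (a : C) : Finset (ZMod p) :=
  {i | ∀ j, g (a, j) ≤ g (a, i)}

theorem mem_argmaxSet {g : C × ZMod p → ℝ} {a : C} {i : ZMod p} :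
    i ∈ argmaxSet g a ↔ ∀ j, g (a, j) ≤ g (a, i) := by
  simp [argmaxSet]

theorem argmaxSet_nonempty (g : C × ZMod p → ℝ) (a : C) : (argmaxSet g a).Nonempty := by
  obtain ⟨i, hi⟩ := Finite.exists_max fun i => g (a, i)
  exact ⟨i, mem_argmaxSet.2 hi⟩

theorem argmaxSet_comp_shift (g : C × ZMod p → ℝ) (a : C) (k : ZMod p) :
    argmaxSet (g ∘ shift (-k)) a = (argmaxSet g a).image (· + k) := by
  ext i
  simp only [mem_image, mem_argmaxSet, Function.comp_apply, shift, ← sub_eq_add_neg]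
  constructor
  · exact fun hi => ⟨i - k, fun j => by simpa using hi (j + k), sub_add_cancel i k⟩
  · rintro ⟨i, hi, rfl⟩ j
    simpa using hi (j - k)

theorem HasOsc.argmaxSet_ne_univ {δ : ℝ} (hδ : 0 < δ) {g : C × ZMod p → ℝ} {a : C}
    (h : HasOsc δ g a) : argmaxSet g a ≠ univ := fun huniv => by
  obtain ⟨i, j, hij⟩ := h
  have hmax := mem_argmaxSet.1 (huniv ▸ mem_univ j : j ∈ argmaxSet g a) i
  linarith

end Argmax

variable [Fact p.Prime]

/-- An element of a finite set, chosen equivariantly under translation of sets with a mean that is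
equivariant under translation. -/
noncomputable def pick (B : Finset (ZMod p)) : ZMod p :=
  Classical.epsilon (fun i => i + mean B ∈ B) + mean B

theorem pick_mem {B : Finset (ZMod p)} (h : B.Nonempty) : pick B ∈ B :=
  Classical.epsilon_spec (p := fun i => i + mean B ∈ B) (h.imp' (· - mean B) (by simp))

theorem pick_image_add {B : Finset (ZMod p)} (hne : B.Nonempty) (huniv : B ≠ univ) (k : ZMod p) :
    pick (B.image (· + k)) = pick B + k := by
  rw [pick, mean_image_add hne huniv, pick]
  simp [← add_assoc]

variable [Nonempty C]

/-- A color of oscillation at least `δ`, if there is one, with the position of a maximum. -/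
noncomputable def oscLabel (δ : ℝ) (g : C × ZMod p → ℝ) : C × ZMod p :=
  (Classical.epsilon (HasOsc δ g), pick (argmaxSet g (Classical.epsilon (HasOsc δ g))))

theorem le_apply_oscLabel (δ : ℝ) (g : C × ZMod p → ℝ) (j : ZMod p) :
    g ((oscLabel δ g).1, j) ≤ g (oscLabel δ g) :=
  mem_argmaxSet.1 (pick_mem (argmaxSet_nonempty g _)) j

theorem hasOsc_oscLabel {δ : ℝ} {g : C × ZMod p → ℝ} (h : ∃ a, HasOsc δ g a) :
    HasOsc δ g (oscLabel δ g).1 :=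
  Classical.epsilon_spec h

theorem oscLabel_comp_shift {δ : ℝ} (hδ : 0 < δ) {g : C × ZMod p → ℝ} (h : ∃ a, HasOsc δ g a)
    (k : ZMod p) : oscLabel δ (g ∘ shift (-k)) = shift k (oscLabel δ g) := by
  have huniv : argmaxSet g (Classical.epsilon (HasOsc δ g)) ≠ univ :=
    (hasOsc_oscLabel h).argmaxSet_ne_univ hδ
  rw [oscLabel, hasOsc_comp_shift, argmaxSet_comp_shift,
    pick_image_add (argmaxSet_nonempty g _) huniv]
  rfl

theorem nonfull_range_oscLabel {κ : Type*} {δ : ℝ} {g : κ → C × ZMod p → ℝ}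
    (hosc : ∀ s, ∃ a, HasOsc δ (g s) a) (hclose : ∀ s t l, |g s l - g t l| < δ / 2) :
    Nonfull (Set.range fun s => oscLabel δ (g s)) := by
  by_contra hfull
  simp only [Nonfull, not_forall, not_exists, not_not] at hfull
  obtain ⟨a, ha⟩ := hfull
  obtain ⟨s, hs⟩ := ha 0
  obtain ⟨i, j, hij⟩ := hasOsc_oscLabel (hosc s)
  obtain ⟨t, ht⟩ := ha j
  have hmax := le_apply_oscLabel δ (g t) i
  simp only at hs ht
  rw [hs] at hij
  rw [ht] at hmax
  linarith [(abs_lt.1 (hclose s t (a, i))).2, (abs_lt.1 (hclose s t (a, j))).1]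

end Oscillation

section Rescale

variable {L : Type*} {n : ℕ} {x y : L → ℕ}

/-- The rescaling of a lattice point by the factor `1 / n`. -/
noncomputable def rescale (n : ℕ) (y : L → ℕ) (l : L) : ℝ := y l / n

theorem rescale_mem_Icc (h : ∀ l, y l ≤ n) : rescale n y ∈ Set.Icc 0 1 :=
  ⟨fun l => div_nonneg (y l).cast_nonneg n.cast_nonneg,
    fun l => div_le_one_of_le₀ (Nat.cast_le.2 (h l)) n.cast_nonneg⟩

theorem rescale_single_add [DecidableEq L] (hn : n ≠ 0) (l : L) (y : L → ℕ) :
    rescale n (Pi.single l n + y) = Pi.single l 1 + rescale n y := by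
  funext k
  rcases eq_or_ne k l with rfl | hk
  · simp [rescale, add_div, hn]
  · simp [rescale, hk]

theorem dist_rescale_le [Fintype L] {v : L → ℕ} (hx : x ∈ Set.Icc v (v + 1))
    (hy : y ∈ Set.Icc v (v + 1)) : dist (rescale n x) (rescale n y) ≤ 1 / n := by
  refine (dist_pi_le_iff (by positivity)).2 fun l => ?_
  have hxy : (x l : ℝ) ≤ y l + 1 := by
    exact_mod_cast (hx.2 l).trans (Nat.succ_le_succ (hy.1 l))
  have hyx : (y l : ℝ) ≤ x l + 1 := by
    exact_mod_cast (hy.2 l).trans (Nat.succ_le_succ (hx.1 l))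
  rw [rescale, rescale, Real.dist_eq, ← sub_div, abs_div, Nat.abs_cast]
  gcongr
  exact abs_sub_le_iff.2 ⟨by linarith, by linarith⟩

end Rescale

section TestMap

variable {p : ℕ} {C : Type*}

variable (p C) in
/-- The points of the unit cube with a zero coordinate of every color and a coordinate at least
`1 / 2`. They parametrize configurations of points which are not all equal. -/
def configSet : Set (C × ZMod p → ℝ) :=
  Set.Icc 0 1 ∩ {y | (∀ a, ∃ i, y (a, i) = 0) ∧ ∃ l, 1 / 2 ≤ y l}

theorem rescale_mem_configSet {T : Set (C × ZMod p)} (hT : Nonfull T) {r : ℕ} (hr : r ≠ 0)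
    {y : C × ZMod p → ℕ} (hy : y ∈ box T (2 * r)) (hl : ∃ l, r ≤ y l) :
    rescale (2 * r) y ∈ configSet p C := by
  refine ⟨rescale_mem_Icc hy.2, fun a => ?_, hl.imp fun l hl => ?_⟩
  · exact (hT a).imp fun i hi => by simp [rescale, apply_eq_zero_of_mem_box hy hi]
  · rw [rescale, Nat.cast_mul, Nat.cast_two, div_le_div_iff₀ two_pos (by positivity)]
    have : (r : ℝ) ≤ y l := Nat.cast_le.2 hl
    linarith

variable [NeZero p]

theorem isCompact_configSet [Finite C] : IsCompact (configSet p C) := by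
  refine isCompact_Icc.inter_right ?_
  simp only [Set.ofPred_and, Set.ofPred_forall, Set.ofPred_exists]
  refine IsClosed.inter ?_ ?_
  · exact isClosed_iInter fun a => isClosed_iUnion_of_finite fun i =>
      isClosed_eq (continuous_apply _) continuous_const
  · exact isClosed_iUnion_of_finite fun l => isClosed_le continuous_const (continuous_apply l)

variable {S : Type*} {q : (C → ℝ) → S} {F : C → (ZMod p → S) → ℝ}

/-- The values of the functions `F a` at the cyclic shifts of the configuration attached to `y`. -/
noncomputable def testMap (q : (C → ℝ) → S) (F : C → (ZMod p → S) → ℝ) (y : C × ZMod p → ℝ)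
    (l : C × ZMod p) : ℝ :=
  F l.1 fun k => q (spread y (k + l.2))

theorem testMap_comp_shift {y : C × ZMod p → ℝ} (hy : ∀ l, y l ≤ 1 / 2) (j : ZMod p) :
    testMap q F (y ∘ shift j) = testMap q F y ∘ shift j := by
  funext l
  simp only [testMap, spread_comp_shift hy, shift, Function.comp_apply, add_assoc]

theorem testMap_congr {y z : C × ZMod p → ℝ} (h : ∀ i, q (spread y i) = q (spread z i)) :
    testMap q F y = testMap q F z := by
  funext l
  simp only [testMap, h]

theorem testMap_rescale_single_add_add_single [DecidableEq C] {n : ℕ} (hn : n ≠ 0) {a : C}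
    {j : ZMod p} (hj : j ≠ 0) {z : C × ZMod p → ℕ} (hz : z + Pi.single (a, 0) 1 ∈ box {(a, j)}ᶜ n) :
    testMap q F (rescale n (Pi.single (a, j) n + (z + Pi.single (a, 0) 1))) =
      testMap q F (rescale n (Pi.single (a, j) n + z)) := by
  have hzj : z (a, j) = 0 := by
    simpa [hj] using apply_eq_zero_of_mem_box hz (l := (a, j)) (by simp)
  have hle (l) : z l ≤ n := (Nat.le_add_right _ _).trans (hz.2 l)
  rw [rescale_single_add hn, rescale_single_add hn]
  refine testMap_congr fun i => congrArg q <| spread_eq_of_colorMax_eq_one (a := a)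
    (colorMax_single_add (rescale_mem_Icc hz.2).2 (by simp [rescale, hzj, hj]))
    (colorMax_single_add (rescale_mem_Icc hle).2 (by simp [rescale, hzj])) ?_ ?_
  · exact fun b hb k => by simp [rescale, hb]
  · exact fun hi => by simp [rescale, hi]

variable [TopologicalSpace S]

theorem continuous_testMap (hq : Continuous q) (hF : ∀ a, Continuous (F a)) :
    Continuous (testMap q F) :=
  continuous_pi fun l => (hF l.1).comp <| continuous_pi fun k =>
    hq.comp ((continuous_apply (k + l.2)).comp continuous_spread)

theorem exists_forall_abs_testMap_sub_lt [Finite C] (hq : Continuous q)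
    (hF : ∀ a, Continuous (F a)) {ε : ℝ} (hε : 0 < ε) :
    ∃ r : ℕ, r ≠ 0 ∧ ∀ x y v : C × ZMod p → ℕ, (∀ l, x l ≤ 2 * r) → (∀ l, y l ≤ 2 * r) →
      x ∈ Set.Icc v (v + 1) → y ∈ Set.Icc v (v + 1) → ∀ l,
        |testMap q F (rescale (2 * r) x) l - testMap q F (rescale (2 * r) y) l| < ε := by
  have := Fintype.ofFinite C
  obtain ⟨η, hη, hclose⟩ := Metric.uniformContinuousOn_iff.1
    (isCompact_Icc.uniformContinuousOn_of_continuous (continuous_testMap hq hF).continuousOn) ε hε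
  obtain ⟨r, hr⟩ := exists_nat_one_div_lt hη
  refine ⟨r + 1, r.succ_ne_zero, fun x y v hx hy hxv hyv l => ?_⟩
  have hdist : dist (rescale (2 * (r + 1)) x) (rescale (2 * (r + 1)) y) < η :=
    calc _ ≤ 1 / ((2 * (r + 1) : ℕ) : ℝ) := dist_rescale_le hxv hyv
      _ ≤ 1 / ((r : ℝ) + 1) := by
        gcongr
        push_cast
        linarith
      _ < η := hr
  exact (dist_le_pi_dist _ _ l).trans_lt
    (hclose _ (rescale_mem_Icc hx) _ (rescale_mem_Icc hy) hdist)

theorem IsBoundaryCollapse.testMap_rescale_single_add [DecidableEq C] (hq : IsBoundaryCollapse q)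
    {n : ℕ} (hn : n ≠ 0) {a : C} {j : ZMod p} (hj : j ≠ 0) {z : C × ZMod p → ℕ}
    (hz : z ∈ box {(a, 0), (a, j)}ᶜ n) :
    testMap q F (rescale n (Pi.single (a, 0) n + z)) =
      testMap q F (rescale n (Pi.single (a, j) n + z)) := by
  rw [rescale_single_add hn, rescale_single_add hn]
  refine testMap_congr fun i => hq.apply_spread_single_add (rescale_mem_Icc hz.2).2 hj ?_ ?_ i
  · simp [rescale, apply_eq_zero_of_mem_box hz (l := (a, 0)) (by simp)]
  · simp [rescale, apply_eq_zero_of_mem_box hz (l := (a, j)) (by simp)]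

theorem IsBoundaryCollapse.exists_ne_of_mem_configSet (hq : IsBoundaryCollapse q)
    {y : C × ZMod p → ℝ} (hy : y ∈ configSet p C) : ∃ i, q (spread y i) ≠ q (spread y 0) := by
  obtain ⟨hcube, hmin, ⟨a, j⟩, hj⟩ := hy
  obtain ⟨i, hi⟩ := exists_spread_ne hcube (hmin a) ⟨j, by linarith⟩
  refine ⟨i, fun h => hi (congrFun ?_ a).symm⟩
  exact hq.eq_of_interior _ _ (abs_spread_zero_lt hcube) (abs_spread_le hcube i) h.symm

theorem IsBoundaryCollapse.exists_forall_hasOsc_testMap [Finite C] (hq : IsBoundaryCollapse q)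
    (hF : ∀ a, Continuous (F a))
    (hne : ∀ x : ZMod p → S, (∃ i, x i ≠ x 0) → ∃ a i, F a (fun k => x (k + i)) ≠ F a x) :
    ∃ δ > 0, ∀ y ∈ configSet p C, ∃ a, HasOsc δ (testMap q F y) a := by
  refine exists_forall_hasOsc isCompact_configSet (continuous_testMap hq.continuous hF)
    fun y hy => ?_
  obtain ⟨a, i, hai⟩ := hne _ (hq.exists_ne_of_mem_configSet hy)
  exact ⟨(a, i), by simpa [testMap] using hai⟩

end TestMap

section Existence

variable {p : ℕ} [Fact p.Prime] {C : Type*} {S : Type*} [TopologicalSpace S]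
  {q : (C → ℝ) → S} {F : C → (ZMod p → S) → ℝ}

theorem IsBoundaryCollapse.exists_isSphereLabeling [Finite C] [Nonempty C] [DecidableEq C]
    (hq : IsBoundaryCollapse q) (hF : ∀ a, Continuous (F a))
    (hne : ∀ x : ZMod p → S, (∃ i, x i ≠ x 0) → ∃ a i, F a (fun k => x (k + i)) ≠ F a x) :
    ∃ (r m : ℕ) (lab : (C × ZMod p → ℕ) → C × ZMod p), IsSphereLabeling r m lab := by
  have := Fintype.ofFinite C
  obtain ⟨δ, hδ, hosc⟩ := hq.exists_forall_hasOsc_testMap hF hne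
  obtain ⟨r, hr, hclose⟩ := exists_forall_abs_testMap_sub_lt hq.continuous hF (half_pos hδ)
  have h2r : 2 * r ≠ 0 := mul_ne_zero two_ne_zero hr
  refine ⟨r, 2 * r, fun y => oscLabel δ (testMap q F (rescale (2 * r) y)),
    ⟨by omega, fun T hT y hy ⟨l, hl⟩ => ?_, fun a j hj z hz => ?_, fun a j hj z hz => ?_,
      fun T hT k x v hv hx hxr => ?_⟩⟩
  · have hhalf (l) : rescale (2 * r) y l ≤ 1 / 2 := by
      have : (y l : ℝ) ≤ r := Nat.cast_le.2 (hy.2 l)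
      rw [rescale, Nat.cast_mul, Nat.cast_two, div_le_div_iff₀ (by positivity) two_pos]
      linarith
    have hmem : rescale (2 * r) y ∈ configSet p C := rescale_mem_configSet hT hr
      ⟨hy.1, fun l => (hy.2 l).trans (by omega)⟩ ⟨l, hl.ge⟩
    exact (congrArg (oscLabel δ) (testMap_comp_shift hhalf (-1))).trans
      (oscLabel_comp_shift hδ (hosc _ hmem) 1)
  · exact congrArg (oscLabel δ) (hq.testMap_rescale_single_add h2r hj hz)
  · exact congrArg (oscLabel δ) (testMap_rescale_single_add_add_single h2r hj hz)
  · exact nonfull_range_oscLabel (fun s => hosc _ (rescale_mem_configSet hT hr (hx s) (hxr s)))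
      fun s t => hclose _ _ v (hx s).2 (hx t).2 (hv s) (hv t)

theorem IsBoundaryCollapse.exists_nonconstant_forall_shift_eq [Finite C] [Nonempty C] (hp : p ≠ 2)
    (hq : IsBoundaryCollapse q) (hF : ∀ a, Continuous (F a)) :
    ∃ x : ZMod p → S, (∃ i, x i ≠ x 0) ∧ ∀ a i, F a (fun k => x (k + i)) = F a x := by
  classical
  by_contra! hne
  obtain ⟨r, m, lab, h⟩ := hq.exists_isSphereLabeling hF hne
  exact not_isSphereLabeling hp h

end Existence

theorem add_natCast_ne_of_forall_eq_add {p : ℕ} [Fact p.Prime] {S : Type*}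
    {x : ZMod p → S} (hx : ∃ i, x i ≠ x 0) {j : ℕ} (hj : j ≠ 0) (hjp : j < p)
    (h : ∀ i, x i = x (i + j) → ∀ k, x k = x (k + j)) (i : ZMod p) : x i ≠ x (i + j) := fun hi => by
  have hstep := h i hi
  have hj0 : (j : ZMod p) ≠ 0 := by
    rw [Ne, ZMod.natCast_eq_zero_iff]
    exact Nat.not_dvd_of_pos_of_lt (Nat.pos_of_ne_zero hj) hjp
  have hmul (n : ℕ) : x (n * j) = x 0 := by
    induction n with
    | zero => simp
    | succ n ih => rw [Nat.cast_succ, add_one_mul, ← hstep, ih]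
  obtain ⟨k, hk⟩ := hx
  refine hk ?_
  have := hmul (k * (j : ZMod p)⁻¹).val
  rwa [ZMod.natCast_zmod_val, inv_mul_cancel_right₀ hj0] at this

theorem injective_of_forall_add_natCast_ne {p : ℕ} [NeZero p] {S : Type*} {x : ZMod p → S}
    (h : ∀ j : ℕ, 1 ≤ j → j ≤ p / 2 → ∀ i, x i ≠ x (i + j)) : Function.Injective x := by
  intro i k hik
  by_contra hne
  wlog hle : (k - i).val ≤ p / 2 generalizing i k
  · have hki : NeZero (k - i) := ⟨sub_ne_zero.2 (Ne.symm hne)⟩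
    refine this hik.symm (Ne.symm hne) ?_
    rw [← neg_sub, ZMod.val_neg_of_ne_zero]
    omega
  · have hpos : (k - i).val ≠ 0 := (ZMod.val_ne_zero _).2 (sub_ne_zero.2 (Ne.symm hne))
    exact h _ (Nat.one_le_iff_ne_zero.2 hpos) hle i (by simpa using hik)

end AdmissiblePair

theorem IsMetricEquivToStd.isOpen_ball {E : Type*} [TopologicalSpace E] {ρ : E → E → ℝ}
    (h : IsMetricEquivToStd ρ) (x : E) (ε : ℝ) : IsOpen {y | ρ x y < ε} :=
  (h.2.2.2 _).2 fun y hy => ⟨ε - ρ x y, sub_pos.2 hy, fun z hz =>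
    (h.2.2.1 x y z).trans_lt (lt_sub_iff_add_lt'.1 hz)⟩

theorem IsMetricEquivToStd.continuous {E : Type*} [TopologicalSpace E] {ρ : E → E → ℝ}
    (h : IsMetricEquivToStd ρ) : Continuous fun z : E × E => ρ z.1 z.2 := by
  have ⟨hsymm, hzero, htri, _⟩ := h
  refine continuous_iff_continuousAt.2 fun ⟨x, y⟩ => Metric.tendsto_nhds.2 fun ε hε => ?_
  have hball (u : E) : ∀ᶠ v in nhds u, ρ u v < ε / 2 :=
    (h.isOpen_ball u (ε / 2)).mem_nhds (((hzero u u).2 rfl).trans_lt (half_pos hε))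
  filter_upwards [(hball x).prod_nhds (hball y)] with ⟨u, v⟩ ⟨hu, hv⟩
  exact abs_sub_lt_iff.2
    ⟨by linarith [htri u x v, htri x y v, hsymm u x],
      by linarith [htri x u y, htri u v y, hsymm v y]⟩

theorem admissible_pair_general (p d : ℕ) (hp : p.Prime) (hodd : Odd p) (hpd : p ≤ 2 * d + 1)
    (g : ℕ → Metric.sphere (0 : EuclideanSpace ℝ (Fin (d + 1))) 1 →
      Metric.sphere (0 : EuclideanSpace ℝ (Fin (d + 1))) 1 → ℝ)
    (hcont : ∀ j, 1 ≤ j → j ≤ (p - 1) / 2 → Continuous fun z : _ × _ => g j z.1 z.2)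
    (hzero : ∀ j, 1 ≤ j → j ≤ (p - 1) / 2 → ∀ x y, g j x y = 0 ↔ x = y) :
    ∃ x : ZMod p → Metric.sphere (0 : EuclideanSpace ℝ (Fin (d + 1))) 1,
      Function.Injective x ∧
      ∀ j : ℕ, 1 ≤ j → j ≤ (p - 1) / 2 →
        ∀ k : ZMod p,
          g j (x (k * (j : ZMod p))) (x ((k + 1) * (j : ZMod p))) = g j (x 0) (x (j : ZMod p)) := by
  have : Fact p.Prime := ⟨hp⟩
  obtain ⟨n, hn⟩ := hodd
  have hp2 := hp.two_le
  have : Nonempty (Fin d) := ⟨⟨0, by omega⟩⟩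
  let J (a : Fin d) : ℕ := min (a + 1) ((p - 1) / 2)
  have hJ (a : Fin d) : 1 ≤ J a ∧ J a ≤ (p - 1) / 2 := by
    simp only [J]
    omega
  obtain ⟨x, hx, hshift⟩ :=
    AdmissiblePair.isBoundaryCollapse_cubeToSphere.exists_nonconstant_forall_shift_eq
      (by omega : p ≠ 2) (F := fun a x => g (J a) (x 0) (x (J a))) fun a =>
        (hcont _ (hJ a).1 (hJ a).2).comp₂ (continuous_apply 0) (continuous_apply _)
  have hg (j : ℕ) (hj : 1 ≤ j) (hjp : j ≤ (p - 1) / 2) (i : ZMod p) :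
      g j (x i) (x (i + j)) = g j (x 0) (x j) := by
    have hJj : J ⟨j - 1, by omega⟩ = j := by grind
    simpa only [hJj, zero_add, add_comm (j : ZMod p)] using hshift ⟨j - 1, by omega⟩ i
  refine ⟨x, AdmissiblePair.injective_of_forall_add_natCast_ne fun j hj hjp =>
    AdmissiblePair.add_natCast_ne_of_forall_eq_add hx (by omega) (by omega) fun i hi k => ?_,
    fun j hj hjp k => by rw [add_one_mul, hg j hj hjp]⟩
  have hzero := hzero j hj (by omega)
  rw [← hzero, hg j hj (by omega), ← hg j hj (by omega) i, hzero, hi]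

/-- Theorem: if `p ≤ 2d + 1` and `(p-1)²/2 ≠ jd + 1` for all `j = 1, …, p-1`, then
the pair `(d, p)` is admissible. -/
theorem admissible_pair
    (p d : ℕ) (hp : p.Prime) (hodd : Odd p) (hd : 1 ≤ d)
    (hpd : p ≤ 2 * d + 1)
    (hjd : ∀ j : ℕ, 1 ≤ j → j ≤ p - 1 → (p - 1) ^ 2 / 2 ≠ j * d + 1)
    (f : Metric.sphere (0 : EuclideanSpace ℝ (Fin (d + 1))) 1 → EuclideanSpace ℝ (Fin (d + 1)))
    (hf : Continuous f) (hfinj : Function.Injective f)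
    (ρ : ℕ → EuclideanSpace ℝ (Fin (d + 1)) → EuclideanSpace ℝ (Fin (d + 1)) → ℝ)
    (hρ : ∀ j, 1 ≤ j → j ≤ (p - 1) / 2 → IsMetricEquivToStd (ρ j)) :
    ∃ x : ZMod p → Metric.sphere (0 : EuclideanSpace ℝ (Fin (d + 1))) 1,
      Function.Injective x ∧
      ∀ j : ℕ, 1 ≤ j → j ≤ (p - 1) / 2 →
        ∀ k : ZMod p,
          ρ j (f (x (k * (j : ZMod p)))) (f (x ((k + 1) * (j : ZMod p)))) =
            ρ j (f (x 0)) (f (x (j : ZMod p))) := by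
  exact admissible_pair_general p d hp hodd hpd (fun j x y => ρ j (f x) (f y))
    (fun j hj hjp => (hρ j hj hjp).continuous.comp₂ (hf.comp continuous_fst)
      (hf.comp continuous_snd))
    fun j hj hjp _ _ => ((hρ j hj hjp).2.1 _ _).trans hfinj.eq_iff
end
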